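/- There exist an absolute constant c > 0 and, for each m ∈ ℕ, a constant c(m) > 0 such that for all d, m, n ∈ ℕ, all 0 ≤ α ≤ 2, and all F ∈ 𝔉_d^(α), one has max{ ρ_m(F^n, e(nF)), ρ_m(F^n, F^{n+1}) } ≤ c(m) · ( n^{−1} + exp(−nα + c·m·(log n)³) ). -/

import Mathlib

open MeasureTheory RealInnerProductSpace
open scoped ENNReal

noncomputable section

abbrev Euc (d : ℕ) := EuclideanSpace ℝ (Fin d)

/-- Convolution of two measures on an additive structure. -/
def mconv {α : Type*} [MeasurableSpace α] [Add α] (μ ν : Measure α) : Measure α :=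
  (μ.prod ν).map (fun p => p.1 + p.2)

/-- Convolution power `μ^{*n}`, with `μ^{*0}` the Dirac measure at `0`. -/
def convPow {α : Type*} [MeasurableSpace α] [AddMonoid α] (μ : Measure α) : ℕ → Measure α
  | 0 => Measure.dirac 0
  | n + 1 => mconv (convPow μ n) μ

/-- Convolution product of a finite family of measures. -/
def convProd {α : Type*} [MeasurableSpace α] [AddMonoid α] :
    ∀ {n : ℕ}, (Fin n → Measure α) → Measure α
  | 0, _ => Measure.dirac 0
  | n + 1, G => mconv (convProd (fun i : Fin n => G i.castSucc)) (G (Fin.last n))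

/-- The compound Poisson measure `e(a·μ) = e^{-a} ∑_k a^k μ^{*k}/k!`. -/
def cpois {α : Type*} [MeasurableSpace α] [AddMonoid α] (a : ℝ) (μ : Measure α) : Measure α :=
  Measure.sum fun k : ℕ =>
    (ENNReal.ofReal (Real.exp (-a) * a ^ k / k.factorial)) • convPow μ k

/-- A measure is symmetric if it is invariant under `x ↦ -x`. -/
def IsSymmMeasure {d : ℕ} (μ : Measure (Euc d)) : Prop :=
  μ.map (fun x => -x) = μ

/-- Characteristic function of a measure on `ℝ^d`. -/
def charFn {d : ℕ} (μ : Measure (Euc d)) (t : Euc d) : ℂ :=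
  ∫ x, Complex.exp ((⟪t, x⟫ : ℂ) * Complex.I) ∂μ

/-- Characteristic function of a measure on `ℝ`. -/
def charFn1 (μ : Measure ℝ) (t : ℝ) : ℂ :=
  ∫ x, Complex.exp (((t * x : ℝ) : ℂ) * Complex.I) ∂μ

/-- Convex polyhedra determined by the directions `t 1, …, t m`. -/
def polyhedraOn {d m : ℕ} (t : Fin m → Euc d) : Set (Set (Euc d)) :=
  {X | ∃ a b : Fin m → EReal,
    X = {x | ∀ j, a j ≤ ((⟪x, t j⟫ : ℝ) : EReal) ∧ ((⟪x, t j⟫ : ℝ) : EReal) ≤ b j}}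

/-- The collection `𝔛_m` of convex polyhedra determined by `m` pairs of parallel hyperplanes. -/
def polyhedra (d m : ℕ) : Set (Set (Euc d)) :=
  {X | ∃ t : Fin m → Euc d, X ∈ polyhedraOn t}

/-- The distance `ρ_m(G,H) = sup_{X ∈ 𝔛_m} |G{X} - H{X}|`. -/
def rhoPoly {d : ℕ} (m : ℕ) (G H : Measure (Euc d)) : ℝ :=
  ⨆ X ∈ polyhedra d m, |(G X).toReal - (H X).toReal|

/-- The Lévy concentration function `Q(μ, b) = sup_x μ[x, x+b]`. -/
def concFn (μ : Measure ℝ) (b : ℝ) : ℝ :=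
  ⨆ x : ℝ, (μ (Set.Icc x (x + b))).toReal

/-- `q(H, X) = inf_{‖t‖=1} Q(𝓛(⟨ξ,t⟩), λ{⟨x,t⟩ : x ∈ X})` where `H = 𝓛(ξ)`. -/
def qFn {d : ℕ} (H : Measure (Euc d)) (X : Set (Euc d)) : ℝ :=
  ⨅ t ∈ {t : Euc d | ‖t‖ = 1},
    concFn (H.map fun x => ⟪x, t⟫) (volume ((fun x => ⟪x, t⟫) '' X)).toReal

/-- The uniform (Kolmogorov) distance on `ℝ^d`. -/
def kolmDist {d : ℕ} (G H : Measure (Euc d)) : ℝ :=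
  ⨆ x : Euc d, |(G {y | ∀ i, y i ≤ x i}).toReal - (H {y | ∀ i, y i ≤ x i}).toReal|

/-- The uniform (Kolmogorov) distance on `ℝ`. -/
def kolmDist1 (G H : Measure ℝ) : ℝ :=
  ⨆ x : ℝ, |(G (Set.Iic x)).toReal - (H (Set.Iic x)).toReal|

end

/-!
For an intersection `X` of half-spaces consider `f N = F ^ N {X}` on the window `|N - n| ≤ n / 16`.
For every `l` up to about `2 log₂ n`, `f` is there within `O(2 ^ (-l))` of a polynomial in `N` of
degree `O((l + 1) ^ 2)`. By Markov's inequality `f` is then affine with slope `O(1 / n)` up to an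
error `O(((N - n) ^ 2 + 1) / n ^ 2)`. Hence `f (n + 1) - f n = O(1 / n)`, and averaging over a
Poisson variable `N` of mean and variance `n`, which kills the linear term, gives
`e(n F) {X} - f n = O(1 / n)`.

To approximate `f`, choose a scale for each direction at which the sums have concentration about
`2 ^ (-l)` and replace the indicator function of `X` by a smooth cutoff at that scale. If `F` had
too much mass away from the half-integer combinations of every short list of reals, the
concentration would be too small, by a Riesz product over a dissociated sequence. So all but
`O((l + 1) / n)` of the mass of each projection of `F` lies near such a lattice, and the far part
contributes a binomial expansion that can be cut off at low degree. For the near part, a Lyapunov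
function confines the walk to a few translates of a fixed bump. Fourier inversion then leaves the
powers `ω ^ N` of values `ω ∈ [-1 + α, 1]` of the characteristic function: for `ω ≥ 0` they are
polynomially approximable on the window, and for `ω < 0` they are at most `exp (-N α)`. If `n α`
is at least a constant multiple of `log² n`, this is negligible at every level; otherwise the
claimed bound is trivial.
-/

section MarkovInequality

open Polynomial

lemma abs_eval_derivative_one_le {n : ℕ} {P : ℝ[X]} {B : ℝ} (hB : 0 < B)
    (hdeg : P.natDegree ≤ n) (hP : ∀ x ∈ Set.Icc (-1 : ℝ) 1, |P.eval x| ≤ B) :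
    |(derivative P).eval 1| ≤ n ^ 2 * B := by
  have upper (Q : ℝ[X]) (hQdeg : Q.natDegree ≤ n)
      (hQ : ∀ x ∈ Set.Icc (-1 : ℝ) 1, |Q.eval x| ≤ B) : (derivative Q).eval 1 ≤ n ^ 2 * B := by
    have hT : (derivative (Chebyshev.T ℝ n)).eval (1 : ℝ) = (n : ℝ) ^ 2 := by
      simp [Chebyshev.T_derivative_eq_U, sq]
    have h := Chebyshev.eval_iterate_derivative_le_of_forall_abs_le_one (n := n)
      (P := C B⁻¹ * Q) (k := 1) (x := 1) le_rfl
      (natDegree_le_iff_degree_le.mp ((natDegree_C_mul_le _ _).trans hQdeg)) fun x hx => by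
        rw [eval_mul, eval_C, abs_mul, abs_of_pos (inv_pos.mpr hB), inv_mul_le_iff₀ hB, mul_one]
        exact hQ x hx
    simp only [Function.iterate_one, derivative_C_mul, eval_mul, eval_C, hT] at h
    rwa [inv_mul_le_iff₀ hB, mul_comm] at h
  have hneg := upper (-P) (by simpa using hdeg) (by simpa using hP)
  rw [derivative_neg, eval_neg] at hneg
  exact abs_le.mpr ⟨by linarith, upper P hdeg hP⟩

lemma abs_eval_derivative_le_of_segment {n : ℕ} {P : ℝ[X]} {x e B : ℝ} (hB : 0 < B)
    (hdeg : P.natDegree ≤ n)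
    (hP : ∀ y ∈ Set.Icc (-1 : ℝ) 1, |P.eval (x + (y - 1) * e)| ≤ B) :
    |(derivative P).eval x| * |e| ≤ n ^ 2 * B := by
  set L : ℝ[X] := C e * X + C (x - e) with hL
  have hLeval (y : ℝ) : L.eval y = x + (y - 1) * e := by
    simp only [hL, eval_add, eval_mul, eval_C, eval_X]; ring
  have hLdeg : (P.comp L).natDegree ≤ n := by
    refine natDegree_comp_le.trans ?_
    have : L.natDegree ≤ 1 := natDegree_linear_le
    nlinarith
  have h := abs_eval_derivative_one_le hB hLdeg fun y hy => by
    rw [eval_comp, hLeval]; exact hP y hy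
  have hLderiv : derivative L = C e := by simp [hL]
  rwa [derivative_comp, hLderiv, eval_mul, eval_C, eval_comp, hLeval, sub_self, zero_mul, add_zero,
    abs_mul, mul_comm] at h

/- At each point `x` the half of `[a, b]` that starts at `x` and reaches at least to the midpoint
is mapped affinely onto `[-1, 1]` with `x` sent to `1`; this loses a factor `2` against Markov's
inequality with the optimal constant. -/
lemma abs_eval_derivative_le_of_Icc {n : ℕ} {P : ℝ[X]} {a b B : ℝ} (hab : a < b) (hB : 0 < B)
    (hdeg : P.natDegree ≤ n) (hP : ∀ x ∈ Set.Icc a b, |P.eval x| ≤ B) :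
    ∀ x ∈ Set.Icc a b, |(derivative P).eval x| ≤ 4 * n ^ 2 / (b - a) * B := by
  have of_segment (x e : ℝ) (he : (b - a) / 4 ≤ |e|)
      (hsub : ∀ y ∈ Set.Icc (-1 : ℝ) 1, x + (y - 1) * e ∈ Set.Icc a b) :
      |(derivative P).eval x| ≤ 4 * n ^ 2 / (b - a) * B := by
    have h := abs_eval_derivative_le_of_segment hB hdeg fun y hy => hP _ (hsub y hy)
    rw [div_mul_eq_mul_div, le_div_iff₀ (by linarith)]
    nlinarith [abs_nonneg ((derivative P).eval x)]
  rintro x ⟨hax, hxb⟩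
  rcases le_total ((a + b) / 2) x with h | h
  · refine of_segment x ((x - a) / 2) ?_ ?_
    · rw [abs_of_nonneg] <;> linarith
    · rintro y ⟨hy1, hy2⟩
      constructor <;> nlinarith
  · refine of_segment x (-((b - x) / 2)) ?_ ?_
    · rw [abs_of_nonpos] <;> linarith
    · rintro y ⟨hy1, hy2⟩
      constructor <;> nlinarith

lemma abs_eval_iterate_derivative_le_of_Icc {n : ℕ} {P : ℝ[X]} {a b B : ℝ} (hn : 0 < n)
    (hab : a < b) (hB : 0 < B) (hdeg : P.natDegree ≤ n) (hP : ∀ x ∈ Set.Icc a b, |P.eval x| ≤ B)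
    (k : ℕ) :
    ∀ x ∈ Set.Icc a b, |(derivative^[k] P).eval x| ≤ (4 * n ^ 2 / (b - a)) ^ k * B := by
  have : 0 < b - a := sub_pos.mpr hab
  induction k with
  | zero => simpa using hP
  | succ k ih =>
    rw [Function.iterate_succ_apply', pow_succ', mul_assoc]
    exact abs_eval_derivative_le_of_Icc hab (by positivity)
      ((natDegree_iterate_derivative P k).trans ((Nat.sub_le _ _).trans hdeg)) ih

/- At a maximum point `z` of `|P|` on `[a, b]`, Markov's inequality bounds the variation of `P`
between `⌊z⌋` and `z` by half of the maximum. -/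
lemma abs_eval_le_two_mul_of_forall_nat {n : ℕ} {P : ℝ[X]} {a b : ℕ} {B : ℝ} (hab : a < b)
    (hB : 0 < B) (hdeg : P.natDegree ≤ n) (hn : 8 * (n : ℝ) ^ 2 ≤ b - a)
    (hP : ∀ N ∈ Finset.Icc a b, |P.eval (N : ℝ)| ≤ B) :
    ∀ x ∈ Set.Icc (a : ℝ) b, |P.eval x| ≤ 2 * B := by
  have hab' : (a : ℝ) < b := by exact_mod_cast hab
  obtain ⟨z, ⟨haz, hzb⟩, hmax⟩ := isCompact_Icc.exists_isMaxOn (Set.nonempty_Icc.mpr hab'.le)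
    (P.continuous.abs.continuousOn (s := Set.Icc (a : ℝ) b))
  suffices |P.eval z| ≤ 2 * B from fun x hx => (hmax hx).trans this
  by_contra! hlarge
  have hderiv : ∀ x ∈ Set.Icc (a : ℝ) b, ‖(derivative P).eval x‖ ≤ |P.eval z| / 2 := fun x hx => by
    refine (abs_eval_derivative_le_of_Icc hab' (by linarith) hdeg (fun x hx => hmax hx) x hx).trans
      ?_
    rw [div_mul_eq_mul_div, div_le_iff₀ (by linarith)]
    nlinarith
  have hfloor : ⌊z⌋₊ ∈ Finset.Icc a b :=
    Finset.mem_Icc.mpr ⟨Nat.le_floor haz, Nat.floor_le_of_le hzb⟩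
  have hvar : |P.eval z - P.eval (⌊z⌋₊ : ℝ)| ≤ |P.eval z| / 2 * |z - ⌊z⌋₊| :=
    Convex.norm_image_sub_le_of_norm_hasDerivWithin_le (f := fun x => P.eval x)
      (fun x _ => (P.hasDerivAt x).hasDerivWithinAt) hderiv (convex_Icc _ _)
      (by simpa using hfloor) ⟨haz, hzb⟩
  have hdist : |z - ⌊z⌋₊| ≤ 1 := by
    rw [abs_of_nonneg (sub_nonneg.mpr (Nat.floor_le ((Nat.cast_nonneg a).trans haz)))]
    linarith [Nat.lt_floor_add_one z]
  have hnode := hP _ hfloor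
  have htri := abs_sub_abs_le_abs_sub (P.eval z) (P.eval (⌊z⌋₊ : ℝ))
  nlinarith

lemma abs_eval_sub_linear_le {p : ℝ[X]} {s : Set ℝ} {K : ℝ} (hs : Convex ℝ s)
    (hK : ∀ x ∈ s, |(derivative^[2] p).eval x| ≤ K) {x y : ℝ} (hx : x ∈ s) (hy : y ∈ s) :
    |p.eval y - p.eval x - (derivative p).eval x * (y - x)| ≤ K * (y - x) ^ 2 := by
  have hderiv : ∀ z ∈ Set.uIcc x y,
      ‖(derivative p).eval z - (derivative p).eval x‖ ≤ K * |y - x| := fun z hz => by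
    refine (hs.norm_image_sub_le_of_norm_hasDerivWithin_le (f := fun z => (derivative p).eval z)
      (fun z _ => ((derivative p).hasDerivAt z).hasDerivWithinAt) hK hx
      (hs.ordConnected.uIcc_subset hx hy hz)).trans ?_
    exact mul_le_mul_of_nonneg_left (Set.abs_sub_left_of_mem_uIcc hz)
      ((abs_nonneg _).trans (hK x hx))
  have h := (convex_uIcc x y).norm_image_sub_le_of_norm_hasDerivWithin_le
    (f := fun z => p.eval z - (derivative p).eval x * z)
    (fun z _ => ((p.hasDerivAt z).sub
      (hasDerivAt_const_mul ((derivative p).eval x))).hasDerivWithinAt)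
    hderiv Set.left_mem_uIcc Set.right_mem_uIcc
  calc |p.eval y - p.eval x - (derivative p).eval x * (y - x)|
      = ‖p.eval y - (derivative p).eval x * y - (p.eval x - (derivative p).eval x * x)‖ := by
        rw [Real.norm_eq_abs]; congr 1; ring
    _ ≤ K * |y - x| * |y - x| := h
    _ = K * (y - x) ^ 2 := by rw [mul_assoc, abs_mul_abs_self, sq]

end MarkovInequality

section InverseTheorem

open Polynomial

/-- `PolyApprox I d ε f`: on the finite set `I` of naturals, `f` is within `ε` of a real polynomial
of degree at most `d`. -/
def PolyApprox (I : Finset ℕ) (d : ℕ) (ε : ℝ) (f : ℕ → ℝ) : Prop :=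
  ∃ p : ℝ[X], p.natDegree ≤ d ∧ ∀ N ∈ I, |f N - p.eval (N : ℝ)| ≤ ε

/-- The moment `∑ l, (l + 1) ^ k 2 ^ (-l)`, which bounds the `k/4`-th derivative of a sum of
polynomials of degrees `O((l + 1) ^ 2)` and sizes `O(2 ^ (-l))`. -/
noncomputable def dyadicMoment (k : ℕ) : ℝ := ∑' l : ℕ, ((l : ℝ) + 1) ^ k * (1 / 2 : ℝ) ^ l

lemma summable_dyadicMoment (k : ℕ) :
    Summable fun l : ℕ => ((l : ℝ) + 1) ^ k * (1 / 2 : ℝ) ^ l := by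
  have h := summable_pow_mul_geometric_of_norm_lt_one (R := ℝ) k (r := 1 / 2) (by norm_num)
  refine (((summable_nat_add_iff 1).mpr h).mul_left 2).congr fun l => ?_
  push_cast
  ring

lemma dyadicMoment_nonneg (k : ℕ) : 0 ≤ dyadicMoment k := tsum_nonneg fun l => by positivity

lemma abs_eval_iterate_derivative_sum_le {A J : ℕ} {P : ℕ → ℝ[X]} {a b B : ℝ} (hA : 0 < A)
    (hab : a < b) (hB : 0 < B) (hdeg : ∀ l ≤ J, (P l).natDegree ≤ A * (l + 1) ^ 2)
    (hP : ∀ l ≤ J, ∀ x ∈ Set.Icc a b, |(P l).eval x| ≤ B * (1 / 2) ^ l) (k : ℕ) :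
    ∀ x ∈ Set.Icc a b, |(derivative^[k] (∑ l ∈ Finset.range (J + 1), P l)).eval x| ≤
      (4 * A ^ 2 / (b - a)) ^ k * B * dyadicMoment (4 * k) := by
  intro x hx
  have : 0 < b - a := sub_pos.mpr hab
  have hlevel (l : ℕ) (hl : l ≤ J) : |(derivative^[k] (P l)).eval x| ≤
      (4 * A ^ 2 / (b - a)) ^ k * B * (((l : ℝ) + 1) ^ (4 * k) * (1 / 2 : ℝ) ^ l) := by
    refine (abs_eval_iterate_derivative_le_of_Icc (by positivity) hab (by positivity) (hdeg l hl)
      (hP l hl) k x hx).trans_eq ?_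
    push_cast
    rw [show 4 * ((A : ℝ) * (l + 1) ^ 2) ^ 2 / (b - a) = 4 * A ^ 2 / (b - a) * (l + 1) ^ 4 by ring,
      mul_pow, ← pow_mul]
    ring
  calc |(derivative^[k] (∑ l ∈ Finset.range (J + 1), P l)).eval x|
      ≤ ∑ l ∈ Finset.range (J + 1), |(derivative^[k] (P l)).eval x| := by
        rw [iterate_derivative_sum, eval_finsetSum]
        exact Finset.abs_sum_le_sum_abs _ _
    _ ≤ ∑ l ∈ Finset.range (J + 1), (4 * A ^ 2 / (b - a)) ^ k * B *
          (((l : ℝ) + 1) ^ (4 * k) * (1 / 2 : ℝ) ^ l) :=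
        Finset.sum_le_sum fun l hl => hlevel l (Finset.mem_range_succ_iff.mp hl)
    _ ≤ (4 * A ^ 2 / (b - a)) ^ k * B * dyadicMoment (4 * k) := by
        rw [← Finset.mul_sum]
        gcongr
        exact (summable_dyadicMoment _).sum_le_tsum _ fun l _ => by positivity

lemma exists_telescoping_polynomials {I : Finset ℕ} {A J : ℕ} {B : ℝ} {f : ℕ → ℝ} (hB : 0 ≤ B)
    (hf : ∀ N, f N ∈ Set.Icc 0 1)
    (happ : ∀ l ≤ J, PolyApprox I (A * (l + 1) ^ 2) (B * (1 / 2) ^ l) f) :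
    ∃ P : ℕ → ℝ[X], (∀ l ≤ J, (P l).natDegree ≤ A * (l + 1) ^ 2) ∧
      (∀ l ≤ J, ∀ N ∈ I, |(P l).eval (N : ℝ)| ≤ (3 * B + 1) * (1 / 2) ^ l) ∧
      ∀ N ∈ I, |f N - (∑ l ∈ Finset.range (J + 1), P l).eval (N : ℝ)| ≤ B * (1 / 2) ^ J := by
  choose! p hdeg hp using happ
  refine ⟨fun l => if l = 0 then p 0 else p l - p (l - 1), fun l hl => ?_, fun l hl N hN => ?_,
    fun N hN => ?_⟩
  · rcases l with - | l
    · simpa using hdeg 0 hl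
    · refine (natDegree_sub_le_of_le (hdeg _ hl) ((hdeg l (by omega)).trans ?_)).trans
        (max_self _).le
      gcongr
      exact l.le_succ
  · rcases l with - | l
    · have h := abs_le.mp (hp 0 hl N hN)
      have h01 := hf N
      simp only [if_true, pow_zero, mul_one] at h ⊢
      exact abs_le.mpr ⟨by linarith [h01.1], by linarith [h01.2]⟩
    · have h := abs_le.mp (hp (l + 1) hl N hN)
      have h' := abs_le.mp (hp l (by omega) N hN)
      have hpos : (0 : ℝ) < (1 / 2) ^ l := by positivity
      simp only [Nat.add_sub_cancel, l.succ_ne_zero, if_false, eval_sub, pow_succ] at h h' ⊢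
      exact abs_le.mpr ⟨by nlinarith, by nlinarith⟩
  · rw [← Finset.eq_sum_range_sub']
    exact hp J le_rfl N hN

lemma abs_sub_linear_le_of_derivative_le {I : Set ℕ} {p : ℝ[X]} {f : ℕ → ℝ} {a b : ℝ}
    {n L : ℕ} {B K₁ K₂ : ℝ} (hn : 0 < n) (hnL : n ≤ 32 * L) (hB : 0 ≤ B) (hK₂ : 0 ≤ K₂)
    (hf : ∀ N, f N ∈ Set.Icc 0 1) (hI : ∀ N : ℕ, N ∉ I → (L : ℝ) ≤ |(N : ℝ) - n|)
    (hIab : ∀ N ∈ I, (N : ℝ) ∈ Set.Icc a b) (hnI : n ∈ I)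
    (hp : ∀ N ∈ I, |f N - p.eval (N : ℝ)| ≤ B / n ^ 2)
    (hp₁ : |(derivative p).eval (n : ℝ)| ≤ K₁ / n)
    (hp₂ : ∀ x ∈ Set.Icc a b, |(derivative^[2] p).eval x| ≤ K₂ / n ^ 2) (N : ℕ) :
    |f N - f n - (derivative p).eval (n : ℝ) * (N - n)| ≤
      (2 * B + K₂ + 1024 + 32 * K₁) * (((N : ℝ) - n) ^ 2 + 1) / n ^ 2 := by
  have hn0 : (0 : ℝ) < n := by exact_mod_cast hn
  have hK₁ : 0 ≤ K₁ := by
    have := (abs_nonneg _).trans hp₁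
    rwa [le_div_iff₀ hn0, zero_mul] at this
  rw [le_div_iff₀ (by positivity)]
  by_cases hN : N ∈ I
  · have htaylor := abs_eval_sub_linear_le (convex_Icc a b) hp₂ (hIab n hnI) (hIab N hN)
    have hnear : |f N - f n - (derivative p).eval (n : ℝ) * (N - n)| ≤
        (2 * B + K₂ * ((N : ℝ) - n) ^ 2) / n ^ 2 := by
      rw [add_div, mul_div_right_comm K₂, mul_div_assoc]
      have hN' := abs_le.mp (hp N hN)
      have hn' := abs_le.mp (hp n hnI)
      have ht := abs_le.mp htaylor
      exact abs_le.mpr ⟨by linarith, by linarith⟩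
    rw [le_div_iff₀ (by positivity)] at hnear
    nlinarith [sq_nonneg ((N : ℝ) - n), mul_nonneg hB (sq_nonneg ((N : ℝ) - n)),
      mul_nonneg hK₁ (sq_nonneg ((N : ℝ) - n))]
  · have hfar : (n : ℝ) ≤ 32 * |(N : ℝ) - n| :=
      (show (n : ℝ) ≤ 32 * L by exact_mod_cast hnL).trans (by linarith [hI N hN])
    have hf1 : |f N - f n| ≤ 1 :=
      abs_le.mpr ⟨by linarith [(hf N).1, (hf n).2], by linarith [(hf N).2, (hf n).1]⟩
    have hlin : |(derivative p).eval (n : ℝ) * (N - n)| ≤ K₁ / n * |(N : ℝ) - n| := by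
      rw [abs_mul]; gcongr
    rw [← sq_abs ((N : ℝ) - n)]
    set u := |(N : ℝ) - n|
    calc |f N - f n - (derivative p).eval (n : ℝ) * (N - n)| * n ^ 2
        ≤ (1 + K₁ / n * u) * n ^ 2 := by gcongr; exact (abs_sub _ _).trans (add_le_add hf1 hlin)
      _ = n * n + K₁ * u * n := by field_simp
      _ ≤ (32 * u) * (32 * u) + K₁ * u * (32 * u) := by gcongr
      _ ≤ (2 * B + K₂ + 1024 + 32 * K₁) * (u ^ 2 + 1) := by
        have : 0 ≤ (2 * B + K₂) * (u ^ 2 + 1) := by positivity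
        nlinarith

/- Bernstein's argument: the difference of consecutive approximants has degree `O((l + 1) ^ 2)` and
size `O(2 ^ (-l))`, so by Markov's inequality its derivatives are summable over `l`. -/
lemma exists_polynomial_iterate_derivative_le {A n L J : ℕ} {B : ℝ} {f : ℕ → ℝ} (hA : 0 < A)
    (hB : 0 < B) (hn : 0 < n) (hnL : n ≤ 32 * L) (hLn : L ≤ n)
    (hJL : 8 * (A * (J + 1) ^ 2) ^ 2 ≤ L) (hf : ∀ N, f N ∈ Set.Icc 0 1)
    (happ : ∀ l ≤ J,
      PolyApprox (Finset.Icc (n - L) (n + L)) (A * (l + 1) ^ 2) (B * (1 / 2) ^ l) f) :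
    ∃ p : ℝ[X], (∀ N ∈ Finset.Icc (n - L) (n + L), |f N - p.eval (N : ℝ)| ≤ B * (1 / 2) ^ J) ∧
      ∀ k, ∀ x ∈ Set.Icc ((n - L : ℕ) : ℝ) ((n + L : ℕ) : ℝ), |(derivative^[k] p).eval x| ≤
        (64 * A ^ 2) ^ k * (6 * B + 2) * dyadicMoment (4 * k) / n ^ k := by
  obtain ⟨P, hPdeg, hPbound, hPsum⟩ := exists_telescoping_polynomials hB.le hf happ
  have hn0 : (0 : ℝ) < n := by exact_mod_cast hn
  have hL0 : (0 : ℝ) < L := by exact_mod_cast (by omega : 0 < L)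
  have hlen : ((n + L : ℕ) : ℝ) - (n - L : ℕ) = 2 * L := by
    rw [Nat.cast_sub hLn]; push_cast; ring
  have hreal : ∀ l ≤ J, ∀ x ∈ Set.Icc ((n - L : ℕ) : ℝ) ((n + L : ℕ) : ℝ),
      |(P l).eval x| ≤ (6 * B + 2) * (1 / 2) ^ l := fun l hl => by
    rw [show (6 * B + 2) * (1 / 2) ^ l = 2 * ((3 * B + 1) * (1 / 2) ^ l) by ring]
    refine abs_eval_le_two_mul_of_forall_nat (by omega) (by positivity) (hPdeg l hl) ?_
      (hPbound l hl)
    have : 8 * (A * (l + 1) ^ 2) ^ 2 ≤ 2 * L := by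
      calc 8 * (A * (l + 1) ^ 2) ^ 2 ≤ 8 * (A * (J + 1) ^ 2) ^ 2 := by gcongr
        _ ≤ 2 * L := by omega
    rw [hlen]
    exact_mod_cast this
  have hscale : 4 * (A : ℝ) ^ 2 / (2 * L) ≤ 64 * A ^ 2 / n := by
    rw [div_le_div_iff₀ (by positivity) hn0]
    have : (n : ℝ) ≤ 32 * L := by exact_mod_cast hnL
    nlinarith [sq_nonneg (A : ℝ)]
  refine ⟨∑ l ∈ Finset.range (J + 1), P l, hPsum, fun k x hx => ?_⟩
  calc |(derivative^[k] (∑ l ∈ Finset.range (J + 1), P l)).eval x|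
      ≤ (4 * A ^ 2 / (2 * L)) ^ k * (6 * B + 2) * dyadicMoment (4 * k) := by
        rw [← hlen]
        exact abs_eval_iterate_derivative_sum_le hA (by linarith) (by positivity) hPdeg hreal k x hx
    _ ≤ (64 * A ^ 2 / n) ^ k * (6 * B + 2) * dyadicMoment (4 * k) := by
        gcongr
        exact dyadicMoment_nonneg _
    _ = (64 * A ^ 2) ^ k * (6 * B + 2) * dyadicMoment (4 * k) / n ^ k := by
        rw [div_pow]; ring

lemma exists_linear_approx_of_polyApprox {A : ℕ} {B : ℝ} (hA : 0 < A) (hB : 0 < B) :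
    ∃ C : ℝ, 0 < C ∧ ∀ (n L J : ℕ) (f : ℕ → ℝ), 0 < n → n ≤ 32 * L → L ≤ n →
      8 * (A * (J + 1) ^ 2) ^ 2 ≤ L → n ^ 2 ≤ 2 ^ J → (∀ N, f N ∈ Set.Icc 0 1) →
      (∀ l ≤ J, PolyApprox (Finset.Icc (n - L) (n + L)) (A * (l + 1) ^ 2) (B * (1 / 2) ^ l) f) →
      ∃ a : ℝ, |a| ≤ C / n ∧
        ∀ N : ℕ, |f N - f n - a * (N - n)| ≤ C * ((N - n) ^ 2 + 1) / n ^ 2 := by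
  set K : ℕ → ℝ := fun k => (64 * A ^ 2) ^ k * (6 * B + 2) * dyadicMoment (4 * k)
  have hK (k : ℕ) : 0 ≤ K k := mul_nonneg (by positivity) (dyadicMoment_nonneg _)
  refine ⟨2 * B + K 2 + 1024 + 32 * K 1, by linarith [hK 1, hK 2], ?_⟩
  intro n L J f hn hnL hLn hJL hnJ hf happ
  obtain ⟨p, hp, hderiv⟩ := exists_polynomial_iterate_derivative_le hA hB hn hnL hLn hJL hf happ
  have hmem : ∀ N ∈ Finset.Icc (n - L) (n + L),
      (N : ℝ) ∈ Set.Icc ((n - L : ℕ) : ℝ) ((n + L : ℕ) : ℝ) := fun N hN => by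
    simpa only [Set.mem_Icc, Nat.cast_le, Finset.mem_Icc] using hN
  have hnI : n ∈ Finset.Icc (n - L) (n + L) := by simp
  have hslope : |(derivative p).eval (n : ℝ)| ≤ K 1 / n := by
    have h := hderiv 1 n (hmem n hnI)
    rwa [Function.iterate_one, pow_one (n : ℝ)] at h
  refine ⟨(derivative p).eval (n : ℝ), hslope.trans ?_, abs_sub_linear_le_of_derivative_le
    (I := Finset.Icc (n - L) (n + L)) hn hnL hB.le (hK 2) hf (fun N hN => ?_) hmem hnI
    (fun N hN => (hp N hN).trans ?_) hslope (hderiv 2)⟩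
  · gcongr
    linarith [hK 1, hK 2]
  · simp only [Finset.coe_Icc, Set.mem_Icc, not_and_or, not_le] at hN
    rw [le_abs']
    refine hN.imp (fun h => ?_) (fun h => ?_)
    · have : (N : ℝ) + L ≤ n := by exact_mod_cast (by omega : N + L ≤ n)
      linarith
    · have : (n : ℝ) + L ≤ N := by exact_mod_cast h.le
      linarith
  · have : (n : ℝ) ^ 2 ≤ 2 ^ J := by exact_mod_cast hnJ
    rw [one_div, inv_pow, ← div_eq_mul_inv]
    gcongr

end InverseTheorem

section Poisson

/-- The probability `e^{-a} a^k / k!` that a Poisson variable of mean `a` takes the value `k`. -/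
noncomputable def poissonWeight (a : ℝ) (k : ℕ) : ℝ := Real.exp (-a) * a ^ k / k.factorial

lemma poissonWeight_nonneg {a : ℝ} (ha : 0 ≤ a) (k : ℕ) : 0 ≤ poissonWeight a k := by
  unfold poissonWeight; positivity

lemma hasSum_poissonWeight (a : ℝ) : HasSum (poissonWeight a) 1 := by
  have h := (NormedSpace.expSeries_div_hasSum_exp (𝔸 := ℝ) a).mul_left (Real.exp (-a))
  rw [← Real.exp_eq_exp_ℝ, ← Real.exp_add, neg_add_cancel, Real.exp_zero] at h
  exact h.congr_fun fun k => mul_div_assoc _ _ _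

lemma hasSum_poissonWeight_mul_descFactorial (a : ℝ) (j : ℕ) :
    HasSum (fun k => poissonWeight a k * (k.descFactorial j : ℝ)) (a ^ j) := by
  have hzero : ∑ k ∈ Finset.range j, poissonWeight a k * (k.descFactorial j : ℝ) = 0 :=
    Finset.sum_eq_zero fun k hk => by
      rw [Nat.descFactorial_of_lt (Finset.mem_range.mp hk), Nat.cast_zero, mul_zero]
  have hshift (k : ℕ) :
      a ^ j * poissonWeight a k = poissonWeight a (k + j) * ((k + j).descFactorial j : ℝ) := by
    have hfact : (k.factorial : ℝ) * (k + j).descFactorial j = (k + j).factorial := by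
      exact_mod_cast (by simpa using Nat.factorial_mul_descFactorial (Nat.le_add_left j k))
    have : (k.factorial : ℝ) ≠ 0 := by positivity
    have : ((k + j).descFactorial j : ℝ) ≠ 0 := by
      exact_mod_cast (Nat.descFactorial_pos.mpr (Nat.le_add_left j k)).ne'
    rw [poissonWeight, poissonWeight, ← hfact, pow_add]
    field_simp
  rw [← hasSum_nat_add_iff' j, hzero, sub_zero]
  simpa only [hshift, mul_one] using (hasSum_poissonWeight a).mul_left (a ^ j)

lemma hasSum_poissonWeight_mul_quadratic (a c₀ c₁ c₂ : ℝ) :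
    HasSum (fun k : ℕ => poissonWeight a k * (c₀ + c₁ * (k - a) + c₂ * (k - a) ^ 2))
      (c₀ + c₂ * a) := by
  have h := (((hasSum_poissonWeight a).mul_left (c₀ - c₁ * a + c₂ * a ^ 2)).add
    ((hasSum_poissonWeight_mul_descFactorial a 1).mul_left (c₁ + c₂ - 2 * c₂ * a))).add
    ((hasSum_poissonWeight_mul_descFactorial a 2).mul_left c₂)
  rw [show (c₀ - c₁ * a + c₂ * a ^ 2) * 1 + (c₁ + c₂ - 2 * c₂ * a) * a ^ 1 + c₂ * a ^ 2 =
    c₀ + c₂ * a by ring] at h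
  refine h.congr_fun fun k => ?_
  rw [Nat.cast_descFactorial_two, Nat.descFactorial_one]
  ring

lemma abs_tsum_poissonWeight_sub_le {f : ℕ → ℝ} {n : ℕ} {a C : ℝ} (hn : 0 < n)
    (hf : ∀ N, f N ∈ Set.Icc 0 1)
    (h : ∀ N : ℕ, |f N - f n - a * (N - n)| ≤ C * ((N - n) ^ 2 + 1) / n ^ 2) :
    |∑' k : ℕ, poissonWeight n k * f k - f n| ≤ 2 * C / n := by
  have hw (k : ℕ) : 0 ≤ poissonWeight n k := poissonWeight_nonneg n.cast_nonneg k
  have hn1 : (1 : ℝ) ≤ n := by exact_mod_cast hn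
  have hsum : Summable fun k => poissonWeight n k * f k :=
    .of_nonneg_of_le (fun k => mul_nonneg (hw k) (hf k).1)
      (fun k => mul_le_of_le_one_right (hw k) (hf k).2) (hasSum_poissonWeight n).summable
  have hlin := hasSum_poissonWeight_mul_quadratic n (f n) a 0
  have hquad := hasSum_poissonWeight_mul_quadratic n (C / n ^ 2) 0 (C / n ^ 2)
  rw [zero_mul, add_zero] at hlin
  have hC : 0 ≤ C := by
    have := (abs_nonneg _).trans (h n)
    rw [le_div_iff₀ (by positivity), zero_mul] at this
    simpa using this
  calc |∑' k : ℕ, poissonWeight n k * f k - f n|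
      ≤ C / n ^ 2 + C / n ^ 2 * n := by
        rw [← (hsum.hasSum.sub hlin).tsum_eq, ← Real.norm_eq_abs]
        refine tsum_of_norm_bounded hquad fun k => ?_
        rw [← mul_sub, norm_mul, Real.norm_of_nonneg (hw k), Real.norm_eq_abs]
        refine mul_le_mul_of_nonneg_left ?_ (hw k)
        rw [zero_mul, zero_mul, add_zero, add_zero, ← sub_sub]
        refine (h k).trans_eq ?_
        ring
    _ = C * (n + 1) / n ^ 2 := by field_simp; ring
    _ ≤ C * (2 * n) / n ^ 2 := by gcongr; linarith
    _ = 2 * C / n := by field_simp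

end Poisson

section PolynomialApproximation
open Polynomial

namespace PolyApprox

variable {I : Finset ℕ} {d : ℕ} {ε : ℝ} {f : ℕ → ℝ}

lemma mono {d' : ℕ} {ε' : ℝ} (h : PolyApprox I d ε f) (hd : d ≤ d') (hε : ε ≤ ε') :
    PolyApprox I d' ε' f := by
  obtain ⟨p, hp, hb⟩ := h
  exact ⟨p, hp.trans hd, fun N hN => (hb N hN).trans hε⟩

lemma congr {g : ℕ → ℝ} (h : PolyApprox I d ε f) (hfg : ∀ N ∈ I, g N = f N) :
    PolyApprox I d ε g := by
  obtain ⟨p, hp, hb⟩ := h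
  exact ⟨p, hp, fun N hN => by rw [hfg N hN]; exact hb N hN⟩

lemma of_abs_le (h : ∀ N ∈ I, |f N| ≤ ε) : PolyApprox I d ε f :=
  ⟨0, by simp, fun N hN => by simpa using h N hN⟩

lemma add {ε' : ℝ} {g : ℕ → ℝ} (hf : PolyApprox I d ε f) (hg : PolyApprox I d ε' g) :
    PolyApprox I d (ε + ε') (fun N => f N + g N) := by
  obtain ⟨p, hp, hb⟩ := hf
  obtain ⟨q, hq, hc⟩ := hg
  refine ⟨p + q, natDegree_add_le_of_degree_le hp hq, fun N hN => ?_⟩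
  rw [eval_add, add_sub_add_comm]
  exact (abs_add_le _ _).trans (add_le_add (hb N hN) (hc N hN))

lemma sum {ι : Type*} (s : Finset ι) {ε : ι → ℝ} {f : ι → ℕ → ℝ}
    (h : ∀ i ∈ s, PolyApprox I d (ε i) (f i)) :
    PolyApprox I d (∑ i ∈ s, ε i) (fun N => ∑ i ∈ s, f i N) := by
  classical
  induction s using Finset.induction_on with
  | empty => exact of_abs_le (by simp)
  | insert a s ha ih =>
    simp_rw [Finset.sum_insert ha]
    exact (h a (by simp)).add (ih fun i hi => h i (Finset.mem_insert_of_mem hi))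

lemma polynomial_mul {k : ℕ} {B : ℝ} (hf : PolyApprox I d ε f) (q : ℝ[X]) (hq : q.natDegree ≤ k)
    (hB : ∀ N ∈ I, |q.eval (N : ℝ)| ≤ B) :
    PolyApprox I (d + k) (B * ε) (fun N => q.eval (N : ℝ) * f N) := by
  obtain ⟨p, hp, hb⟩ := hf
  refine ⟨q * p, natDegree_mul_le.trans (by lia), fun N hN => ?_⟩
  rw [eval_mul, ← mul_sub, abs_mul]
  exact mul_le_mul (hB N hN) (hb N hN) (abs_nonneg _) ((abs_nonneg _).trans (hB N hN))

end PolyApprox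

/-- The space of restrictions to `I` of real polynomials of degree at most `d`; approximability is
the smallness of a class modulo this subspace. -/
noncomputable def polynomialValues (I : Finset ℕ) (d : ℕ) : Submodule ℝ (I → ℝ) :=
  (degreeLE ℝ d).map (LinearMap.pi fun N : I => leval (N : ℝ))

lemma mem_polynomialValues {I : Finset ℕ} {d : ℕ} {v : I → ℝ} :
    v ∈ polynomialValues I d ↔ ∃ p : ℝ[X], p.natDegree ≤ d ∧ ∀ N : I, p.eval (N : ℝ) = v N := by
  simp only [polynomialValues, Submodule.mem_map, mem_degreeLE, natDegree_le_iff_degree_le,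
    funext_iff, LinearMap.pi_apply, leval_apply]

instance isClosed_polynomialValues (I : Finset ℕ) (d : ℕ) :
    IsClosed (polynomialValues I d : Set (I → ℝ)) :=
  Submodule.closed_of_finiteDimensional _

lemma polyApprox_iff_norm_mk_le {I : Finset ℕ} {d : ℕ} {ε : ℝ} (hε : 0 ≤ ε) (f : ℕ → ℝ) :
    PolyApprox I d ε f ↔ ‖(polynomialValues I d).mkQL fun N => f N‖ ≤ ε := by
  have hdist : ‖(polynomialValues I d).mkQL fun N => f N‖ =
      Metric.infDist (fun N : I => f N) (polynomialValues I d) :=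
    QuotientAddGroup.norm_mk (S := (polynomialValues I d).toAddSubgroup) _
  rw [hdist]
  constructor
  · rintro ⟨p, hp, hb⟩
    refine (Metric.infDist_le_dist_of_mem (mem_polynomialValues.mpr ⟨p, hp, fun _ => rfl⟩)).trans
      ((dist_pi_le_iff hε).mpr fun N => hb N N.2)
  · intro h
    obtain ⟨v, hv, hvd⟩ := (isClosed_polynomialValues I d).exists_infDist_eq_dist
      ⟨0, Submodule.zero_mem _⟩ (fun N : I => f N)
    obtain ⟨p, hp, hpv⟩ := mem_polynomialValues.mp hv
    refine ⟨p, hp, fun N hN => ?_⟩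
    rw [hvd] at h
    simpa only [Real.dist_eq, hpv ⟨N, hN⟩] using (dist_pi_le_iff hε).mp h ⟨N, hN⟩

lemma PolyApprox.integral {X : Type*} [MeasurableSpace X] {μ : Measure X} {I : Finset ℕ} {d : ℕ}
    {ε : X → ℝ} {f : X → ℕ → ℝ} (hf : ∀ N ∈ I, Integrable (fun x => f x N) μ)
    (hε : Integrable ε μ) (hε0 : ∀ x, 0 ≤ ε x) (h : ∀ x, PolyApprox I d (ε x) (f x)) :
    PolyApprox I d (∫ x, ε x ∂μ) (fun N => ∫ x, f x N ∂μ) := by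
  rw [polyApprox_iff_norm_mk_le (integral_nonneg hε0)]
  have hfI : ∀ N : I, Integrable (fun x => f x N) μ := fun N => hf N N.2
  have heval : (fun N : I => ∫ x, f x N ∂μ) = ∫ x, (fun N : I => f x N) ∂μ :=
    funext fun N => (eval_integral hfI N).symm
  rw [heval, ← ContinuousLinearMap.integral_comp_comm _ (Integrable.of_eval hfI)]
  exact norm_integral_le_of_norm_le hε
    (.of_forall fun x => (polyApprox_iff_norm_mk_le (hε0 x) (f x)).mp (h x))

end PolynomialApproximation

section GeometricApproximation
open Polynomial

lemma abs_exp_sub_sum_le (x : ℝ) (m : ℕ) :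
    |Real.exp x - ∑ i ∈ Finset.range m, x ^ i / i.factorial| ≤
      (1 / 2) ^ m * Real.exp (2 * |x|) := by
  have hexp (z : ℝ) : HasSum (fun k : ℕ => z ^ k / k.factorial) (Real.exp z) := by
    rw [Real.exp_eq_exp_ℝ]
    exact NormedSpace.expSeries_div_hasSum_exp z
  have hrem := (hasSum_nat_add_iff' m).mpr (hexp x)
  have hdom : HasSum (fun k : ℕ => (1 / 2) ^ m * ((2 * |x|) ^ (k + m) / (k + m).factorial))
      ((1 / 2) ^ m * (Real.exp (2 * |x|) - ∑ i ∈ Finset.range m, (2 * |x|) ^ i / i.factorial)) :=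
    ((hasSum_nat_add_iff' m).mpr (hexp (2 * |x|))).mul_left _
  rw [← hrem.tsum_eq, ← Real.norm_eq_abs]
  refine (tsum_of_norm_bounded hdom fun k => ?_).trans ?_
  · have hpow : (1 / 2 : ℝ) ^ m * (2 * |x|) ^ (k + m) = 2 ^ k * |x| ^ (k + m) := by
      rw [mul_pow, pow_add 2 k m, one_div, inv_pow]
      field_simp
    rw [norm_div, norm_pow, Real.norm_eq_abs, Real.norm_natCast, ← mul_div_assoc, hpow]
    gcongr
    exact le_mul_of_one_le_left (by positivity) (one_le_pow₀ one_le_two)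
  · gcongr
    exact sub_le_self _ (Finset.sum_nonneg fun i _ => by positivity)

lemma exists_polynomial_abs_exp_mul_le (lam c : ℝ) (d : ℕ) :
    ∃ p : ℝ[X], p.natDegree ≤ d ∧ ∀ x : ℝ,
      |Real.exp (lam * (x - c)) - p.eval x| ≤ (1 / 2) ^ d * Real.exp (2 * |lam * (x - c)|) := by
  refine ⟨∑ i ∈ Finset.range (d + 1), C (lam ^ i / i.factorial) * (X - C c) ^ i, ?_, fun x => ?_⟩
  · refine natDegree_sum_le_of_forall_le _ _ fun i hi => (natDegree_C_mul_le _ _).trans ?_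
    rw [natDegree_pow, natDegree_X_sub_C, mul_one]
    exact Finset.mem_range_succ_iff.mp hi
  · have heval : (∑ i ∈ Finset.range (d + 1), C (lam ^ i / i.factorial) * (X - C c) ^ i).eval x =
        ∑ i ∈ Finset.range (d + 1), (lam * (x - c)) ^ i / i.factorial := by
      rw [eval_finsetSum]
      refine Finset.sum_congr rfl fun i _ => ?_
      rw [eval_mul, eval_C, eval_pow, eval_sub, eval_X, eval_C, mul_pow]
      ring
    rw [heval]
    refine (abs_exp_sub_sum_le _ _).trans ?_
    gcongr ?_ * _
    exact pow_le_pow_of_le_one (by norm_num) (by norm_num) d.le_succ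

lemma polyApprox_pow_sub {n L k : ℕ} (d : ℕ) {ω : ℝ} (hω0 : 0 ≤ ω) (hω1 : ω ≤ 1)
    (hk : k + 8 * L ≤ n) (hL : 1 ≤ L) :
    PolyApprox (Finset.Icc (n - L) (n + L)) d ((1 / 2) ^ d) (fun N => ω ^ (N - k)) := by
  rcases hω0.eq_or_lt with rfl | hpos
  · refine .of_abs_le fun N hN => ?_
    rw [zero_pow (by simp only [Finset.mem_Icc] at hN; lia), abs_zero]
    positivity
  obtain ⟨p, hp, happrox⟩ := exists_polynomial_abs_exp_mul_le (Real.log ω) n d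
  refine ⟨C (Real.exp (Real.log ω * (n - k))) * p, (natDegree_C_mul_le _ _).trans hp,
    fun N hN => ?_⟩
  rw [Finset.mem_Icc] at hN
  have hlog : Real.log ω ≤ 0 := Real.log_nonpos hω0 hω1
  have hkL : (k : ℝ) + 8 * L ≤ n := by exact_mod_cast hk
  have hNL : |(N : ℝ) - n| ≤ L := by
    have : (n : ℝ) ≤ N + L := by exact_mod_cast (by lia : n ≤ N + L)
    have : (N : ℝ) ≤ n + L := by exact_mod_cast hN.2
    exact abs_le.mpr ⟨by linarith, by linarith⟩
  have hpow : ω ^ (N - k) =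
      Real.exp (Real.log ω * (n - k)) * Real.exp (Real.log ω * (N - n)) := by
    rw [← Real.exp_add, ← Real.rpow_natCast, Nat.cast_sub (by lia), Real.rpow_def_of_pos hpos]
    ring_nf
  have hexponent : Real.log ω * (n - k) + 2 * |Real.log ω * (N - n)| ≤ 0 := by
    rw [abs_mul, abs_of_nonpos hlog]
    nlinarith
  calc |ω ^ (N - k) - (C (Real.exp (Real.log ω * (n - k))) * p).eval (N : ℝ)|
      = Real.exp (Real.log ω * (n - k)) * |Real.exp (Real.log ω * (N - n)) - p.eval (N : ℝ)| := by
        rw [hpow, eval_mul, eval_C, ← mul_sub, abs_mul, Real.abs_exp]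
    _ ≤ Real.exp (Real.log ω * (n - k)) *
          ((1 / 2) ^ d * Real.exp (2 * |Real.log ω * (N - n)|)) := by
        gcongr
        exact happrox N
    _ = (1 / 2) ^ d * Real.exp (Real.log ω * (n - k) + 2 * |Real.log ω * (N - n)|) := by
        rw [Real.exp_add]
        ring
    _ ≤ (1 / 2) ^ d := mul_le_of_le_one_right (by positivity) (Real.exp_le_one_iff.mpr hexponent)

end GeometricApproximation

section GaussianAverage
open ProbabilityTheory

lemma integral_cos_mul_gaussianReal (y : ℝ) :
    ∫ x, Real.cos (x * y) ∂gaussianReal 0 1 = Real.exp (-(y ^ 2 / 2)) := by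
  have hint : Integrable (fun x : ℝ => Complex.exp (y * x * Complex.I)) (gaussianReal 0 1) := by
    refine .of_bound (by fun_prop) 1 (.of_forall fun x => ?_)
    rw [← Complex.ofReal_mul, Complex.norm_exp_ofReal_mul_I]
  have hre (x : ℝ) : RCLike.re (Complex.exp (y * x * Complex.I)) = Real.cos (x * y) := by
    rw [← Complex.ofReal_mul, mul_comm x y]
    exact Complex.exp_ofReal_mul_I_re _
  have hchar : ∫ x : ℝ, Complex.exp (y * x * Complex.I) ∂gaussianReal 0 1 =
      (Real.exp (-(y ^ 2 / 2)) : ℝ) := by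
    rw [← charFun_apply_real, charFun_gaussianReal]
    push_cast
    congr 1
    simp
  simp_rw [← hre]
  rw [integral_re hint, hchar]
  exact Complex.ofReal_re _

lemma integrable_of_abs_le {X : Type*} [MeasurableSpace X] {μ : Measure X} [IsFiniteMeasure μ]
    {f : X → ℝ} (hf : Measurable f) {C : ℝ} (h : ∀ x, |f x| ≤ C) : Integrable f μ :=
  .of_bound hf.aestronglyMeasurable C (.of_forall h)

lemma abs_pow_mul_cos_le {ρ : ℝ} (hρ : 0 ≤ ρ) (w : ℕ) (θ : ℝ) : |ρ ^ w * Real.cos θ| ≤ ρ ^ w := by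
  rw [abs_mul, abs_of_nonneg (pow_nonneg hρ w)]
  exact mul_le_of_le_one_right (pow_nonneg hρ w) (Real.abs_cos_le_one θ)

lemma hasSum_pow_mul_cos {ρ : ℝ} (hρ0 : 0 ≤ ρ) (hρ1 : ρ < 1) (θ : ℝ) :
    HasSum (fun w : ℕ => ρ ^ w * Real.cos (w * θ))
      ((1 - ρ * Real.cos θ) / ((1 - ρ) ^ 2 + 2 * ρ * (1 - Real.cos θ))) := by
  set z : ℂ := (ρ : ℂ) * Complex.exp (θ * Complex.I) with hz
  have hz1 : ‖z‖ < 1 := by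
    rwa [hz, norm_mul, Complex.norm_exp_ofReal_mul_I, mul_one, Complex.norm_real,
      Real.norm_of_nonneg hρ0]
  have hre : z.re = ρ * Real.cos θ := by
    rw [hz, Complex.re_ofReal_mul, Complex.exp_ofReal_mul_I_re]
  have him : z.im = ρ * Real.sin θ := by
    rw [hz, Complex.im_ofReal_mul, Complex.exp_ofReal_mul_I_im]
  have hterm (w : ℕ) : ρ ^ w * Real.cos (w * θ) = (z ^ w).re := by
    rw [hz, mul_pow, ← Complex.exp_nat_mul, ← Complex.ofReal_pow, Complex.re_ofReal_mul,
      ← mul_assoc, ← Complex.ofReal_natCast, ← Complex.ofReal_mul, Complex.exp_ofReal_mul_I_re]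
  have hval : ((1 - z)⁻¹).re =
      (1 - ρ * Real.cos θ) / ((1 - ρ) ^ 2 + 2 * ρ * (1 - Real.cos θ)) := by
    rw [Complex.inv_re, Complex.normSq_apply]
    simp only [Complex.sub_re, Complex.one_re, Complex.sub_im, Complex.one_im, hre, him]
    congr 1
    linear_combination ρ ^ 2 * Real.sin_sq_add_cos_sq θ
  rw [← hval]
  exact (Complex.hasSum_re (hasSum_geometric_of_norm_lt_one hz1)).congr_fun hterm

-- The right-hand side is a multiple of the Poisson kernel.
lemma exp_neg_mul_one_sub_cos_le {ρ : ℝ} (hρ0 : 0 ≤ ρ) (hρ1 : ρ < 1) (θ : ℝ) :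
    Real.exp (-(2 / (1 - ρ) ^ 2 * (1 - Real.cos θ))) ≤
      (1 - ρ) * (2 * ∑' w : ℕ, ρ ^ w * Real.cos (w * θ) - 1) := by
  set x := 1 - Real.cos θ with hx
  have hx0 : 0 ≤ x := sub_nonneg.mpr (Real.cos_le_one θ)
  have hδ : 0 < 1 - ρ := sub_pos.mpr hρ1
  have hkernel : (1 - ρ) * (2 * ∑' w : ℕ, ρ ^ w * Real.cos (w * θ) - 1) =
      (1 + ρ) * ((1 - ρ) ^ 2 / ((1 - ρ) ^ 2 + 2 * ρ * x)) := by
    rw [(hasSum_pow_mul_cos hρ0 hρ1 θ).tsum_eq, ← hx, show Real.cos θ = 1 - x by rw [hx]; ring]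
    field_simp
    ring
  calc Real.exp (-(2 / (1 - ρ) ^ 2 * x))
      ≤ (2 / (1 - ρ) ^ 2 * x + 1)⁻¹ := by
        rw [Real.exp_neg]
        exact inv_anti₀ (by positivity) (Real.add_one_le_exp _)
    _ = (1 - ρ) ^ 2 / ((1 - ρ) ^ 2 + 2 * x) := by field_simp; ring
    _ ≤ (1 - ρ) ^ 2 / ((1 - ρ) ^ 2 + 2 * ρ * x) := by
        gcongr
        exact mul_le_of_le_one_right zero_le_two hρ1.le
    _ ≤ (1 + ρ) * ((1 - ρ) ^ 2 / ((1 - ρ) ^ 2 + 2 * ρ * x)) :=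
        le_mul_of_one_le_left (by positivity) (by linarith)
    _ = _ := hkernel.symm

lemma integrable_tsum_pow_mul_cos {X : Type*} [MeasurableSpace X] {μ : Measure X}
    [IsFiniteMeasure μ] {ρ : ℝ} (hρ0 : 0 ≤ ρ) (hρ1 : ρ < 1) {θ : X → ℝ} (hθ : Measurable θ) :
    Integrable (fun x => ∑' w : ℕ, ρ ^ w * Real.cos (w * θ x)) μ := by
  refine integrable_of_abs_le ?_ (C := ∑' w : ℕ, ρ ^ w) fun x => ?_
  · simp_rw [fun x => (hasSum_pow_mul_cos hρ0 hρ1 (θ x)).tsum_eq]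
    fun_prop
  · exact tsum_of_norm_bounded (summable_geometric_of_lt_one hρ0 hρ1).hasSum
      fun w => (Real.norm_eq_abs _).trans_le (abs_pow_mul_cos_le hρ0 w _)

lemma hasSum_integral_pow_mul_cos_gaussianReal {ρ : ℝ} (hρ0 : 0 ≤ ρ) (hρ1 : ρ < 1) (y : ℝ) :
    HasSum (fun w : ℕ => ρ ^ w * Real.exp (-((w * y) ^ 2 / 2)))
      (∫ x, ∑' w : ℕ, ρ ^ w * Real.cos (w * (x * y)) ∂gaussianReal 0 1) := by
  have hint (w : ℕ) : Integrable (fun x : ℝ => ρ ^ w * Real.cos (w * (x * y)))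
      (gaussianReal 0 1) :=
    integrable_of_abs_le (by fun_prop) fun x => abs_pow_mul_cos_le hρ0 w _
  have hsummable :
      Summable fun w : ℕ => ∫ x, ‖ρ ^ w * Real.cos (w * (x * y))‖ ∂gaussianReal 0 1 := by
    refine .of_nonneg_of_le (fun w => integral_nonneg fun x => norm_nonneg _) (fun w => ?_)
      (summable_geometric_of_lt_one hρ0 hρ1)
    simpa using integral_mono (hint w).norm (integrable_const (ρ ^ w)) fun x =>
      abs_pow_mul_cos_le hρ0 w _
  refine (hasSum_integral_of_summable_integral_norm hint hsummable).congr_fun fun w => ?_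
  rw [integral_const_mul, ← integral_cos_mul_gaussianReal]
  simp_rw [mul_left_comm]

lemma exp_neg_sq_div_two_le (t : ℝ) : Real.exp (-(t ^ 2 / 2)) ≤ 2 * Real.exp (-t) := by
  have hhalf : Real.exp (1 / 2) ≤ 2 := by
    have hsq : Real.exp (1 / 2) ^ 2 = Real.exp 1 := by rw [← Real.exp_nat_mul]; norm_num
    nlinarith [Real.exp_one_lt_d9, Real.exp_pos (1 / 2)]
  calc Real.exp (-(t ^ 2 / 2)) ≤ Real.exp (1 / 2 + -t) :=
        Real.exp_le_exp.mpr (by nlinarith [sq_nonneg (t - 1)])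
    _ = Real.exp (1 / 2) * Real.exp (-t) := Real.exp_add _ _
    _ ≤ 2 * Real.exp (-t) := by gcongr

lemma integral_tsum_pow_mul_cos_gaussianReal_le {ρ y η : ℝ} (hρ0 : 0 ≤ ρ) (hρ1 : ρ < 1)
    (hη0 : 0 < η) (hη1 : η ≤ 1) (hηy : η ≤ |y|) :
    ∫ x, ∑' w : ℕ, ρ ^ w * Real.cos (w * (x * y)) ∂gaussianReal 0 1 ≤ 4 / η := by
  have hr : Real.exp (-η) < 1 := Real.exp_lt_one_iff.mpr (neg_neg_of_pos hη0)
  have hgeo := (hasSum_geometric_of_lt_one (Real.exp_pos _).le hr).mul_left 2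
  have hterm (w : ℕ) : ρ ^ w * Real.exp (-((w * y) ^ 2 / 2)) ≤ 2 * Real.exp (-η) ^ w :=
    calc ρ ^ w * Real.exp (-((w * y) ^ 2 / 2))
        ≤ Real.exp (-((w * y) ^ 2 / 2)) :=
          mul_le_of_le_one_left (Real.exp_pos _).le (pow_le_one₀ hρ0 hρ1.le)
      _ ≤ Real.exp (-((w * η) ^ 2 / 2)) := by
          rw [mul_pow, mul_pow, ← sq_abs y]
          gcongr
      _ ≤ 2 * Real.exp (-(w * η)) := exp_neg_sq_div_two_le _
      _ = 2 * Real.exp (-η) ^ w := by rw [← Real.exp_nat_mul, mul_neg]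
  have hinv : (1 - Real.exp (-η))⁻¹ ≤ 2 / η := by
    have hexp : Real.exp (-η) ≤ (η + 1)⁻¹ := by
      rw [Real.exp_neg]
      exact inv_anti₀ (by positivity) (Real.add_one_le_exp η)
    have hlin : (η + 1)⁻¹ ≤ 1 - η / 2 := by
      rw [inv_le_iff_one_le_mul₀ (by positivity)]
      nlinarith
    rw [inv_le_comm₀ (by linarith) (by positivity), inv_div]
    linarith
  calc _ ≤ 2 * (1 - Real.exp (-η))⁻¹ :=
        hasSum_le hterm (hasSum_integral_pow_mul_cos_gaussianReal hρ0 hρ1 y) hgeo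
    _ ≤ 2 * (2 / η) := by gcongr
    _ = 4 / η := by ring

lemma integral_exp_neg_mul_one_sub_cos_gaussianReal_le {y η δ : ℝ} (hη0 : 0 < η) (hη1 : η ≤ 1)
    (hηy : η ≤ |y|) (hδ0 : 0 < δ) (hδ1 : δ ≤ 1) :
    ∫ x, Real.exp (-(2 / δ ^ 2 * (1 - Real.cos (x * y)))) ∂gaussianReal 0 1 ≤ 8 * (δ / η) := by
  obtain ⟨ρ, hρδ⟩ : ∃ ρ, 1 - ρ = δ := ⟨1 - δ, by ring⟩
  have hρ0 : 0 ≤ ρ := by linarith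
  have hρ1 : ρ < 1 := by linarith
  set T : ℝ → ℝ := fun x => ∑' w : ℕ, ρ ^ w * Real.cos (w * (x * y))
  have hT : Integrable T (gaussianReal 0 1) :=
    integrable_tsum_pow_mul_cos hρ0 hρ1 (measurable_id.mul_const y)
  calc ∫ x, Real.exp (-(2 / δ ^ 2 * (1 - Real.cos (x * y)))) ∂gaussianReal 0 1
      ≤ ∫ x, δ * (2 * T x - 1) ∂gaussianReal 0 1 := by
        refine integral_mono_of_nonneg (.of_forall fun x => (Real.exp_pos _).le)
          (((hT.const_mul 2).sub (integrable_const 1)).const_mul _) (.of_forall fun x => ?_)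
        subst hρδ
        exact exp_neg_mul_one_sub_cos_le hρ0 hρ1 _
    _ = δ * (2 * (∫ x, T x ∂gaussianReal 0 1) - 1) := by
        rw [integral_const_mul, integral_sub (hT.const_mul 2) (integrable_const 1),
          integral_const_mul]
        simp
    _ ≤ δ * (2 * (4 / η)) := by
        gcongr
        linarith [integral_tsum_pow_mul_cos_gaussianReal_le hρ0 hρ1 hη0 hη1 hηy]
    _ = 8 * (δ / η) := by ring

lemma integral_exp_neg_div_min_sq_mul_one_sub_cos_gaussianReal_le {y W : ℝ} (hy : y ≠ 0)
    (hW : 2 ≤ W) :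
    ∫ x, Real.exp (-(W / min (y ^ 2) 1 * (1 - Real.cos (x * y)))) ∂gaussianReal 0 1 ≤
      12 / √W := by
  set η := min |y| 1
  have hη0 : 0 < η := lt_min (abs_pos.mpr hy) one_pos
  have hη1 : η ≤ 1 := min_le_right _ _
  have hη2 : min (y ^ 2) 1 = η ^ 2 := by
    rcases le_total |y| 1 with h | h
    · rw [show η = |y| from min_eq_left h, sq_abs, min_eq_left ((sq_le_one_iff_abs_le_one y).mpr h)]
    · rw [show η = 1 from min_eq_right h, one_pow,
        min_eq_right ((one_le_sq_iff_one_le_abs y).mpr h)]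
  have hW0 : 0 < W := by linarith
  have hsqrtW : 0 < √W := Real.sqrt_pos.mpr hW0
  have hratio : √2 / √W ≤ 1 := (div_le_one hsqrtW).mpr (Real.sqrt_le_sqrt hW)
  have hδ : 2 / (η * (√2 / √W)) ^ 2 = W / min (y ^ 2) 1 := by
    rw [hη2, mul_pow, div_pow, Real.sq_sqrt zero_le_two, Real.sq_sqrt hW0.le]
    field_simp
  have hsqrt2 : √2 ≤ 3 / 2 := Real.sqrt_le_iff.mpr ⟨by norm_num, by norm_num⟩
  calc _ ≤ 8 * (η * (√2 / √W) / η) := by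
        rw [← hδ]
        exact integral_exp_neg_mul_one_sub_cos_gaussianReal_le hη0 hη1 (min_le_left _ _)
          (by positivity) (mul_le_one₀ hη1 (by positivity) hratio)
    _ = 8 * √2 / √W := by field_simp
    _ ≤ 12 / √W := by gcongr; linarith

lemma exp_neg_integral_le_integral_weight {Y : Type*} [MeasurableSpace Y] {Λ : Measure Y}
    {w ψ : Y → ℝ} (hw : Integrable w Λ) (hw0 : ∀ y, 0 ≤ w y) (hW : 0 < ∫ y, w y ∂Λ)
    (hψ : Integrable ψ Λ) (hψ0 : ∀ y, 0 ≤ ψ y) (hψw : ∀ y, w y = 0 → ψ y = 0) :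
    Real.exp (-∫ y, ψ y ∂Λ) ≤
      ∫ y, w y / (∫ y, w y ∂Λ) * Real.exp (-((∫ y, w y ∂Λ) / w y * ψ y)) ∂Λ := by
  set W := ∫ y, w y ∂Λ
  set m := ∫ y, ψ y ∂Λ
  have hintegrable : Integrable (fun y => w y / W * Real.exp (-(W / w y * ψ y))) Λ := by
    have := hw.aemeasurable
    have := hψ.aemeasurable
    refine (hw.div_const W).mono (AEMeasurable.aestronglyMeasurable (by fun_prop))
      (.of_forall fun y => ?_)
    rw [norm_mul, Real.norm_of_nonneg (Real.exp_pos _).le]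
    refine mul_le_of_le_one_right (norm_nonneg _) (Real.exp_le_one_iff.mpr (neg_nonpos.mpr ?_))
    exact mul_nonneg (div_nonneg hW.le (hw0 y)) (hψ0 y)
  have htangent : Integrable (fun y => Real.exp (-m) * (w y / W * (1 + m) - ψ y)) Λ :=
    (((hw.div_const W).mul_const _).sub hψ).const_mul _
  calc Real.exp (-m) = ∫ y, Real.exp (-m) * (w y / W * (1 + m) - ψ y) ∂Λ := by
        rw [integral_const_mul, integral_sub ((hw.div_const W).mul_const _) hψ,
          integral_mul_const, integral_div, div_self hW.ne']
        ring
    _ ≤ _ := integral_mono htangent hintegrable fun y => ?_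
  rcases (hw0 y).eq_or_lt with h | h
  · simp [← h, hψw y h.symm]
  · have hexp : Real.exp (-m) * (1 + m - W / w y * ψ y) ≤ Real.exp (-(W / w y * ψ y)) := by
      rw [show -(W / w y * ψ y) = -m + (m - W / w y * ψ y) by ring, Real.exp_add]
      gcongr
      linarith [Real.add_one_le_exp (m - W / w y * ψ y)]
    calc Real.exp (-m) * (w y / W * (1 + m) - ψ y)
        = w y / W * (Real.exp (-m) * (1 + m - W / w y * ψ y)) := by field_simp
      _ ≤ w y / W * Real.exp (-(W / w y * ψ y)) :=
        mul_le_mul_of_nonneg_left hexp (div_nonneg h.le hW.le)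

lemma one_sub_cos_mul_le (x y : ℝ) : 1 - Real.cos (x * y) ≤ min (y ^ 2) 1 * (2 + x ^ 2) := by
  have hquad := Real.one_sub_sq_div_two_le_cos (x := x * y)
  have htwo := Real.neg_one_le_cos (x * y)
  rcases min_cases (y ^ 2) 1 with ⟨h, -⟩ | ⟨h, -⟩ <;> rw [h]
  · nlinarith [sq_nonneg y, sq_nonneg (x * y)]
  · nlinarith [sq_nonneg x]

lemma integral_exp_neg_integral_one_sub_cos_gaussianReal_le {Λ : Measure ℝ} [IsFiniteMeasure Λ]
    (hW : 2 ≤ ∫ y, min (y ^ 2) 1 ∂Λ) :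
    ∫ x, Real.exp (-∫ y, (1 - Real.cos (x * y)) ∂Λ) ∂gaussianReal 0 1 ≤
      12 / √(∫ y, min (y ^ 2) 1 ∂Λ) := by
  have hw0 (y : ℝ) : 0 ≤ min (y ^ 2) 1 := le_min (sq_nonneg y) zero_le_one
  have hw : Integrable (fun y : ℝ => min (y ^ 2) 1) Λ :=
    integrable_of_abs_le (by fun_prop) (C := 1) fun y => by
      rw [abs_of_nonneg (hw0 y)]
      exact min_le_right _ _
  have hψ0 (x y : ℝ) : 0 ≤ 1 - Real.cos (x * y) := sub_nonneg.mpr (Real.cos_le_one _)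
  set W := ∫ y, min (y ^ 2) 1 ∂Λ with hWdef
  set g : ℝ → ℝ → ℝ := fun x y =>
    min (y ^ 2) 1 / W * Real.exp (-(W / min (y ^ 2) 1 * (1 - Real.cos (x * y))))
  have hjensen (x : ℝ) : Real.exp (-∫ y, (1 - Real.cos (x * y)) ∂Λ) ≤ ∫ y, g x y ∂Λ := by
    refine exp_neg_integral_le_integral_weight hw hw0 (by linarith) ?_ (hψ0 x) fun y hy =>
      le_antisymm ((one_sub_cos_mul_le x y).trans_eq (by rw [hy, zero_mul])) (hψ0 x y)
    refine integrable_of_abs_le (by fun_prop) (C := 2) fun y => ?_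
    rw [abs_of_nonneg (hψ0 x y)]
    linarith [Real.neg_one_le_cos (x * y)]
  have hg : Integrable (Function.uncurry g) ((gaussianReal 0 1).prod Λ) := by
    refine integrable_of_abs_le (by unfold g Function.uncurry; fun_prop) (C := 1 / W) fun p => ?_
    have hnonneg : 0 ≤ W / min (p.2 ^ 2) 1 * (1 - Real.cos (p.1 * p.2)) :=
      mul_nonneg (div_nonneg (by linarith) (hw0 _)) (hψ0 _ _)
    rw [Function.uncurry, abs_mul, Real.abs_exp, abs_of_nonneg (div_nonneg (hw0 _) (by linarith))]
    refine (mul_le_of_le_one_right (div_nonneg (hw0 _) (by linarith))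
      (Real.exp_le_one_iff.mpr (neg_nonpos.mpr hnonneg))).trans ?_
    gcongr
    exact min_le_right _ _
  calc ∫ x, Real.exp (-∫ y, (1 - Real.cos (x * y)) ∂Λ) ∂gaussianReal 0 1
      ≤ ∫ x, ∫ y, g x y ∂Λ ∂gaussianReal 0 1 :=
        integral_mono_of_nonneg (.of_forall fun x => (Real.exp_pos _).le) hg.integral_prod_left
          (.of_forall hjensen)
    _ = ∫ y, ∫ x, g x y ∂gaussianReal 0 1 ∂Λ := integral_integral_swap hg
    _ ≤ ∫ y, min (y ^ 2) 1 / W * (12 / √W) ∂Λ := by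
        refine integral_mono hg.integral_prod_right ((hw.div_const W).mul_const _) fun y => ?_
        rcases eq_or_ne y 0 with rfl | hy
        · simp [g]
        · simp only [g, integral_const_mul]
          exact mul_le_mul_of_nonneg_left
            (integral_exp_neg_div_min_sq_mul_one_sub_cos_gaussianReal_le hy hW)
            (div_nonneg (hw0 y) (by linarith))
    _ = 12 / √W := by
        rw [integral_mul_const, integral_div, ← hWdef, div_self (by linarith), one_mul]

lemma integral_min_sq_one_le {Λ : Measure ℝ} [IsFiniteMeasure Λ] {q : ℝ} (hq0 : 0 < q)
    (hq1 : q ≤ 1)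
    (h : q ≤ ∫ x, Real.exp (-∫ y, (1 - Real.cos (x * y)) ∂Λ) ∂gaussianReal 0 1) :
    ∫ y, min (y ^ 2) 1 ∂Λ ≤ 144 / q ^ 2 := by
  rw [le_div_iff₀ (by positivity)]
  rcases lt_or_ge (∫ y, min (y ^ 2) 1 ∂Λ) 2 with hW | hW
  · nlinarith [pow_le_one₀ hq0.le hq1 (n := 2)]
  · have hW0 : 0 < ∫ y, min (y ^ 2) 1 ∂Λ := by linarith
    have hsqrt := h.trans (integral_exp_neg_integral_one_sub_cos_gaussianReal_le hW)
    rw [le_div_iff₀ (Real.sqrt_pos.mpr hW0)] at hsqrt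
    calc (∫ y, min (y ^ 2) 1 ∂Λ) * q ^ 2 = (q * √(∫ y, min (y ^ 2) 1 ∂Λ)) ^ 2 := by
          rw [mul_pow, Real.sq_sqrt hW0.le, mul_comm]
      _ ≤ 12 ^ 2 := by gcongr
      _ = 144 := by norm_num

end GaussianAverage

section Dissociation
open ProbabilityTheory

/-- The set of points `y` such that neither `y` nor `2 * y` is within distance `1` of an integer
combination of `u 0, …, u (k - 1)` with coefficients bounded by `2`. Points chosen successively
in these sets form a quantitatively dissociated sequence. -/
def farFromLattice (u : ℕ → ℝ) (k : ℕ) : Set ℝ :=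
  {y | ∀ a : Fin k → ℤ, (∀ j, |a j| ≤ 2) →
    1 < |y - ∑ j, (a j : ℝ) * u j| ∧ 1 < |2 * y - ∑ j, (a j : ℝ) * u j|}

lemma measurableSet_farFromLattice (u : ℕ → ℝ) (k : ℕ) : MeasurableSet (farFromLattice u k) := by
  simp only [farFromLattice, Set.ofPred_forall, Set.ofPred_and]
  refine .iInter fun a => .iInter fun _ => ?_
  exact (measurableSet_lt (by fun_prop) (by fun_prop)).inter
    (measurableSet_lt (by fun_prop) (by fun_prop))

lemma farFromLattice_congr {u v : ℕ → ℝ} {k : ℕ} (h : ∀ j < k, u j = v j) :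
    farFromLattice u k = farFromLattice v k := by
  have hsum (a : Fin k → ℤ) : ∑ j, (a j : ℝ) * u j = ∑ j, (a j : ℝ) * v j :=
    Finset.sum_congr rfl fun j _ => by rw [h j j.2]
  simp only [farFromLattice, hsum]

lemma neg_mem_farFromLattice_iff {u : ℕ → ℝ} {k : ℕ} {y : ℝ} :
    -y ∈ farFromLattice u k ↔ y ∈ farFromLattice u k := by
  suffices h : ∀ z ∈ farFromLattice u k, -z ∈ farFromLattice u k from
    ⟨fun hy => neg_neg y ▸ h (-y) hy, h y⟩
  intro z hz a ha
  have hfar := hz (-a) fun j => (abs_neg (a j)).trans_le (ha j)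
  simp only [Pi.neg_apply, Int.cast_neg, neg_mul, Finset.sum_neg_distrib, sub_neg_eq_add] at hfar
  rw [mul_neg, ← neg_add', abs_neg, ← neg_add', abs_neg]
  exact hfar

lemma one_lt_abs_sum_of_mem_farFromLattice {u : ℕ → ℝ} {r : ℕ}
    (hu : ∀ j < r, u j ∈ farFromLattice u j) {w : Fin r → ℤ} (hw : ∀ j, |w j| ≤ 2) (hw0 : w ≠ 0) :
    1 < |∑ j, (w j : ℝ) * u j| := by
  induction r with
  | zero => exact absurd (Subsingleton.elim w 0) hw0
  | succ r ih =>
    rw [Fin.sum_univ_castSucc]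
    simp only [Fin.val_castSucc, Fin.val_last]
    obtain ⟨a, ha⟩ : ∃ a : Fin r → ℤ, a = fun j => w j.castSucc := ⟨_, rfl⟩
    have ha2 (j : Fin r) : |a j| ≤ 2 := ha ▸ hw j.castSucc
    have hfar := hu r r.lt_succ_self a ha2
    have hfar' := hu r r.lt_succ_self (-a) fun j => (abs_neg (a j)).trans_le (ha2 j)
    simp only [Pi.neg_apply, Int.cast_neg, neg_mul, Finset.sum_neg_distrib, sub_neg_eq_add]
      at hfar'
    simp only [← congrFun ha]
    have hlast := abs_le.mp (hw (Fin.last r))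
    obtain e | e | e | e | e : w (Fin.last r) = 0 ∨ w (Fin.last r) = 1 ∨ w (Fin.last r) = 2 ∨
        w (Fin.last r) = -1 ∨ w (Fin.last r) = -2 := by lia
    · have ha0 : a ≠ 0 := fun h => hw0 <| funext <| Fin.lastCases e fun j => by
        rw [← congrFun ha, h, Pi.zero_apply, Pi.zero_apply]
      simpa [e] using ih (fun j hj => hu j (by lia)) ha2 ha0
    · simpa [e, add_comm] using hfar'.1
    · simpa [e, add_comm] using hfar'.2
    · simpa [e, abs_sub_comm, ← sub_eq_add_neg] using hfar.1
    · simpa [e, abs_sub_comm, ← sub_eq_add_neg] using hfar.2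

lemma injOn_floor_sum_of_mem_farFromLattice {u : ℕ → ℝ} {r : ℕ}
    (hu : ∀ j < r, u j ∈ farFromLattice u j) :
    Set.InjOn (fun z : Fin r → ℤ => ⌊∑ j, (z j : ℝ) * u j⌋) {z | ∀ j, |z j| ≤ 1} := by
  intro z hz z' hz' hfloor
  by_contra hne
  have hlt := Int.abs_sub_lt_one_of_floor_eq_floor hfloor
  have hgt := one_lt_abs_sum_of_mem_farFromLattice hu (w := z - z')
    (fun j => (abs_sub _ _).trans (add_le_add (hz j) (hz' j))) (sub_ne_zero.mpr hne)
  simp only [Pi.sub_apply, Int.cast_sub, sub_mul, Finset.sum_sub_distrib] at hgt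
  exact hlt.not_gt hgt

lemma hasSum_half_pow_natAbs : HasSum (fun n : ℤ => (1 / 2 : ℝ) ^ n.natAbs) 3 := by
  have hsum := HasSum.of_nat_of_neg (f := fun n : ℤ => (1 / 2 : ℝ) ^ n.natAbs)
    (by simpa using hasSum_geometric_two) (by simpa using hasSum_geometric_two)
  rwa [Int.natAbs_zero, pow_zero, show (2 : ℝ) + 2 - 1 = 3 by norm_num] at hsum

lemma exp_neg_sq_div_two_le_half_pow_floor (s : ℝ) :
    Real.exp (-(s ^ 2 / 2)) ≤ 6 * (1 / 2) ^ ⌊s⌋.natAbs := by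
  have hfloor : (⌊s⌋.natAbs : ℝ) ≤ |s| + 1 := by
    rw [Nat.cast_natAbs, Int.cast_abs]
    have hdist : |(⌊s⌋ : ℝ) - s| ≤ 1 :=
      abs_le.mpr ⟨by linarith [Int.lt_floor_add_one s], by linarith [Int.floor_le s]⟩
    linarith [abs_sub_abs_le_abs_sub (⌊s⌋ : ℝ) s]
  have hhalf : Real.exp (-1) ≤ 1 / 2 := by
    rw [Real.exp_neg, one_div]
    exact inv_anti₀ two_pos (by linarith [Real.add_one_le_exp 1])
  calc Real.exp (-(s ^ 2 / 2)) = Real.exp (-(|s| ^ 2 / 2)) := by rw [sq_abs]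
    _ ≤ 2 * Real.exp (-|s|) := exp_neg_sq_div_two_le _
    _ ≤ 2 * Real.exp (1 + ⌊s⌋.natAbs * -1) := by gcongr; linarith
    _ = 2 * (Real.exp 1 * Real.exp (-1) ^ ⌊s⌋.natAbs) := by rw [Real.exp_add, Real.exp_nat_mul]
    _ ≤ 2 * (3 * (1 / 2) ^ ⌊s⌋.natAbs) := by
        gcongr
        linarith [Real.exp_one_lt_d9]
    _ = 6 * (1 / 2) ^ ⌊s⌋.natAbs := by ring

lemma prod_sum_mul_cos {ι : Type*} [Fintype ι] [DecidableEq ι] (A : Finset ℤ) {p : ℤ → ℝ}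
    (hp : ∀ θ : ℝ, ∑ z ∈ A, p z * Real.sin (z * θ) = 0) (θ : ι → ℝ) :
    ∏ j, ∑ z ∈ A, p z * Real.cos (z * θ j) =
      ∑ z ∈ Fintype.piFinset fun _ => A, (∏ j, p (z j)) * Real.cos (∑ j, z j * θ j) := by
  have hfactor (t : ℝ) : ((∑ z ∈ A, p z * Real.cos (z * t) : ℝ) : ℂ) =
      ∑ z ∈ A, (p z : ℂ) * Complex.exp ((z * t : ℝ) * Complex.I) := by
    apply Complex.ext
    · simp [Complex.re_sum, Complex.exp_ofReal_mul_I_re, -Complex.ofReal_mul]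
    · simp [Complex.im_sum, Complex.exp_ofReal_mul_I_im, -Complex.ofReal_mul, hp]
  rw [← Complex.ofReal_re (∏ j, _), Complex.ofReal_prod]
  simp_rw [hfactor, Finset.prod_univ_sum, Complex.re_sum]
  refine Finset.sum_congr rfl fun z _ => ?_
  rw [Finset.prod_mul_distrib, ← Complex.exp_sum, ← Finset.sum_mul, ← Complex.ofReal_prod,
    ← Complex.ofReal_sum, Complex.re_ofReal_mul, Complex.exp_ofReal_mul_I_re]

lemma integral_prod_cos_gaussianReal_le {u : ℕ → ℝ} {r : ℕ}
    (hu : ∀ j < r, u j ∈ farFromLattice u j) :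
    ∫ x, ∏ j : Fin r, (3 / 5 + 2 / 5 * Real.cos (x * u j)) ∂gaussianReal 0 1 ≤
      18 * (3 / 5) ^ r := by
  set p : ℤ → ℝ := fun z => if z = 0 then 3 / 5 else 1 / 5 with hp
  have hp0 (z : ℤ) : 0 ≤ p z := by rw [hp]; positivity
  have hp1 (z : ℤ) : p z ≤ 3 / 5 := by simp only [hp]; split_ifs <;> norm_num
  set Z := Fintype.piFinset fun _ : Fin r => ({-1, 0, 1} : Finset ℤ)
  have hZ : (Z : Set (Fin r → ℤ)) ⊆ {z | ∀ j, |z j| ≤ 1} := fun z hz j => by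
    have hj : z j = -1 ∨ z j = 0 ∨ z j = 1 := by simpa using Fintype.mem_piFinset.mp hz j
    rcases hj with e | e | e <;> simp [e]
  set S : (Fin r → ℤ) → ℝ := fun z => ∑ j, (z j : ℝ) * u j
  have hexpand (x : ℝ) : ∏ j : Fin r, (3 / 5 + 2 / 5 * Real.cos (x * u j)) =
      ∑ z ∈ Z, (∏ j, p (z j)) * Real.cos (x * S z) := by
    have hcos (t : ℝ) : 3 / 5 + 2 / 5 * Real.cos t =
        ∑ z ∈ ({-1, 0, 1} : Finset ℤ), p z * Real.cos (z * t) := by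
      simp [hp]
      ring
    simp_rw [hcos]
    rw [prod_sum_mul_cos _ (fun t => by simp [hp])]
    simp_rw [S, Finset.mul_sum, mul_left_comm x]
    rfl
  simp_rw [hexpand]
  rw [integral_finsetSum _ fun z _ => (integrable_of_abs_le (by fun_prop)
    fun x => Real.abs_cos_le_one _).const_mul _]
  simp_rw [integral_const_mul, integral_cos_mul_gaussianReal]
  calc ∑ z ∈ Z, (∏ j, p (z j)) * Real.exp (-(S z ^ 2 / 2))
      ≤ ∑ z ∈ Z, (3 / 5) ^ r * (6 * (1 / 2) ^ ⌊S z⌋.natAbs) := by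
        gcongr with z
        · exact (Finset.prod_le_prod (fun j _ => hp0 (z j)) fun j _ => hp1 (z j)).trans_eq
            (Fin.prod_const r _)
        · exact exp_neg_sq_div_two_le_half_pow_floor _
    _ = (3 / 5) ^ r * (6 * ∑ n ∈ Z.image fun z => ⌊S z⌋, (1 / 2) ^ n.natAbs) := by
        rw [Finset.sum_image ((injOn_floor_sum_of_mem_farFromLattice hu).mono hZ),
          Finset.mul_sum, Finset.mul_sum]
    _ ≤ (3 / 5) ^ r * (6 * 3) := by
        gcongr
        exact sum_le_hasSum _ (fun n _ => by positivity) hasSum_half_pow_natAbs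
    _ = 18 * (3 / 5) ^ r := by ring

lemma exp_neg_le_one_sub_mul {x : ℝ} (h0 : 0 ≤ x) (h2 : x ≤ 2) :
    Real.exp (-x) ≤ 1 - 2 / 5 * x := by
  have hchord := convexOn_exp.2 (Set.mem_univ 0) (Set.mem_univ (-2))
    (show 0 ≤ 1 - x / 2 by linarith) (show 0 ≤ x / 2 by linarith) (by ring)
  simp only [smul_eq_mul, mul_zero, zero_add, Real.exp_zero, mul_one] at hchord
  rw [show x / 2 * -2 = -x by ring] at hchord
  have hexp : Real.exp (-2) ≤ 1 / 5 := by
    rw [Real.exp_neg, one_div, show (2 : ℝ) = 1 + 1 by norm_num, Real.exp_add]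
    exact inv_anti₀ (by norm_num) (by nlinarith [Real.exp_one_gt_d9])
  nlinarith

lemma integrable_one_sub_cos_mul (μ : Measure ℝ) [IsFiniteMeasure μ] (x : ℝ) :
    Integrable (fun y => 1 - Real.cos (x * y)) μ :=
  integrable_of_abs_le (by fun_prop) (C := 2) fun y =>
    abs_le.mpr ⟨by linarith [Real.cos_le_one (x * y)], by linarith [Real.neg_one_le_cos (x * y)]⟩

lemma exp_neg_integral_one_sub_cos_le (μ : Measure ℝ) [IsProbabilityMeasure μ] (x : ℝ) :
    Real.exp (-∫ y, (1 - Real.cos (x * y)) ∂μ) ≤ ∫ y, (3 / 5 + 2 / 5 * Real.cos (x * y)) ∂μ := by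
  have hint := integrable_one_sub_cos_mul μ x
  have h0 : 0 ≤ ∫ y, (1 - Real.cos (x * y)) ∂μ :=
    integral_nonneg fun y => sub_nonneg.mpr (Real.cos_le_one _)
  have h2 : ∫ y, (1 - Real.cos (x * y)) ∂μ ≤ 2 := by
    simpa using integral_mono hint (integrable_const 2) fun y => by
      linarith [Real.neg_one_le_cos (x * y)]
  refine (exp_neg_le_one_sub_mul h0 h2).trans_eq ?_
  simp_rw [show ∀ y, 3 / 5 + 2 / 5 * Real.cos (x * y) = 1 - 2 / 5 * (1 - Real.cos (x * y))
    from fun y => by ring]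
  rw [integral_sub (integrable_const 1) (hint.const_mul _), integral_const_mul]
  simp

lemma integral_cond_le {Y : Type*} [MeasurableSpace Y] {Λ : Measure Y} {O : Set Y} {c : ℝ}
    (hc : 0 < c) (hO : c ≤ Λ.real O) {g : Y → ℝ} (hg : Integrable g Λ) (hg0 : ∀ y, 0 ≤ g y) :
    ∫ y, g y ∂Λ[|O] ≤ (∫ y, g y ∂Λ) / c := by
  rw [ProbabilityTheory.cond, integral_smul_measure, smul_eq_mul, ENNReal.toReal_inv,
    inv_mul_eq_div]
  exact div_le_div₀ (integral_nonneg hg0)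
    (setIntegral_le_integral hg (.of_forall hg0)) hc hO

lemma exists_mem_le_integral_mul_cos {Λ γ : Measure ℝ} [IsFiniteMeasure Λ] [IsFiniteMeasure γ]
    {O : Set ℝ} (hOm : MeasurableSet O) {c : ℝ} (hc : 0 < c) (hO : c ≤ Λ.real O) {w : ℝ → ℝ}
    (hw : Measurable w) (hw0 : ∀ x, 0 ≤ w x) (hw1 : ∀ x, w x ≤ 1) :
    ∃ y ∈ O, ∫ x, w x * Real.exp (-((∫ y, (1 - Real.cos (x * y)) ∂Λ) / c)) ∂γ ≤
      ∫ x, w x * (3 / 5 + 2 / 5 * Real.cos (x * y)) ∂γ := by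
  have hO0 : Λ O ≠ 0 := fun h => by simp [measureReal_def, h] at hO; linarith
  have := cond_isProbabilityMeasure hO0
  have hint : Integrable (Function.uncurry fun x y => w x * (3 / 5 + 2 / 5 * Real.cos (x * y)))
      (γ.prod Λ[|O]) := by
    refine integrable_of_abs_le (by unfold Function.uncurry; fun_prop) (C := 1) fun z => ?_
    rw [Function.uncurry, abs_mul, abs_of_nonneg (hw0 _)]
    refine mul_le_one₀ (hw1 _) (abs_nonneg _) (abs_le.mpr ⟨?_, ?_⟩) <;>
      linarith [Real.cos_le_one (z.1 * z.2), Real.neg_one_le_cos (z.1 * z.2)]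
  have hpointwise (x : ℝ) : w x * Real.exp (-((∫ y, (1 - Real.cos (x * y)) ∂Λ) / c)) ≤
      ∫ y, w x * (3 / 5 + 2 / 5 * Real.cos (x * y)) ∂Λ[|O] := by
    rw [integral_const_mul]
    refine mul_le_mul_of_nonneg_left ?_ (hw0 x)
    refine le_trans ?_ (exp_neg_integral_one_sub_cos_le Λ[|O] x)
    gcongr
    exact integral_cond_le hc hO (integrable_one_sub_cos_mul Λ x) fun y =>
      sub_nonneg.mpr (Real.cos_le_one _)
  have hle : ∫ x, w x * Real.exp (-((∫ y, (1 - Real.cos (x * y)) ∂Λ) / c)) ∂γ ≤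
      ∫ y, ∫ x, w x * (3 / 5 + 2 / 5 * Real.cos (x * y)) ∂γ ∂Λ[|O] :=
    (integral_mono_of_nonneg (.of_forall fun x => mul_nonneg (hw0 x) (Real.exp_pos _).le)
      hint.integral_prod_left (.of_forall hpointwise)).trans_eq (integral_integral_swap hint)
  have hOc : Λ[|O] Oᶜ = 0 := mem_ae_iff.mp (ae_cond_mem hOm)
  obtain ⟨y, hyO, hy⟩ := exists_notMem_null_integral_le hint.integral_prod_right hOc
  exact ⟨y, not_not.mp hyO, hle.trans hy⟩

lemma measurable_integral_one_sub_cos_mul (Λ : Measure ℝ) [SFinite Λ] :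
    Measurable fun x => ∫ y, (1 - Real.cos (x * y)) ∂Λ := by
  have hjoint : Measurable fun p : ℝ × ℝ => 1 - Real.cos (p.1 * p.2) := by fun_prop
  exact hjoint.stronglyMeasurable.integral_prod_right.measurable

-- Each step trades a fraction `1 / r` of the exponent for one more cosine factor.
lemma exists_dissociated_le_integral {Λ : Measure ℝ} [IsFiniteMeasure Λ] {r : ℕ}
    (h : ∀ k < r, ∀ u, r ≤ Λ.real (farFromLattice u k)) {k : ℕ} (hk : k ≤ r) :
    ∃ u : ℕ → ℝ, (∀ j < k, u j ∈ farFromLattice u j) ∧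
      ∫ x, Real.exp (-∫ y, (1 - Real.cos (x * y)) ∂Λ) ∂gaussianReal 0 1 ≤
      ∫ x, Real.exp (-((1 - k / r) * ∫ y, (1 - Real.cos (x * y)) ∂Λ)) *
        ∏ j : Fin k, (3 / 5 + 2 / 5 * Real.cos (x * u j)) ∂gaussianReal 0 1 := by
  obtain ⟨ψ, hψdef⟩ : ∃ ψ : ℝ → ℝ, ∀ x, ∫ y, (1 - Real.cos (x * y)) ∂Λ = ψ x := ⟨_, fun _ => rfl⟩
  have hψ0 (x : ℝ) : 0 ≤ ψ x :=
    hψdef x ▸ integral_nonneg fun y => sub_nonneg.mpr (Real.cos_le_one _)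
  have hψ : Measurable ψ := funext hψdef ▸ measurable_integral_one_sub_cos_mul Λ
  simp_rw [hψdef]
  induction k with
  | zero => exact ⟨0, by simp, by simp⟩
  | succ k ih =>
    obtain ⟨u, hu, hle⟩ := ih (by lia)
    have hr0 : (0 : ℝ) < r := by exact_mod_cast (by lia : 0 < r)
    have hk1 : 0 ≤ 1 - ((k + 1 : ℕ) : ℝ) / r :=
      sub_nonneg.mpr ((div_le_one hr0).mpr (by exact_mod_cast hk))
    have hfac0 (x y : ℝ) : 0 ≤ 3 / 5 + 2 / 5 * Real.cos (x * y) := by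
      linarith [Real.neg_one_le_cos (x * y)]
    have hfac1 (x y : ℝ) : 3 / 5 + 2 / 5 * Real.cos (x * y) ≤ 1 := by
      linarith [Real.cos_le_one (x * y)]
    set w : ℝ → ℝ := fun x => Real.exp (-((1 - (k + 1 : ℕ) / r) * ψ x)) *
      ∏ j : Fin k, (3 / 5 + 2 / 5 * Real.cos (x * u j)) with hw
    obtain ⟨y, hyO, hy⟩ := exists_mem_le_integral_mul_cos (γ := gaussianReal 0 1)
      (measurableSet_farFromLattice u k) hr0 (h k (by lia) u) (w := w) (by fun_prop)
      (fun x => mul_nonneg (Real.exp_pos _).le (Finset.prod_nonneg fun j _ => hfac0 x _))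
      (fun x => mul_le_one₀
        (Real.exp_le_one_iff.mpr (neg_nonpos.mpr (mul_nonneg hk1 (hψ0 x))))
        (Finset.prod_nonneg fun j _ => hfac0 x _)
        (Finset.prod_le_one (fun j _ => hfac0 x _) fun j _ => hfac1 x _))
    simp_rw [hψdef] at hy
    have hupd {j : ℕ} (hj : j < k) : Function.update u k y j = u j :=
      Function.update_of_ne hj.ne _ _
    refine ⟨Function.update u k y, fun j hj => ?_, ?_⟩
    · rcases Nat.lt_succ_iff_lt_or_eq.mp hj with hj | rfl
      · rw [hupd hj, farFromLattice_congr fun i hi => hupd (hi.trans hj)]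
        exact hu j hj
      · rw [Function.update_self, farFromLattice_congr fun i hi => hupd hi]
        exact hyO
    · calc _ ≤ _ := hle
        _ = ∫ x, w x * Real.exp (-(ψ x / r)) ∂gaussianReal 0 1 := by
          congr with x
          rw [hw, mul_right_comm, ← Real.exp_add]
          push_cast
          ring_nf
        _ ≤ _ := hy
        _ = _ := by
          congr with x
          rw [Fin.prod_univ_castSucc, hw]
          simp only [Fin.val_castSucc, Fin.val_last, Function.update_self, hupd (Fin.is_lt _),
            mul_assoc]

lemma exists_measureReal_farFromLattice_lt {Λ : Measure ℝ} [IsFiniteMeasure Λ] {q : ℝ} {r : ℕ}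
    (hr : 0 < r) (hq : 18 * (3 / 5) ^ r < q)
    (h : q ≤ ∫ x, Real.exp (-∫ y, (1 - Real.cos (x * y)) ∂Λ) ∂gaussianReal 0 1) :
    ∃ k < r, ∃ u : ℕ → ℝ, Λ.real (farFromLattice u k) < r := by
  by_contra! hfar
  obtain ⟨u, hu, hle⟩ := exists_dissociated_le_integral hfar le_rfl
  rw [div_self (by exact_mod_cast hr.ne')] at hle
  simp only [sub_self, zero_mul, neg_zero, Real.exp_zero, one_mul] at hle
  exact (h.trans (hle.trans (integral_prod_cos_gaussianReal_le hu))).not_gt hq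

end Dissociation

section ConvolutionPowers

variable {E : Type*} [MeasurableSpace E] [AddMonoid E] [MeasurableAdd₂ E]

instance isFiniteMeasure_convPow (μ : Measure E) [IsFiniteMeasure μ] (N : ℕ) :
    IsFiniteMeasure (convPow μ N) := by
  induction N with
  | zero => unfold convPow; infer_instance
  | succ N ih => unfold convPow mconv; infer_instance

lemma lintegral_convPow_succ (μ : Measure E) [IsFiniteMeasure μ] (N : ℕ) {f : E → ℝ≥0∞}
    (hf : Measurable f) :
    ∫⁻ x, f x ∂convPow μ (N + 1) = ∫⁻ x, ∫⁻ y, f (x + y) ∂μ ∂convPow μ N := by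
  rw [convPow, mconv, lintegral_map hf measurable_add, lintegral_prod _ (by fun_prop)]

lemma convPow_univ (μ : Measure E) [IsFiniteMeasure μ] (N : ℕ) :
    convPow μ N Set.univ = μ Set.univ ^ N := by
  induction N with
  | zero => simp [convPow]
  | succ N ih =>
    have hmass := lintegral_convPow_succ μ N (f := fun _ => 1) measurable_const
    simp only [lintegral_const, one_mul] at hmass
    rw [hmass, ih, pow_succ']

instance isProbabilityMeasure_convPow (μ : Measure E) [IsProbabilityMeasure μ] (N : ℕ) :
    IsProbabilityMeasure (convPow μ N) :=
  ⟨by rw [convPow_univ, measure_univ, one_pow]⟩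

end ConvolutionPowers

section LatticePotential

/-- The half-integer combination of `u 0, …, u (k - 1)` with coefficients `a j / 2`. Every point
outside `farFromLattice u k` is close to one of these with small coefficients. -/
noncomputable def halfComb (u : ℕ → ℝ) {k : ℕ} (a : Fin k → ℤ) : ℝ :=
  1 / 2 * ∑ j, (a j : ℝ) * u j

lemma halfComb_zero (u : ℕ → ℝ) {k : ℕ} : halfComb u (0 : Fin k → ℤ) = 0 := by
  simp [halfComb]

lemma halfComb_add (u : ℕ → ℝ) {k : ℕ} (a b : Fin k → ℤ) :
    halfComb u (a + b) = halfComb u a + halfComb u b := by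
  simp only [halfComb, Pi.add_apply, Int.cast_add, add_mul, Finset.sum_add_distrib, mul_add]

lemma halfComb_neg (u : ℕ → ℝ) {k : ℕ} (a : Fin k → ℤ) : halfComb u (-a) = -halfComb u a := by
  simp [halfComb]

/-- The exponential cost of reaching `s` by moving to the centre `halfComb u a` and then along
the line. -/
noncomputable def coshCost (u : ℕ → ℝ) {k : ℕ} (a : Fin k → ℤ) (s : ℝ) : ℝ :=
  Real.exp ‖a‖ * Real.cosh (s - halfComb u a)

/-- The cheapest cost of reaching `s`. This is a Lyapunov function for random walks whose steps
avoid `farFromLattice u k`. -/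
noncomputable def latticePotential (u : ℕ → ℝ) (k : ℕ) (s : ℝ) : ℝ≥0∞ :=
  ⨅ a : Fin k → ℤ, ENNReal.ofReal (coshCost u a s)

lemma coshCost_pos (u : ℕ → ℝ) {k : ℕ} (a : Fin k → ℤ) (s : ℝ) : 0 < coshCost u a s :=
  mul_pos (Real.exp_pos _) (Real.cosh_pos _)

lemma latticePotential_le (u : ℕ → ℝ) {k : ℕ} (a : Fin k → ℤ) (s : ℝ) :
    latticePotential u k s ≤ ENNReal.ofReal (coshCost u a s) :=
  iInf_le _ a

lemma measurable_latticePotential (u : ℕ → ℝ) (k : ℕ) : Measurable (latticePotential u k) := by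
  unfold latticePotential coshCost
  exact .iInf fun a => by fun_prop

lemma cosh_add_le_mul_exp (s t : ℝ) : Real.cosh (s + t) ≤ Real.cosh s * Real.exp |t| := by
  calc Real.cosh (s + t) = (Real.exp s * Real.exp t + Real.exp (-s) * Real.exp (-t)) / 2 := by
        rw [Real.cosh_eq, neg_add, Real.exp_add, Real.exp_add]
    _ ≤ (Real.exp s * Real.exp |t| + Real.exp (-s) * Real.exp |t|) / 2 := by
        gcongr
        · exact le_abs_self t
        · exact neg_le_abs t
    _ = Real.cosh s * Real.exp |t| := by rw [Real.cosh_eq]; ring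

lemma cosh_le_one_add_sq {y : ℝ} (h : y ^ 2 ≤ 1) : Real.cosh y ≤ 1 + y ^ 2 := by
  have hexp := Real.abs_exp_sub_one_le (x := y ^ 2 / 2)
    (by rw [abs_of_nonneg (by positivity)]; linarith)
  rw [abs_of_nonneg (by positivity : 0 ≤ y ^ 2 / 2)] at hexp
  linarith [le_of_abs_le hexp, Real.cosh_le_exp_half_sq y]

lemma exists_abs_sub_halfComb_le {u : ℕ → ℝ} {k : ℕ} {y : ℝ} (hy : y ∉ farFromLattice u k) :
    ∃ b : Fin k → ℤ, ‖b‖ ≤ 4 ∧ |y - halfComb u b| ≤ 1 := by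
  have hnear : ∃ a : Fin k → ℤ, (∀ j, |a j| ≤ 2) ∧
      (1 < |y - ∑ j, (a j : ℝ) * u j| → |2 * y - ∑ j, (a j : ℝ) * u j| ≤ 1) := by
    simpa [farFromLattice] using hy
  obtain ⟨a, ha2, ha⟩ := hnear
  have hnorm : ‖a‖ ≤ 2 := (pi_norm_le_iff_of_nonneg zero_le_two).mpr fun j => by
    rw [Int.norm_eq_abs]
    exact_mod_cast ha2 j
  rcases le_or_gt |y - ∑ j, (a j : ℝ) * u j| 1 with hclose | hfar
  · refine ⟨a + a, by linarith [norm_add_le a a], ?_⟩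
    rwa [halfComb_add, ← two_mul, halfComb, one_div, mul_inv_cancel_left₀ two_ne_zero]
  · refine ⟨a, by linarith, ?_⟩
    have hhalf : y - halfComb u a = 1 / 2 * (2 * y - ∑ j, (a j : ℝ) * u j) := by
      rw [halfComb]; ring
    rw [hhalf, abs_mul, abs_of_pos one_half_pos]
    linarith [ha hfar]

lemma latticePotential_add_le {u : ℕ → ℝ} {k : ℕ} (a b : Fin k → ℤ) {x y : ℝ} (hb : ‖b‖ ≤ 4)
    (hy : |y - halfComb u b| ≤ 1) :
    latticePotential u k (x + y) ≤ ENNReal.ofReal (coshCost u a x * Real.exp 5) := by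
  refine (latticePotential_le u (a + b) _).trans (ENNReal.ofReal_le_ofReal ?_)
  calc coshCost u (a + b) (x + y)
      = Real.exp ‖a + b‖ * Real.cosh ((x - halfComb u a) + (y - halfComb u b)) := by
        rw [coshCost, halfComb_add, add_sub_add_comm]
    _ ≤ Real.exp (‖a‖ + 4) * (Real.cosh (x - halfComb u a) * Real.exp 1) := by
        have := Real.cosh_pos (x - halfComb u a)
        gcongr
        · exact (norm_add_le a b).trans (by gcongr)
        · exact (cosh_add_le_mul_exp _ _).trans (by gcongr)
    _ = coshCost u a x * Real.exp 5 := by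
        rw [coshCost, Real.exp_add, show (5 : ℝ) = 4 + 1 by norm_num, Real.exp_add]
        ring

lemma coshCost_add_add_coshCost_sub (u : ℕ → ℝ) {k : ℕ} (a : Fin k → ℤ) (x y : ℝ) :
    coshCost u a (x + y) + coshCost u a (x - y) = 2 * coshCost u a x * Real.cosh y := by
  simp only [coshCost, add_sub_right_comm x y, sub_right_comm x y, Real.cosh_add, Real.cosh_sub]
  ring

lemma latticePotential_add_add_sub_le {u : ℕ → ℝ} {k : ℕ} {y : ℝ}
    (hy : y ∉ farFromLattice u k) (a : Fin k → ℤ) (x : ℝ) :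
    latticePotential u k (x + y) + latticePotential u k (x - y) ≤
      ENNReal.ofReal (2 * coshCost u a x * (1 + Real.exp 5 * min (y ^ 2) 1)) := by
  have hexp : 1 ≤ Real.exp 5 := Real.one_le_exp (by norm_num)
  have hpos := coshCost_pos u a x
  rcases le_or_gt (y ^ 2) 1 with hsmall | hlarge
  · refine (add_le_add (latticePotential_le u a _) (latticePotential_le u a _)).trans ?_
    rw [← ENNReal.ofReal_add (coshCost_pos _ _ _).le (coshCost_pos _ _ _).le,
      coshCost_add_add_coshCost_sub, min_eq_left hsmall]
    gcongr
    refine (cosh_le_one_add_sq hsmall).trans ?_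
    gcongr
    exact le_mul_of_one_le_left (sq_nonneg y) hexp
  · obtain ⟨b, hb, hyb⟩ := exists_abs_sub_halfComb_le hy
    have hneg : latticePotential u k (x - y) ≤ ENNReal.ofReal (coshCost u a x * Real.exp 5) := by
      refine sub_eq_add_neg x y ▸ latticePotential_add_le a (-b) (by rwa [norm_neg]) ?_
      rwa [halfComb_neg, ← neg_sub', abs_neg]
    refine (add_le_add (latticePotential_add_le a b hb hyb) hneg).trans ?_
    rw [← ENNReal.ofReal_add (by positivity) (by positivity), min_eq_right hlarge.le]
    exact ENNReal.ofReal_le_ofReal (by linarith)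

lemma exists_norm_lt_of_latticePotential_lt {u : ℕ → ℝ} {k : ℕ} {s R : ℝ}
    (h : latticePotential u k s < ENNReal.ofReal (Real.exp R)) :
    ∃ a : Fin k → ℤ, ‖a‖ < R ∧ |s - halfComb u a| < R + 1 := by
  obtain ⟨a, ha⟩ := iInf_lt_iff.mp h
  have hcost : Real.exp ‖a‖ * Real.cosh (s - halfComb u a) < Real.exp R :=
    (ENNReal.ofReal_lt_ofReal_iff (Real.exp_pos _)).mp ha
  refine ⟨a, Real.exp_lt_exp.mp ?_, Real.exp_lt_exp.mp ?_⟩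
  · exact (le_mul_of_one_le_right (Real.exp_pos _).le (Real.one_le_cosh _)).trans_lt hcost
  · have hcosh : Real.cosh (s - halfComb u a) < Real.exp R :=
      (le_mul_of_one_le_left (Real.cosh_pos _).le (Real.one_le_exp (norm_nonneg a))).trans_lt hcost
    calc Real.exp |s - halfComb u a| ≤ 2 * Real.cosh (s - halfComb u a) := by
          rw [← Real.cosh_abs, Real.cosh_eq]
          linarith [Real.exp_pos (-|s - halfComb u a|)]
      _ < Real.exp R * 2 := by linarith
      _ ≤ Real.exp (R + 1) := by
          rw [Real.exp_add]
          gcongr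
          linarith [Real.add_one_le_exp 1]

variable {E : Type*} [NormedAddCommGroup E] [NormedSpace ℝ E] [MeasurableSpace E] [BorelSpace E]
  {u : ℕ → ℝ} {k : ℕ} {μ : Measure E} [IsFiniteMeasure μ] {s : E →L[ℝ] ℝ} {W : ℝ}

lemma integral_one_add_mul_min_sq_le (hμ1 : μ.real Set.univ ≤ 1)
    (hW : ∫ y, min ((s y) ^ 2) 1 ∂μ ≤ W) {b : ℝ} (hb : 0 ≤ b) :
    ∫ y, (1 + b * min ((s y) ^ 2) 1) ∂μ ≤ 1 + b * W := by
  have hmin : Integrable (fun y => min ((s y) ^ 2) 1) μ :=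
    integrable_of_abs_le (by fun_prop) (C := 1) fun y =>
      (abs_of_nonneg (le_min (sq_nonneg _) zero_le_one)).trans_le (min_le_right _ _)
  rw [integral_add (integrable_const _) (hmin.const_mul _), integral_const_mul, integral_const,
    smul_eq_mul, mul_one]
  gcongr

-- Symmetry pairs the steps `y` and `-y`, so that only the second-order increment survives.
lemma lintegral_latticePotential_add_le (hμ1 : μ.real Set.univ ≤ 1) (hsym : μ.map (fun x => -x) = μ)
    (hnear : ∀ᵐ y ∂μ, s y ∉ farFromLattice u k) (hW : ∫ y, min ((s y) ^ 2) 1 ∂μ ≤ W) (x : ℝ) :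
    ∫⁻ y, latticePotential u k (x + s y) ∂μ ≤
      ENNReal.ofReal (1 + Real.exp 5 * W) * latticePotential u k x := by
  have := measurable_latticePotential u k
  have hW0 : 0 ≤ W := (integral_nonneg fun y => le_min (sq_nonneg _) zero_le_one).trans hW
  have hflip : ∫⁻ y, latticePotential u k (x + s y) ∂μ =
      ∫⁻ y, latticePotential u k (x - s y) ∂μ := by
    conv_lhs => rw [← hsym]
    rw [lintegral_map (by fun_prop) (by fun_prop)]
    simp only [map_neg, sub_eq_add_neg]
  conv_rhs => rw [latticePotential,
    ENNReal.mul_iInf_of_ne (ENNReal.ofReal_pos.mpr (by positivity)).ne' ENNReal.ofReal_ne_top]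
  refine le_iInf fun a => (ENNReal.mul_le_mul_iff_right two_ne_zero ENNReal.ofNat_ne_top).mp ?_
  have hpos := coshCost_pos u a x
  calc 2 * ∫⁻ y, latticePotential u k (x + s y) ∂μ
      = ∫⁻ y, (latticePotential u k (x + s y) + latticePotential u k (x - s y)) ∂μ := by
        rw [lintegral_add_left (by fun_prop), ← hflip, two_mul]
    _ ≤ ∫⁻ y, ENNReal.ofReal (2 * coshCost u a x * (1 + Real.exp 5 * min ((s y) ^ 2) 1)) ∂μ :=
        lintegral_mono_ae (hnear.mono fun y hy => latticePotential_add_add_sub_le hy a x)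
    _ = ENNReal.ofReal (2 * coshCost u a x * ∫ y, (1 + Real.exp 5 * min ((s y) ^ 2) 1) ∂μ) := by
        rw [← integral_const_mul, ofReal_integral_eq_lintegral_ofReal]
        · refine integrable_of_abs_le (by fun_prop)
            (C := 2 * coshCost u a x * (1 + Real.exp 5 * 1)) fun y => ?_
          rw [abs_of_nonneg (by positivity)]
          gcongr
          exact min_le_right _ _
        · exact .of_forall fun y => by positivity
    _ ≤ ENNReal.ofReal (2 * coshCost u a x * (1 + Real.exp 5 * W)) := by
        gcongr
        exact integral_one_add_mul_min_sq_le hμ1 hW (Real.exp_pos 5).le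
    _ = 2 * (ENNReal.ofReal (1 + Real.exp 5 * W) * ENNReal.ofReal (coshCost u a x)) := by
        rw [← ENNReal.ofReal_mul (by positivity), ← ENNReal.ofReal_ofNat 2,
          ← ENNReal.ofReal_mul zero_le_two]
        ring_nf

variable [SecondCountableTopology E]

lemma lintegral_latticePotential_convPow_le (hμ1 : μ.real Set.univ ≤ 1)
    (hsym : μ.map (fun x => -x) = μ) (hnear : ∀ᵐ y ∂μ, s y ∉ farFromLattice u k)
    (hW : ∫ y, min ((s y) ^ 2) 1 ∂μ ≤ W) (N : ℕ) :
    ∫⁻ x, latticePotential u k (s x) ∂convPow μ N ≤ ENNReal.ofReal (1 + Real.exp 5 * W) ^ N := by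
  have := measurable_latticePotential u k
  induction N with
  | zero =>
    rw [convPow, lintegral_dirac' _ (by fun_prop), pow_zero, map_zero]
    exact (latticePotential_le u 0 0).trans (by simp [coshCost, halfComb_zero])
  | succ N ih =>
    rw [lintegral_convPow_succ μ N (by fun_prop)]
    simp only [map_add]
    calc ∫⁻ x, ∫⁻ y, latticePotential u k (s x + s y) ∂μ ∂convPow μ N
        ≤ ∫⁻ x, ENNReal.ofReal (1 + Real.exp 5 * W) * latticePotential u k (s x) ∂convPow μ N :=
          lintegral_mono fun x => lintegral_latticePotential_add_le hμ1 hsym hnear hW (s x)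
      _ ≤ ENNReal.ofReal (1 + Real.exp 5 * W) ^ (N + 1) := by
          rw [lintegral_const_mul _ (by fun_prop), pow_succ']
          gcongr

lemma measureReal_latticePotential_ge_le (hμ1 : μ.real Set.univ ≤ 1)
    (hsym : μ.map (fun x => -x) = μ) (hnear : ∀ᵐ y ∂μ, s y ∉ farFromLattice u k)
    (hW : ∫ y, min ((s y) ^ 2) 1 ∂μ ≤ W) (N : ℕ) (R : ℝ) :
    (convPow μ N).real {x | ENNReal.ofReal (Real.exp R) ≤ latticePotential u k (s x)} ≤
      Real.exp (N * (Real.exp 5 * W) - R) := by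
  have := measurable_latticePotential u k
  have hW0 : 0 ≤ W := (integral_nonneg fun y => le_min (sq_nonneg _) zero_le_one).trans hW
  have hmarkov := (mul_meas_ge_le_lintegral (μ := convPow μ N)
    (f := fun x => latticePotential u k (s x)) (by fun_prop) (ENNReal.ofReal (Real.exp R))).trans
    (lintegral_latticePotential_convPow_le hμ1 hsym hnear hW N)
  rw [← ENNReal.ofReal_pow (by positivity)] at hmarkov
  replace hmarkov := ENNReal.toReal_mono ENNReal.ofReal_ne_top hmarkov
  rw [ENNReal.toReal_mul, ENNReal.toReal_ofReal (Real.exp_pos _).le,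
    ENNReal.toReal_ofReal (by positivity)] at hmarkov
  rw [measureReal_def, Real.exp_sub, le_div_iff₀' (Real.exp_pos _), Real.exp_nat_mul]
  refine hmarkov.trans ?_
  gcongr
  linarith [Real.add_one_le_exp (Real.exp 5 * W)]

end LatticePotential

section SmoothCutoff

/-- A smooth version of the indicator function of `(-∞, 0]`, which vanishes on `[1, ∞)`. -/
noncomputable def smoothCutoff (y : ℝ) : ℝ :=
  1 - Real.smoothTransition y

/-- A smooth bump supported in `[-1, 1]` whose translates by natural numbers sum to
`smoothCutoff`. -/
noncomputable def unitBump (y : ℝ) : ℝ :=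
  Real.smoothTransition (y + 1) - Real.smoothTransition y

lemma smoothCutoff_nonneg (y : ℝ) : 0 ≤ smoothCutoff y :=
  sub_nonneg.mpr (Real.smoothTransition.le_one y)

lemma smoothCutoff_le_one (y : ℝ) : smoothCutoff y ≤ 1 :=
  sub_le_self 1 (Real.smoothTransition.nonneg y)

lemma smoothCutoff_of_nonpos {y : ℝ} (h : y ≤ 0) : smoothCutoff y = 1 := by
  rw [smoothCutoff, Real.smoothTransition.zero_of_nonpos h, sub_zero]

lemma smoothCutoff_of_one_le {y : ℝ} (h : 1 ≤ y) : smoothCutoff y = 0 := by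
  rw [smoothCutoff, Real.smoothTransition.one_of_one_le h, sub_self]

lemma continuous_smoothCutoff : Continuous smoothCutoff :=
  continuous_const.sub Real.smoothTransition.continuous

lemma unitBump_nonneg (y : ℝ) : 0 ≤ unitBump y :=
  sub_nonneg.mpr (Real.smoothTransition.monotone (by linarith))

lemma unitBump_of_one_le_abs {y : ℝ} (h : 1 ≤ |y|) : unitBump y = 0 := by
  rcases le_abs'.mp h with hy | hy
  · rw [unitBump, Real.smoothTransition.zero_of_nonpos (by linarith),
      Real.smoothTransition.zero_of_nonpos (by linarith), sub_self]
  · rw [unitBump, Real.smoothTransition.one_of_one_le (by linarith),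
      Real.smoothTransition.one_of_one_le hy, sub_self]

lemma contDiff_unitBump {n : ℕ∞} : ContDiff ℝ n unitBump :=
  (Real.smoothTransition.contDiff.comp (contDiff_id.add contDiff_const)).sub
    Real.smoothTransition.contDiff

lemma continuous_unitBump : Continuous unitBump :=
  (contDiff_unitBump (n := 0)).continuous

lemma sum_range_unitBump (y : ℝ) (m : ℕ) : ∑ k ∈ Finset.range m, unitBump (y + k) =
    Real.smoothTransition (y + m) - Real.smoothTransition y := by
  simpa [unitBump, add_assoc] using
    Finset.sum_range_sub (fun k : ℕ => Real.smoothTransition (y + k)) m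

lemma sum_unitBump_le_smoothCutoff (y : ℝ) (K : Finset ℕ) :
    ∑ k ∈ K, unitBump (y + k) ≤ smoothCutoff y := by
  obtain ⟨m, hm⟩ := K.exists_nat_subset_range
  calc ∑ k ∈ K, unitBump (y + k) ≤ ∑ k ∈ Finset.range m, unitBump (y + k) :=
        Finset.sum_le_sum_of_subset_of_nonneg hm fun k _ _ => unitBump_nonneg _
    _ = Real.smoothTransition (y + m) - Real.smoothTransition y := sum_range_unitBump y m
    _ ≤ smoothCutoff y := sub_le_sub_right (Real.smoothTransition.le_one _) _

lemma sum_unitBump_eq_smoothCutoff {y : ℝ} {K : Finset ℕ} (h : ∀ k : ℕ, |y + k| < 1 → k ∈ K) :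
    ∑ k ∈ K, unitBump (y + k) = smoothCutoff y := by
  obtain ⟨m, hm⟩ := K.exists_nat_subset_range
  obtain ⟨m', hm'⟩ := exists_nat_ge (1 - y)
  have hsub : K ⊆ Finset.range (max m m') :=
    hm.trans (Finset.range_subset_range.mpr (le_max_left _ _))
  have hlarge : 1 ≤ y + (max m m' : ℕ) := by
    have : (m' : ℝ) ≤ (max m m' : ℕ) := by exact_mod_cast le_max_right m m'
    linarith
  rw [Finset.sum_subset hsub fun k _ hk =>
      unitBump_of_one_le_abs (not_lt.mp fun hlt => hk (h k hlt)),
    sum_range_unitBump, Real.smoothTransition.one_of_one_le hlarge, smoothCutoff]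

end SmoothCutoff

section FourierRepresentation
open scoped FourierTransform SchwartzMap

/-- `unitBump` as a complex Schwartz function, the form in which Mathlib provides Fourier
inversion. -/
noncomputable def unitBumpSchwartz : 𝓢(ℝ, ℂ) :=
  HasCompactSupport.toSchwartzMap (f := fun y => (unitBump y : ℂ))
    (.of_support_subset_isCompact (isCompact_Icc (a := -1) (b := 1)) fun y hy => by
      by_contra hy'
      rw [Set.mem_Icc, ← abs_le, not_le] at hy'
      exact hy (by simp [unitBump_of_one_le_abs hy'.le]))
    (Complex.ofRealCLM.contDiff.comp contDiff_unitBump)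

lemma schwartz_eq_integral_fourier (f : 𝓢(ℝ, ℂ)) (y : ℝ) :
    f y = ∫ ξ, Complex.exp ((2 * Real.pi * ξ * y : ℝ) * Complex.I) * 𝓕 f ξ := by
  conv_lhs => rw [← FourierTransform.fourierInv_fourier_eq (F := 𝓢(ℝ, ℂ)) f]
  rw [SchwartzMap.fourierInv_coe, Real.fourierInv_eq']
  congr with ξ
  rw [smul_eq_mul, RCLike.inner_apply, conj_trivial, mul_comm y, ← mul_assoc]

section FourierWeight

variable {ι : Type*} [Fintype ι]

/-- The Fourier transform at `ξ` of the function `y ↦ ∏ i, f (y i + w i)` on `ℝ^ι`. -/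
noncomputable def prodFourier (f : 𝓢(ℝ, ℂ)) (w ξ : ι → ℝ) : ℂ :=
  ∏ i, Complex.exp ((2 * Real.pi * ξ i * w i : ℝ) * Complex.I) * 𝓕 f (ξ i)

lemma norm_prodFourier (f : 𝓢(ℝ, ℂ)) (w ξ : ι → ℝ) : ‖prodFourier f w ξ‖ = ∏ i, ‖𝓕 f (ξ i)‖ := by
  simp_rw [prodFourier, norm_prod, norm_mul, Complex.norm_exp_ofReal_mul_I, one_mul]

lemma continuous_prodFourier (f : 𝓢(ℝ, ℂ)) (w : ι → ℝ) : Continuous (prodFourier f w) := by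
  have := (𝓕 f).continuous
  unfold prodFourier
  fun_prop

lemma integrable_prod_norm_fourier (ι : Type*) [Fintype ι] (f : 𝓢(ℝ, ℂ)) :
    Integrable fun ξ : ι → ℝ => ∏ i, ‖𝓕 f (ξ i)‖ :=
  .fintype_prod (f := fun _ ξ => ‖𝓕 f ξ‖) fun _ => (𝓕 f).integrable.norm

end FourierWeight

variable {ι : Type*} [Fintype ι] {E : Type*} [NormedAddCommGroup E] [NormedSpace ℝ E]

/-- The functional `x ↦ 2π ∑ i, ξ i * s i x` on `E` dual to the frequency `ξ`. -/
noncomputable def freqFunctional (s : ι → E →L[ℝ] ℝ) (ξ : ι → ℝ) : E →L[ℝ] ℝ :=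
  ∑ i, (2 * Real.pi * ξ i) • s i

lemma freqFunctional_apply (s : ι → E →L[ℝ] ℝ) (ξ : ι → ℝ) (x : E) :
    freqFunctional s ξ x = ∑ i, 2 * Real.pi * ξ i * s i x := by
  simp [freqFunctional]

lemma prod_schwartz_eq_integral (f : 𝓢(ℝ, ℂ)) (s : ι → E →L[ℝ] ℝ) (w : ι → ℝ) (x : E) :
    ∏ i, f (s i x + w i) =
      ∫ ξ, prodFourier f w ξ * Complex.exp (freqFunctional s ξ x * Complex.I) := by
  simp_rw [schwartz_eq_integral_fourier f]
  rw [← integral_fintype_prod_volume_eq_prod fun i ξ =>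
    Complex.exp ((2 * Real.pi * ξ * (s i x + w i) : ℝ) * Complex.I) * 𝓕 f ξ]
  congr with ξ
  rw [prodFourier, freqFunctional_apply, Complex.ofReal_sum, Finset.sum_mul, Complex.exp_sum,
    ← Finset.prod_mul_distrib]
  refine Finset.prod_congr rfl fun i _ => ?_
  rw [mul_right_comm (Complex.exp _), ← Complex.exp_add, ← add_mul, ← Complex.ofReal_add,
    mul_add, add_comm]

variable [MeasurableSpace E]

lemma integral_prodFourier_mul_exp (ν : Measure E) (f : 𝓢(ℝ, ℂ)) (s : ι → E →L[ℝ] ℝ)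
    (w ξ : ι → ℝ) :
    ∫ x, prodFourier f w ξ * Complex.exp (freqFunctional s ξ x * Complex.I) ∂ν =
      prodFourier f w ξ * charFunDual ν (freqFunctional s ξ) := by
  rw [integral_const_mul, charFunDual_apply]

variable [BorelSpace E]

lemma integrable_prodFourier_mul_exp (ν : Measure E) [IsFiniteMeasure ν] (f : 𝓢(ℝ, ℂ))
    (s : ι → E →L[ℝ] ℝ) (w : ι → ℝ) :
    Integrable (Function.uncurry fun (x : E) (ξ : ι → ℝ) =>
      prodFourier f w ξ * Complex.exp (freqFunctional s ξ x * Complex.I)) (ν.prod volume) := by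
  have := continuous_prodFourier f w
  have hbound : Integrable (fun p : E × (ι → ℝ) => (1 : ℝ) * ∏ i, ‖𝓕 f (p.2 i)‖)
      (ν.prod volume) :=
    (integrable_const (1 : ℝ)).mul_prod (integrable_prod_norm_fourier ι f)
  refine hbound.mono' (Continuous.aestronglyMeasurable ?_) (.of_forall fun p => ?_)
  · simp only [Function.uncurry_def, freqFunctional_apply]
    fun_prop
  · rw [Function.uncurry, norm_mul, Complex.norm_exp_ofReal_mul_I, norm_prodFourier, mul_one,
      one_mul]

lemma integrable_prodFourier_mul_charFunDual (ν : Measure E) [IsFiniteMeasure ν] (f : 𝓢(ℝ, ℂ))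
    (s : ι → E →L[ℝ] ℝ) (w : ι → ℝ) :
    Integrable fun ξ => prodFourier f w ξ * charFunDual ν (freqFunctional s ξ) := by
  simpa only [Function.uncurry, integral_prodFourier_mul_exp] using
    (integrable_prodFourier_mul_exp ν f s w).integral_prod_right

lemma integral_prod_schwartz_eq (ν : Measure E) [IsFiniteMeasure ν] (f : 𝓢(ℝ, ℂ))
    (s : ι → E →L[ℝ] ℝ) (w : ι → ℝ) :
    ∫ x, ∏ i, f (s i x + w i) ∂ν =
      ∫ ξ, prodFourier f w ξ * charFunDual ν (freqFunctional s ξ) := by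
  simp_rw [prod_schwartz_eq_integral]
  rw [integral_integral_swap (integrable_prodFourier_mul_exp ν f s w)]
  simp_rw [integral_prodFourier_mul_exp]

end FourierRepresentation

section ConvolutionPowerApproximation
open scoped FourierTransform

lemma abs_integral_le_of_abs_le_one {X : Type*} [MeasurableSpace X] {μ : Measure X}
    [IsFiniteMeasure μ] {f : X → ℝ} (hf : ∀ x, |f x| ≤ 1) : |∫ x, f x ∂μ| ≤ μ.real Set.univ := by
  simpa [Real.norm_eq_abs] using norm_integral_le_of_norm_le_const (f := f) (.of_forall hf)

variable {E : Type*} [NormedAddCommGroup E] [NormedSpace ℝ E] [MeasurableSpace E] [BorelSpace E]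

lemma charFunDual_eq_integral_cos {μ : Measure E} [IsFiniteMeasure μ]
    (hsym : μ.map (fun x => -x) = μ) (φ : E →L[ℝ] ℝ) :
    charFunDual μ φ = (∫ x, Real.cos (φ x) ∂μ : ℝ) := by
  have hcos : Integrable (fun x => Real.cos (φ x)) μ :=
    integrable_of_abs_le (by fun_prop) fun x => Real.abs_cos_le_one _
  have hsin : Integrable (fun x => Real.sin (φ x)) μ :=
    integrable_of_abs_le (by fun_prop) fun x => Real.abs_sin_le_one _
  have hodd : ∫ x, Real.sin (φ x) ∂μ = 0 := by
    refine self_eq_neg.mp ?_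
    conv_lhs => rw [← hsym]
    rw [integral_map (by fun_prop) (by fun_prop)]
    simp only [map_neg, Real.sin_neg, integral_neg]
  simp_rw [charFunDual_apply, Complex.exp_mul_I, ← Complex.ofReal_cos, ← Complex.ofReal_sin]
  rw [integral_add hcos.ofReal (hsin.ofReal.mul_const _), integral_mul_const,
    integral_complex_ofReal, integral_complex_ofReal, hodd, Complex.ofReal_zero, zero_mul, add_zero]

variable [SecondCountableTopology E]

lemma charFunDual_convPow (μ : Measure E) [IsFiniteMeasure μ] (N : ℕ) (φ : E →L[ℝ] ℝ) :
    charFunDual (convPow μ N) φ = charFunDual μ φ ^ N := by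
  induction N with
  | zero => simp [convPow, charFunDual_dirac]
  | succ N ih =>
    rw [pow_succ, ← ih]
    exact charFunDual_conv φ

variable {ι : Type*} [Fintype ι]

lemma integral_prod_unitBump_convPow {μ : Measure E} [IsFiniteMeasure μ]
    (hsym : μ.map (fun x => -x) = μ) (s : ι → E →L[ℝ] ℝ) (w : ι → ℝ) (N : ℕ) :
    Integrable (fun ξ => (prodFourier unitBumpSchwartz w ξ).re *
      (∫ x, Real.cos (freqFunctional s ξ x) ∂μ) ^ N) ∧
    ∫ x, ∏ i, unitBump (s i x + w i) ∂convPow μ N =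
      ∫ ξ, (prodFourier unitBumpSchwartz w ξ).re *
        (∫ x, Real.cos (freqFunctional s ξ x) ∂μ) ^ N := by
  have hint := integrable_prodFourier_mul_charFunDual (convPow μ N) unitBumpSchwartz s w
  have hrep := integral_prod_schwartz_eq (convPow μ N) unitBumpSchwartz s w
  have hre (ξ : ι → ℝ) : (prodFourier unitBumpSchwartz w ξ *
      charFunDual (convPow μ N) (freqFunctional s ξ)).re =
      (prodFourier unitBumpSchwartz w ξ).re * (∫ x, Real.cos (freqFunctional s ξ x) ∂μ) ^ N := by
    rw [charFunDual_convPow, charFunDual_eq_integral_cos hsym, ← Complex.ofReal_pow,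
      Complex.re_mul_ofReal]
  have hreal (x : E) : ∏ i, unitBumpSchwartz (s i x + w i) =
      (∏ i, unitBump (s i x + w i) : ℝ) := (Complex.ofReal_prod _ _).symm
  simp_rw [hreal, integral_complex_ofReal] at hrep
  simp_rw [← hre]
  refine ⟨hint.re, ?_⟩
  rw [← Complex.ofReal_re (∫ x, _ ∂_), hrep]
  exact (integral_re hint).symm

lemma polyApprox_pow_sub_of_neg_one_add_le {n L k D : ℕ} {ω β ν : ℝ}
    (hω : -1 + β ≤ ω) (hω1 : |ω| ≤ 1) (hk : k + 8 * L ≤ n) (hL : 1 ≤ L)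
    (hν : ∀ N ∈ Finset.Icc (n - L) (n + L), Real.exp (-(β * (N - k : ℕ))) ≤ ν) :
    PolyApprox (Finset.Icc (n - L) (n + L)) D ((1 / 2) ^ D + ν) (fun N => ω ^ (N - k)) := by
  have hν0 : 0 ≤ ν := (Real.exp_pos _).le.trans (hν n (by simp))
  rcases le_or_gt 0 ω with hpos | hneg
  · exact (polyApprox_pow_sub D hpos (le_of_abs_le hω1) hk hL).mono le_rfl (by linarith)
  · refine .of_abs_le fun N hN => ?_
    have habs : |ω| ≤ Real.exp (-β) := by
      rw [abs_of_neg hneg]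
      linarith [Real.add_one_le_exp (-β)]
    calc |ω ^ (N - k)| ≤ Real.exp (-β) ^ (N - k) := by rw [abs_pow]; gcongr
      _ = Real.exp (-(β * (N - k : ℕ))) := by rw [← Real.exp_nat_mul]; ring_nf
      _ ≤ ν := hν N hN
      _ ≤ (1 / 2) ^ D + ν := le_add_of_nonneg_left (by positivity)

/-- The `L¹` norm of the Fourier transform of `unitBump`. -/
noncomputable def bumpFourierNorm : ℝ :=
  ∫ ξ, ‖𝓕 unitBumpSchwartz ξ‖

lemma bumpFourierNorm_nonneg : 0 ≤ bumpFourierNorm :=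
  integral_nonneg fun _ => norm_nonneg _

lemma polyApprox_integral_prod_unitBump_convPow {μ : Measure E} [IsFiniteMeasure μ]
    (hμ1 : μ.real Set.univ ≤ 1) (hsym : μ.map (fun x => -x) = μ) {β : ℝ}
    (hβ : ∀ φ : E →L[ℝ] ℝ, -1 + β ≤ ∫ x, Real.cos (φ x) ∂μ) (s : ι → E →L[ℝ] ℝ) (w : ι → ℝ)
    {n L k : ℕ} (D : ℕ) (hk : k + 8 * L ≤ n) (hL : 1 ≤ L) {ν : ℝ}
    (hν : ∀ N ∈ Finset.Icc (n - L) (n + L), Real.exp (-(β * (N - k : ℕ))) ≤ ν) :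
    PolyApprox (Finset.Icc (n - L) (n + L)) D
      (bumpFourierNorm ^ Fintype.card ι * ((1 / 2) ^ D + ν))
      (fun N => ∫ x, ∏ i, unitBump (s i x + w i) ∂convPow μ (N - k)) := by
  have hν0 : 0 ≤ ν := (Real.exp_pos _).le.trans (hν n (by simp))
  have hnorm : bumpFourierNorm ^ Fintype.card ι =
      ∫ ξ : ι → ℝ, ∏ i, ‖𝓕 unitBumpSchwartz (ξ i)‖ :=
    (integral_fintype_prod_volume_eq_pow fun ξ => ‖𝓕 unitBumpSchwartz ξ‖).symm
  simp_rw [(integral_prod_unitBump_convPow hsym s w _).2, hnorm, ← integral_mul_const]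
  refine .integral (fun N _ => (integral_prod_unitBump_convPow hsym s w _).1)
    ((integrable_prod_norm_fourier ι _).mul_const _) (fun ξ => by positivity) fun ξ => ?_
  have hpow := polyApprox_pow_sub_of_neg_one_add_le (D := D) (hβ (freqFunctional s ξ))
    ((abs_integral_le_of_abs_le_one fun x => Real.abs_cos_le_one _).trans hμ1) hk hL hν
  simpa using hpow.polynomial_mul (.C (prodFourier unitBumpSchwartz w ξ).re) (k := 0) (by simp)
    fun N _ => by
      rw [Polynomial.eval_C, ← norm_prodFourier _ w]
      exact Complex.abs_re_le_norm _

end ConvolutionPowerApproximation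

section ConvolutionSemiring

variable {E : Type*} [MeasurableSpace E] [AddCommMonoid E] [MeasurableAdd₂ E]

variable (E) in
/-- The finite measures on `E`, which form a commutative semiring under addition and convolution;
this is where the binomial theorem for convolution powers is applied. -/
def finiteMeasures : AddSubmonoid (Measure E) where
  carrier := {μ | IsFiniteMeasure μ}
  add_mem' {μ ν} (_ : IsFiniteMeasure μ) (_ : IsFiniteMeasure ν) :=
    (inferInstance : IsFiniteMeasure (μ + ν))
  zero_mem' := (inferInstance : IsFiniteMeasure (0 : Measure E))

instance isFiniteMeasure_coe_finiteMeasures (μ : finiteMeasures E) :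
    IsFiniteMeasure (μ : Measure E) :=
  μ.2

noncomputable instance commSemiringFiniteMeasures : CommSemiring (finiteMeasures E) where
  mul μ ν := ⟨(μ : Measure E).conv ν, Measure.finite_of_finite_conv _ _⟩
  one := ⟨Measure.dirac 0, (inferInstance : IsFiniteMeasure (Measure.dirac (0 : E)))⟩
  left_distrib _ _ _ := Subtype.ext (Measure.conv_add _ _ _)
  right_distrib _ _ _ := Subtype.ext (Measure.add_conv _ _ _)
  zero_mul _ := Subtype.ext (Measure.zero_conv _)
  mul_zero _ := Subtype.ext (Measure.conv_zero _)
  mul_assoc _ _ _ := Subtype.ext (Measure.conv_assoc _ _ _)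
  one_mul _ := Subtype.ext (Measure.dirac_zero_conv _)
  mul_one _ := Subtype.ext (Measure.conv_dirac_zero _)
  mul_comm _ _ := Subtype.ext (Measure.conv_comm _ _)

lemma coe_finiteMeasures_pow (μ : finiteMeasures E) (N : ℕ) :
    ((μ ^ N : finiteMeasures E) : Measure E) = convPow (μ : Measure E) N := by
  induction N with
  | zero => rw [pow_zero]; rfl
  | succ N ih => rw [pow_succ, convPow, ← ih]; rfl

lemma convPow_add (μ ν : Measure E) [hμ : IsFiniteMeasure μ] [hν : IsFiniteMeasure ν] (N : ℕ) :
    convPow (μ + ν) N =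
      ∑ k ∈ Finset.range (N + 1), N.choose k • (convPow μ k).conv (convPow ν (N - k)) := by
  let a : finiteMeasures E := ⟨μ, hμ⟩
  let b : finiteMeasures E := ⟨ν, hν⟩
  have hterm (k : ℕ) : ((a ^ k * b ^ (N - k) * (N.choose k) : finiteMeasures E) : Measure E) =
      N.choose k • (convPow μ k).conv (convPow ν (N - k)) := by
    rw [mul_comm, ← nsmul_eq_mul, AddSubmonoidClass.coe_nsmul, ← coe_finiteMeasures_pow a,
      ← coe_finiteMeasures_pow b]
    rfl
  rw [← Finset.sum_congr rfl fun k _ => hterm k, ← AddSubmonoid.coe_finsetSum, ← add_pow,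
    coe_finiteMeasures_pow]
  rfl

lemma integral_convPow_add (μ ν : Measure E) [IsFiniteMeasure μ] [IsFiniteMeasure ν] (N : ℕ)
    {f : E → ℝ} (hf : Measurable f) {C : ℝ} (hC : ∀ x, |f x| ≤ C) :
    ∫ x, f x ∂convPow (μ + ν) N = ∑ k ∈ Finset.range (N + 1),
      (N.choose k : ℝ) * ∫ y, ∫ x, f (y + x) ∂convPow ν (N - k) ∂convPow μ k := by
  have hint (k : ℕ) : Integrable f ((convPow μ k).conv (convPow ν (N - k))) :=
    integrable_of_abs_le hf hC
  simp_rw [convPow_add, ← Nat.cast_smul_eq_nsmul NNReal]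
  rw [integral_finsetSum_measure fun k _ => (hint k).smul_measure_nnreal]
  refine Finset.sum_congr rfl fun k _ => ?_
  rw [integral_smul_nnreal_measure, integral_conv (hint k), NNReal.smul_def, NNReal.coe_natCast,
    smul_eq_mul]

lemma measureReal_convPow_univ (μ : Measure E) [IsFiniteMeasure μ] (N : ℕ) :
    (convPow μ N).real Set.univ = μ.real Set.univ ^ N := by
  rw [measureReal_def, convPow_univ, ENNReal.toReal_pow, measureReal_def]

end ConvolutionSemiring

section BinomialApproximation
open Polynomial

lemma exists_polynomial_eval_eq_choose (k : ℕ) :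
    ∃ q : ℝ[X], q.natDegree ≤ k ∧ ∀ N : ℕ, q.eval (N : ℝ) = N.choose k := by
  refine ⟨C (k.factorial : ℝ)⁻¹ * descPochhammer ℝ k, ?_, fun N => ?_⟩
  · exact (natDegree_C_mul_le _ _).trans (descPochhammer_natDegree ℝ k).le
  · rw [eval_mul, eval_C, inv_mul_eq_div, Nat.cast_choose_eq_descPochhammer_div]

lemma sum_Ico_pow_div_factorial_le {K : ℝ} (hK : 0 ≤ K) (m N : ℕ) :
    ∑ k ∈ Finset.Ico (m + 1) (N + 1), K ^ k / k.factorial ≤ Real.exp (3 * K - m) := by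
  have hterm (k : ℕ) (hk : k ∈ Finset.Ico (m + 1) (N + 1)) :
      K ^ k / k.factorial ≤ Real.exp (-m) * ((3 * K) ^ k / k.factorial) := by
    have hexp : Real.exp m ≤ 3 ^ k :=
      calc Real.exp m ≤ Real.exp k := by
            gcongr; exact_mod_cast (Nat.lt_of_succ_le (Finset.mem_Ico.mp hk).1).le
        _ = Real.exp 1 ^ k := by rw [← Real.exp_nat_mul, mul_one]
        _ ≤ 3 ^ k := by gcongr; exact Real.exp_one_lt_three.le
    have hone : 1 ≤ Real.exp (-m) * 3 ^ k := by
      rwa [Real.exp_neg, inv_mul_eq_div, one_le_div (Real.exp_pos _)]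
    calc K ^ k / k.factorial = 1 * (K ^ k / k.factorial) := (one_mul _).symm
      _ ≤ Real.exp (-m) * 3 ^ k * (K ^ k / k.factorial) := by gcongr
      _ = Real.exp (-m) * ((3 * K) ^ k / k.factorial) := by rw [mul_pow]; ring
  calc ∑ k ∈ Finset.Ico (m + 1) (N + 1), K ^ k / k.factorial
      ≤ ∑ k ∈ Finset.Ico (m + 1) (N + 1), Real.exp (-m) * ((3 * K) ^ k / k.factorial) :=
        Finset.sum_le_sum hterm
    _ ≤ Real.exp (-m) * ∑ k ∈ Finset.range (N + 1), (3 * K) ^ k / k.factorial := by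
        rw [← Finset.mul_sum, Finset.range_eq_Ico]
        gcongr
        exact Nat.zero_le _
    _ ≤ Real.exp (-m) * Real.exp (3 * K) := by
        gcongr
        exact Real.sum_le_exp_of_nonneg (by positivity) _
    _ = Real.exp (3 * K - m) := by rw [← Real.exp_add]; ring_nf

lemma choose_mul_pow_le {N M : ℕ} (hN : N ≤ M) (k : ℕ) {p K : ℝ} (hp : 0 ≤ p) (hK : M * p ≤ K) :
    N.choose k * p ^ k ≤ K ^ k / k.factorial :=
  calc N.choose k * p ^ k ≤ (N : ℝ) ^ k / k.factorial * p ^ k := by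
        gcongr; exact Nat.choose_le_pow_div k N
    _ = (N * p) ^ k / k.factorial := by rw [mul_pow]; ring
    _ ≤ K ^ k / k.factorial := by
        have : (N : ℝ) ≤ M := by exact_mod_cast hN
        gcongr
        exact (mul_le_mul_of_nonneg_right this hp).trans hK

lemma polyApprox_choose_mul {I : Finset ℕ} {d k M : ℕ} {ε p K : ℝ} {g : ℕ → ℝ}
    (hI : ∀ N ∈ I, N ≤ M) (hε : 0 ≤ ε) (hp : 0 ≤ p) (hK : M * p ≤ K)
    (hbound : ∀ N, |g N| ≤ p ^ k) (hg : PolyApprox I d (p ^ k * ε) g) :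
    PolyApprox I (d + k) (ε * (K ^ k / k.factorial)) (fun N => N.choose k * g N) := by
  obtain ⟨q, hq, hchoose⟩ := exists_polynomial_eval_eq_choose k
  have hK0 : 0 ≤ K := (mul_nonneg (Nat.cast_nonneg _) hp).trans hK
  rcases (pow_nonneg hp k).eq_or_lt with hzero | hpos
  · refine .of_abs_le fun N _ => ?_
    have hg0 : g N = 0 := abs_nonpos_iff.mp ((hbound N).trans_eq hzero.symm)
    rw [hg0, mul_zero, abs_zero]
    positivity
  · have hmul := hg.polynomial_mul q hq (B := K ^ k / k.factorial / p ^ k) fun N hN => by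
      rw [hchoose, Nat.abs_cast, le_div_iff₀ hpos]
      exact choose_mul_pow_le (hI N hN) k hp hK
    simp only [hchoose] at hmul
    exact hmul.mono le_rfl (by rw [← mul_assoc, div_mul_cancel₀ _ hpos.ne', mul_comm])

variable {E : Type*} [MeasurableSpace E] [AddCommMonoid E] [MeasurableAdd₂ E]

lemma polyApprox_integral_convPow_add {μ ν : Measure E} [IsFiniteMeasure μ] [IsFiniteMeasure ν]
    (hν : ν.real Set.univ ≤ 1) {f : E → ℝ} (hf : Measurable f) (hf1 : ∀ x, |f x| ≤ 1)
    {n L d m : ℕ} {ε K : ℝ} (hε : 0 ≤ ε) (hm : m ≤ n - L)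
    (hK : (n + L : ℕ) * μ.real Set.univ ≤ K)
    (h : ∀ k ≤ m, ∀ y, PolyApprox (Finset.Icc (n - L) (n + L)) d ε
      (fun N => ∫ x, f (y + x) ∂convPow ν (N - k))) :
    PolyApprox (Finset.Icc (n - L) (n + L)) (d + m) (ε * Real.exp K + Real.exp (3 * K - m))
      (fun N => ∫ x, f x ∂convPow (μ + ν) N) := by
  have hK0 : 0 ≤ K := (by positivity : (0 : ℝ) ≤ (n + L : ℕ) * μ.real Set.univ).trans hK
  have hinner (k : ℕ) (y : E) : |∫ x, f (y + x) ∂convPow ν k| ≤ 1 := by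
    refine (abs_integral_le_of_abs_le_one fun x => hf1 _).trans ?_
    rw [measureReal_convPow_univ]
    exact pow_le_one₀ measureReal_nonneg hν
  have hmeas (k : ℕ) : Measurable fun y => ∫ x, f (y + x) ∂convPow ν k :=
    (hf.comp measurable_add).stronglyMeasurable.integral_prod_right'.measurable
  obtain ⟨g, hg⟩ : ∃ g : ℕ → ℕ → ℝ,
      ∀ k N, ∫ y, ∫ x, f (y + x) ∂convPow ν (N - k) ∂convPow μ k = g k N := ⟨_, fun _ _ => rfl⟩
  have hbound (k N : ℕ) : |g k N| ≤ μ.real Set.univ ^ k := by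
    rw [← hg, ← measureReal_convPow_univ]
    exact abs_integral_le_of_abs_le_one fun y => hinner _ y
  have hg_approx (k : ℕ) (hk : k ≤ m) :
      PolyApprox (Finset.Icc (n - L) (n + L)) d (μ.real Set.univ ^ k * ε) (g k) := by
    have := PolyApprox.integral (μ := convPow μ k)
      (fun N _ => integrable_of_abs_le (hmeas (N - k)) (hinner _)) (integrable_const ε)
      (fun _ => hε) (h k hk)
    simpa only [integral_const, measureReal_convPow_univ, smul_eq_mul, hg] using this
  have hhead := PolyApprox.sum (Finset.range (m + 1)) fun k hk =>
    have hkm : k ≤ m := Nat.lt_succ_iff.mp (Finset.mem_range.mp hk)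
    (polyApprox_choose_mul (fun N hN => (Finset.mem_Icc.mp hN).2) hε measureReal_nonneg hK
      (hbound k) (hg_approx k hkm)).mono (Nat.add_le_add_left hkm d) le_rfl
  have htail : PolyApprox (Finset.Icc (n - L) (n + L)) (d + m) (Real.exp (3 * K - m))
      (fun N => ∑ k ∈ Finset.Ico (m + 1) (N + 1), N.choose k * g k N) := by
    refine .of_abs_le fun N hN => (Finset.abs_sum_le_sum_abs _ _).trans <|
      (Finset.sum_le_sum fun k _ => ?_).trans (sum_Ico_pow_div_factorial_le hK0 m N)
    rw [abs_mul, Nat.abs_cast]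
    exact (mul_le_mul_of_nonneg_left (hbound k N) (Nat.cast_nonneg _)).trans
      (choose_mul_pow_le (Finset.mem_Icc.mp hN).2 k measureReal_nonneg hK)
  refine ((hhead.add htail).congr fun N hN => ?_).mono le_rfl ?_
  · have hmN : m + 1 ≤ N + 1 := by have := (Finset.mem_Icc.mp hN).1; lia
    simp_rw [integral_convPow_add _ _ _ hf hf1, hg, Finset.sum_range_add_sum_Ico _ hmN]
  · rw [← Finset.mul_sum]
    gcongr
    exact Real.sum_le_exp_of_nonneg hK0 _

end BinomialApproximation

section CutoffTruncation

lemma exists_finset_abs_add_natCast_lt (u : ℕ → ℝ) (k : ℕ) (v : ℝ) (R : ℕ) :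
    ∃ K : Finset ℕ, K.card ≤ (2 * R + 5) ^ (k + 1) ∧
      ∀ t : ℝ, latticePotential u k t < ENNReal.ofReal (Real.exp R) →
        ∀ j : ℕ, |t + v + j| < 1 → j ∈ K := by
  obtain ⟨A, hA⟩ : ∃ A : (Fin k → ℤ) → ℝ, ∀ a, A a = -halfComb u a - v - R - 2 :=
    ⟨_, fun _ => rfl⟩
  refine ⟨(Fintype.piFinset fun _ : Fin k => Finset.Icc (-(R : ℤ)) R).biUnion
    fun a => Finset.Ico ⌈A a⌉₊ (⌈A a⌉₊ + (2 * R + 4)), ?_, fun t ht j hj => ?_⟩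
  · refine (Finset.card_biUnion_le_card_mul _ _ (2 * R + 4) fun a _ => by simp).trans ?_
    rw [Fintype.card_piFinset_const, Int.card_Icc, pow_succ]
    gcongr <;> lia
  · obtain ⟨a, ha, hta⟩ := exists_norm_lt_of_latticePotential_lt ht
    rw [abs_lt] at hj hta
    have hceil : A a ≤ ⌈A a⌉₊ := Nat.le_ceil _
    simp only [Finset.mem_biUnion, Fintype.mem_piFinset, Finset.mem_Icc, Finset.mem_Ico]
    refine ⟨a, fun i => abs_le.mp ?_, Nat.ceil_le.mpr ?_, ?_⟩
    · have hai : ‖a i‖ ≤ R := (norm_le_pi_norm a i).trans ha.le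
      rw [Int.norm_eq_abs] at hai
      exact_mod_cast hai
    · linarith [hA a]
    · have : (j : ℝ) < (⌈A a⌉₊ + (2 * R + 4) : ℕ) := by
        push_cast
        linarith [hA a]
      exact_mod_cast this

variable {ι : Type*} [Fintype ι]

lemma abs_prod_smoothCutoff_le_one (t : ι → ℝ) : |∏ i, smoothCutoff (t i)| ≤ 1 := by
  rw [abs_of_nonneg (Finset.prod_nonneg fun i _ => smoothCutoff_nonneg _)]
  exact Finset.prod_le_one (fun i _ => smoothCutoff_nonneg _) fun i _ => smoothCutoff_le_one _

lemma prod_sum_unitBump_mem_Icc (t : ι → ℝ) (K : ι → Finset ℕ) :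
    ∏ i, ∑ j ∈ K i, unitBump (t i + j) ∈ Set.Icc 0 (∏ i, smoothCutoff (t i)) := by
  have hsum (i : ι) : 0 ≤ ∑ j ∈ K i, unitBump (t i + j) :=
    Finset.sum_nonneg fun j _ => unitBump_nonneg _
  exact ⟨Finset.prod_nonneg fun i _ => hsum i,
    Finset.prod_le_prod (fun i _ => hsum i) fun i _ => sum_unitBump_le_smoothCutoff _ _⟩

lemma abs_prod_unitBump_le_one (t : ι → ℝ) : |∏ i, unitBump (t i)| ≤ 1 := by
  have hprod := prod_sum_unitBump_mem_Icc t fun _ => {0}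
  simp only [Finset.sum_singleton, Nat.cast_zero, add_zero] at hprod
  rw [abs_of_nonneg hprod.1]
  exact hprod.2.trans (le_of_abs_le (abs_prod_smoothCutoff_le_one t))

lemma abs_integral_sub_integral_le_measureReal {X : Type*} [MeasurableSpace X] {μ : Measure X}
    [IsFiniteMeasure μ] {f g : X → ℝ} (hf : Integrable f μ) (hg : Integrable g μ) {S : Set X}
    (hS : MeasurableSet S) (h1 : ∀ x, |f x - g x| ≤ 1) (hfg : ∀ x ∉ S, f x = g x) :
    |∫ x, f x ∂μ - ∫ x, g x ∂μ| ≤ μ.real S := by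
  have hind (x : X) : |f x - g x| ≤ S.indicator 1 x := by
    by_cases hx : x ∈ S
    · rw [Set.indicator_of_mem hx]
      exact h1 x
    · rw [hfg x hx, sub_self, abs_zero, Set.indicator_of_notMem hx]
  calc |∫ x, f x ∂μ - ∫ x, g x ∂μ|
      = |∫ x, (f x - g x) ∂μ| := by rw [integral_sub hf hg]
    _ ≤ ∫ x, S.indicator 1 x ∂μ :=
        abs_integral_le_integral_abs.trans <|
          integral_mono (hf.sub hg).abs ((integrable_const 1).indicator hS) hind
    _ = μ.real S := integral_indicator_one hS

lemma abs_integral_prod_smoothCutoff_sub_sum_le [DecidableEq ι] {X : Type*} [MeasurableSpace X]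
    (μ : Measure X) [IsFiniteMeasure μ] {t : ι → X → ℝ} (ht : ∀ i, Measurable (t i))
    {B : ι → Set X} (hB : ∀ i, MeasurableSet (B i)) {K : ι → Finset ℕ}
    (hK : ∀ i, ∀ x ∉ B i, ∀ j : ℕ, |t i x + j| < 1 → j ∈ K i) :
    |∫ x, ∏ i, smoothCutoff (t i x) ∂μ -
        ∑ p ∈ Fintype.piFinset K, ∫ x, ∏ i, unitBump (t i x + p i) ∂μ| ≤
      ∑ i, μ.real (B i) := by
  have := continuous_smoothCutoff.measurable
  have := continuous_unitBump.measurable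
  have hbump (p : ι → ℕ) : Integrable (fun x => ∏ i, unitBump (t i x + p i)) μ :=
    integrable_of_abs_le (by fun_prop) fun x => abs_prod_unitBump_le_one _
  rw [← integral_finsetSum _ fun p _ => hbump p]
  refine (abs_integral_sub_integral_le_measureReal
    (integrable_of_abs_le (by fun_prop) fun x => abs_prod_smoothCutoff_le_one _)
    (integrable_finsetSum _ fun p _ => hbump p) (.iUnion hB) (fun x => ?_) fun x hx => ?_).trans
    (measureReal_iUnion_fintype_le B)
  · rw [← Finset.prod_univ_sum K fun i j => unitBump (t i x + j)]
    obtain ⟨hlow, hup⟩ := prod_sum_unitBump_mem_Icc (fun i => t i x) K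
    rw [abs_of_nonneg (sub_nonneg.mpr hup)]
    linarith [le_of_abs_le (abs_prod_smoothCutoff_le_one fun i => t i x)]
  · rw [← Finset.prod_univ_sum K fun i j => unitBump (t i x + j)]
    simp only [Set.mem_iUnion, not_exists] at hx
    exact (Finset.prod_congr rfl fun i _ => sum_unitBump_eq_smoothCutoff (hK i x (hx i))).symm

end CutoffTruncation

section CutoffApproximation

variable {E : Type*} [NormedAddCommGroup E] [NormedSpace ℝ E] [MeasurableSpace E] [BorelSpace E]
  [SecondCountableTopology E]

lemma polyApprox_integral_prod_smoothCutoff_convPow {ι : Type*} [Fintype ι] {μ : Measure E}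
    [IsFiniteMeasure μ] (hμ1 : μ.real Set.univ ≤ 1) (hsym : μ.map (fun x => -x) = μ) {β : ℝ}
    (hβ : ∀ φ : E →L[ℝ] ℝ, -1 + β ≤ ∫ x, Real.cos (φ x) ∂μ) (s : ι → E →L[ℝ] ℝ) (b : ι → ℝ)
    {u : ι → ℕ → ℝ} {k : ι → ℕ} {r : ℕ} (hkr : ∀ i, k i < r)
    (hnear : ∀ i, ∀ᵐ y ∂μ, s i y ∉ farFromLattice (u i) (k i)) {W V : ℝ}
    (hW : ∀ i, ∫ y, min ((s i y) ^ 2) 1 ∂μ ≤ W) {n L m : ℕ} (d : ℕ)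
    (hV : (n + L : ℕ) * (Real.exp 5 * W) ≤ V) (R : ℕ) (hm : m + 8 * L ≤ n) (hL : 1 ≤ L) {ν : ℝ}
    (hν : ∀ N ∈ Finset.Icc (n - L) (n + L), Real.exp (-(β * (N - m : ℕ))) ≤ ν) (y : E) :
    PolyApprox (Finset.Icc (n - L) (n + L)) d (Fintype.card ι * Real.exp (V - R) +
        ((2 * R + 5) ^ r) ^ Fintype.card ι *
          (bumpFourierNorm ^ Fintype.card ι * ((1 / 2) ^ d + ν)))
      (fun N => ∫ x, ∏ i, smoothCutoff (s i (y + x) + b i) ∂convPow μ (N - m)) := by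
  classical
  choose K hcard hK using fun i => exists_finset_abs_add_natCast_lt (u i) (k i) (s i y + b i) R
  have hν0 : 0 ≤ ν := (Real.exp_pos _).le.trans (hν n (by simp))
  have hcoord (i : ι) (x : E) : s i (y + x) + b i = s i x + (s i y + b i) := by
    rw [map_add]; ring
  have hbump := PolyApprox.sum (Fintype.piFinset K) fun p _ =>
    polyApprox_integral_prod_unitBump_convPow hμ1 hsym hβ s (fun i => s i y + b i + p i) d hm hL hν
  have htail (i : ι) (N : ℕ) (hN : N ∈ Finset.Icc (n - L) (n + L)) : (convPow μ (N - m)).real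
      {x | ENNReal.ofReal (Real.exp R) ≤ latticePotential (u i) (k i) (s i x)} ≤
        Real.exp (V - R) := by
    refine (measureReal_latticePotential_ge_le hμ1 hsym (hnear i) (hW i) (N - m) R).trans ?_
    have hW0 : 0 ≤ W := (integral_nonneg fun y => le_min (sq_nonneg _) zero_le_one).trans (hW i)
    have hle : N - m ≤ n + L := (Nat.sub_le _ _).trans (Finset.mem_Icc.mp hN).2
    gcongr
    exact le_trans (by gcongr) hV
  have hrem : PolyApprox (Finset.Icc (n - L) (n + L)) d (Fintype.card ι * Real.exp (V - R))
      (fun N => ∫ x, ∏ i, smoothCutoff (s i (y + x) + b i) ∂convPow μ (N - m) -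
        ∑ p ∈ Fintype.piFinset K,
          ∫ x, ∏ i, unitBump (s i x + (s i y + b i + p i)) ∂convPow μ (N - m)) := by
    refine .of_abs_le fun N hN => ?_
    have hmeas (i : ι) := (measurable_latticePotential (u i) (k i)).comp (s i).measurable
    simp_rw [hcoord, ← add_assoc (s _ _)]
    refine (abs_integral_prod_smoothCutoff_sub_sum_le (convPow μ (N - m)) (by fun_prop)
      (fun i => measurableSet_le measurable_const (hmeas i)) fun i x hx => ?_).trans
      ((Finset.sum_le_sum fun i _ => htail i N hN).trans_eq (by simp))
    simpa only [add_assoc] using hK i (s i x) (lt_of_not_ge hx)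
  refine ((hrem.add hbump).congr fun N _ => (sub_add_cancel _ _).symm).mono le_rfl ?_
  rw [Finset.sum_const, nsmul_eq_mul, Fintype.card_piFinset, Nat.cast_prod]
  have := bumpFourierNorm_nonneg
  gcongr
  rw [← Finset.card_univ, ← Finset.prod_const]
  gcongr with i
  exact_mod_cast (hcard i).trans (Nat.pow_le_pow_right (by lia) (hkr i))

end CutoffApproximation

section CosTransform
open ProbabilityTheory

/-- The real part of the characteristic function of a measure on `ℝ`, written as a cosine integral;
for symmetric measures it is the whole characteristic function. -/
noncomputable def cosTransform (P : Measure ℝ) (ξ : ℝ) : ℝ := ∫ y, Real.cos (ξ * y) ∂P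

lemma cosTransform_map {X : Type*} [MeasurableSpace X] (μ : Measure X) {f : X → ℝ}
    (hf : Measurable f) (ξ : ℝ) : cosTransform (μ.map f) ξ = ∫ x, Real.cos (ξ * f x) ∂μ :=
  integral_map hf.aemeasurable
    (Real.continuous_cos.comp (continuous_const_mul ξ)).aestronglyMeasurable

lemma continuous_cosTransform (P : Measure ℝ) [IsFiniteMeasure P] : Continuous (cosTransform P) :=
  continuous_of_dominated (bound := fun _ => 1) (fun ξ => by fun_prop)
    (fun ξ => .of_forall fun y => Real.abs_cos_le_one _) (integrable_const 1)
    (.of_forall fun y => by fun_prop)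

variable (P : Measure ℝ) [IsProbabilityMeasure P]

lemma abs_cosTransform_le_one (ξ : ℝ) : |cosTransform P ξ| ≤ 1 :=
  (abs_integral_le_of_abs_le_one fun _ => Real.abs_cos_le_one _).trans_eq probReal_univ

lemma integral_one_sub_cos_eq (ξ : ℝ) :
    ∫ y, (1 - Real.cos (ξ * y)) ∂P = 1 - cosTransform P ξ := by
  rw [integral_sub (integrable_const 1)
    (integrable_of_abs_le (by fun_prop) fun y => Real.abs_cos_le_one _)]
  simp [cosTransform]

lemma pow_two_mul_le_exp_add_exp {c α : ℝ} (hc : -1 + α ≤ c) (M : ℕ) :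
    c ^ (2 * M) ≤ Real.exp (-((2 * M : ℕ) * (1 - c))) + Real.exp (-((2 * M : ℕ) * α)) := by
  have hpow (a b : ℝ) (ha : 0 ≤ a) (hab : a ≤ 1 - b) :
      a ^ (2 * M) ≤ Real.exp (-((2 * M : ℕ) * b)) :=
    calc a ^ (2 * M) ≤ Real.exp (-b) ^ (2 * M) := by
          gcongr
          linarith [Real.one_sub_le_exp_neg b]
      _ = Real.exp (-((2 * M : ℕ) * b)) := by rw [← Real.exp_nat_mul, mul_neg]
  rcases le_total 0 c with h0 | h0
  · exact (hpow c (1 - c) h0 (by linarith)).trans (le_add_of_nonneg_right (Real.exp_pos _).le)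
  · rw [← (even_two_mul M).neg_pow]
    exact (hpow (-c) α (by linarith) (by linarith)).trans
      (le_add_of_nonneg_left (Real.exp_pos _).le)

lemma integrable_cosTransform_mul_pow (τ : ℝ) (N : ℕ) (γ : Measure ℝ) [IsFiniteMeasure γ] :
    Integrable (fun ξ => cosTransform P (τ * ξ) ^ N) γ :=
  integrable_of_abs_le
    (((continuous_cosTransform P).comp (continuous_const_mul τ)).pow N).measurable fun ξ => by
    rw [abs_pow]
    exact pow_le_one₀ (abs_nonneg _) (abs_cosTransform_le_one P _)

variable {P} {α q : ℝ} {M : ℕ} (hα : ∀ ξ, -1 + α ≤ cosTransform P ξ)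
  (hMα : Real.exp (-((2 * M : ℕ) * α)) ≤ q)
  (h : 2 * q ≤ ∫ ξ, cosTransform P ξ ^ (2 * M) ∂gaussianReal 0 1)
include hα hMα h

lemma le_integral_exp_neg_of_le_integral_cosTransform_pow :
    q ≤ ∫ ξ, Real.exp (-∫ y, (1 - Real.cos (ξ * y)) ∂((2 * M : ℕ) : NNReal) • P)
      ∂gaussianReal 0 1 := by
  have hexponent (ξ : ℝ) : ∫ y, (1 - Real.cos (ξ * y)) ∂((2 * M : ℕ) : NNReal) • P =
      (2 * M : ℕ) * (1 - cosTransform P ξ) := by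
    rw [integral_smul_nnreal_measure, integral_one_sub_cos_eq, NNReal.smul_def, smul_eq_mul,
      NNReal.coe_natCast]
  simp_rw [hexponent]
  have hexp : Integrable (fun ξ => Real.exp (-((2 * M : ℕ) * (1 - cosTransform P ξ))))
      (gaussianReal 0 1) := by
    have := (continuous_cosTransform P).measurable
    refine integrable_of_abs_le (C := 1) (by fun_prop) fun ξ => ?_
    rw [Real.abs_exp, Real.exp_le_one_iff, Left.neg_nonpos_iff]
    exact mul_nonneg (Nat.cast_nonneg _)
      (sub_nonneg.mpr (le_of_abs_le (abs_cosTransform_le_one P ξ)))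
  have hpow : Integrable (fun ξ => cosTransform P ξ ^ (2 * M)) (gaussianReal 0 1) := by
    simpa only [one_mul] using integrable_cosTransform_mul_pow P 1 (2 * M) (gaussianReal 0 1)
  have hsum := integral_mono hpow (hexp.add (integrable_const _))
    fun ξ => pow_two_mul_le_exp_add_exp (hα ξ) M
  rw [integral_add' hexp (integrable_const _), integral_const, probReal_univ, one_smul] at hsum
  linarith

variable (hM : 1 ≤ M)
include hM

lemma integral_min_sq_one_le_of_le_integral_cosTransform_pow (hq0 : 0 < q) (hq1 : q ≤ 1) :
    ∫ y, min (y ^ 2) 1 ∂P ≤ 144 / q ^ 2 / (2 * M : ℕ) := by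
  have hmoment := integral_min_sq_one_le hq0 hq1
    (le_integral_exp_neg_of_le_integral_cosTransform_pow hα hMα h)
  rw [integral_smul_nnreal_measure, NNReal.smul_def, smul_eq_mul, NNReal.coe_natCast] at hmoment
  rwa [le_div_iff₀' (by positivity)]

lemma exists_measureReal_farFromLattice_le_of_le_integral_cosTransform_pow {r : ℕ} (hr : 0 < r)
    (hq : 18 * (3 / 5) ^ r < q) :
    ∃ k < r, ∃ u : ℕ → ℝ, P.real (farFromLattice u k) ≤ r / (2 * M : ℕ) := by
  obtain ⟨k, hk, u, hu⟩ := exists_measureReal_farFromLattice_lt hr hq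
    (le_integral_exp_neg_of_le_integral_cosTransform_pow hα hMα h)
  refine ⟨k, hk, u, ?_⟩
  rw [measureReal_nnreal_smul_apply, NNReal.coe_natCast] at hu
  rw [le_div_iff₀' (by positivity)]
  exact hu.le

end CosTransform

section Restriction

variable {E : Type*} [MeasurableSpace E]

lemma map_neg_restrict [AddGroup E] [MeasurableNeg E] {F : Measure E}
    (hsym : F.map (fun x => -x) = F) {S : Set E} (hS : MeasurableSet S)
    (hneg : (fun x => -x) ⁻¹' S = S) : (F.restrict S).map (fun x => -x) = F.restrict S := by
  have hmap := Measure.restrict_map (μ := F) measurable_neg hS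
  rw [hsym, hneg] at hmap
  exact hmap.symm

lemma sub_measureReal_le_setIntegral_compl {F : Measure E} [IsFiniteMeasure F] {f : E → ℝ}
    (hf : Measurable f) (hf1 : ∀ x, |f x| ≤ 1) {S : Set E} (hS : MeasurableSet S) :
    ∫ x, f x ∂F - F.real S ≤ ∫ x in Sᶜ, f x ∂F := by
  have hset := le_of_abs_le (abs_integral_le_of_abs_le_one (μ := F.restrict S) hf1)
  rw [measureReal_restrict_apply_univ] at hset
  linarith [integral_add_compl hS (integrable_of_abs_le (μ := F) hf hf1)]

end Restriction

section TwoScaleApproximation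
open ProbabilityTheory

variable {E : Type*} [NormedAddCommGroup E] [NormedSpace ℝ E] [MeasurableSpace E] [BorelSpace E]
  [SecondCountableTopology E]

variable {ι : Type*} [Fintype ι] {F : Measure E} [IsProbabilityMeasure F]
  (hsym : F.map (fun x => -x) = F) {α : ℝ}
  (hα : ∀ φ : E →L[ℝ] ℝ, -1 + α ≤ ∫ x, Real.cos (φ x) ∂F) (s : ι → E →L[ℝ] ℝ) (b : ι → ℝ)
include hsym hα

lemma polyApprox_integral_prod_smoothCutoff_convPow_of_measureReal_farFromLattice_le
    {u : ι → ℕ → ℝ} {k : ι → ℕ} {r : ℕ} (hkr : ∀ i, k i < r) {ρ : ℝ}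
    (hfar : ∀ i, F.real (s i ⁻¹' farFromLattice (u i) (k i)) ≤ ρ)
    (hρ0 : 0 ≤ ρ) (hρα : Fintype.card ι * ρ ≤ α / 2) {W V : ℝ}
    (hW : ∀ i, ∫ x, min ((s i x) ^ 2) 1 ∂F ≤ W) {n L m : ℕ}
    (hV : (n + L : ℕ) * (Real.exp 5 * W) ≤ V) {K : ℝ}
    (hK : (n + L : ℕ) * (Fintype.card ι * ρ) ≤ K) (hm : m + 8 * L ≤ n) (hL : 1 ≤ L) {ν : ℝ}
    (hν : Real.exp (-(α / 2 * (n - L - m : ℕ))) ≤ ν) (d R : ℕ) :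
    PolyApprox (Finset.Icc (n - L) (n + L)) (d + m)
      ((Fintype.card ι * Real.exp (V - R) + ((2 * R + 5) ^ r) ^ Fintype.card ι *
        (bumpFourierNorm ^ Fintype.card ι * ((1 / 2) ^ d + ν))) * Real.exp K +
          Real.exp (3 * K - m))
      (fun N => ∫ x, ∏ i, smoothCutoff (s i x + b i) ∂convPow F N) := by
  obtain ⟨O, hO⟩ : ∃ O, ⋃ i, s i ⁻¹' farFromLattice (u i) (k i) = O := ⟨_, rfl⟩
  have hOmeas : MeasurableSet O :=
    hO ▸ .iUnion fun i => (s i).measurable (measurableSet_farFromLattice _ _)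
  have hOF : F.real O ≤ Fintype.card ι * ρ := by
    rw [← hO]
    exact (measureReal_iUnion_fintype_le _).trans <|
      (Finset.sum_le_sum fun i _ => hfar i).trans_eq (by simp)
  have hmass : (F.restrict Oᶜ).real Set.univ ≤ 1 := by
    rw [measureReal_restrict_apply_univ]
    exact measureReal_le_one
  have hsymO : (F.restrict Oᶜ).map (fun x => -x) = F.restrict Oᶜ := by
    refine map_neg_restrict hsym hOmeas.compl ?_
    ext x
    simp [← hO, neg_mem_farFromLattice_iff]
  have hcosO (φ : E →L[ℝ] ℝ) : -1 + α / 2 ≤ ∫ x in Oᶜ, Real.cos (φ x) ∂F := by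
    linarith [hα φ, sub_measureReal_le_setIntegral_compl (F := F) (f := fun x => Real.cos (φ x))
      (by fun_prop) (fun x => Real.abs_cos_le_one _) hOmeas]
  have hnear (i : ι) : ∀ᵐ y ∂F.restrict Oᶜ, s i y ∉ farFromLattice (u i) (k i) := by
    filter_upwards [ae_restrict_mem hOmeas.compl] with y hy hfar
    exact hy (hO ▸ Set.mem_iUnion.mpr ⟨i, hfar⟩)
  have hWO (i : ι) : ∫ x in Oᶜ, min ((s i x) ^ 2) 1 ∂F ≤ W := by
    have hnonneg (x : E) : 0 ≤ min ((s i x) ^ 2) 1 := le_min (sq_nonneg _) zero_le_one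
    refine (setIntegral_le_integral (integrable_of_abs_le (C := 1) (by fun_prop) fun x => ?_)
      (.of_forall hnonneg)).trans (hW i)
    rw [abs_of_nonneg (hnonneg x)]
    exact min_le_right _ _
  have hα0 : 0 ≤ α / 2 := (by positivity : 0 ≤ Fintype.card ι * ρ).trans hρα
  have hν0 : 0 ≤ ν := (Real.exp_pos _).le.trans hν
  have := bumpFourierNorm_nonneg
  have := continuous_smoothCutoff.measurable
  rw [← Measure.restrict_add_restrict_compl (μ := F) hOmeas]
  refine polyApprox_integral_convPow_add hmass (by fun_prop)
    (fun x => abs_prod_smoothCutoff_le_one _) (by positivity) (by lia) ?_ fun j hj y =>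
      polyApprox_integral_prod_smoothCutoff_convPow hmass hsymO hcosO s b hkr hnear hWO d hV R
        (by lia) hL (fun N hN => le_trans ?_ hν) y
  · rw [measureReal_restrict_apply_univ]
    exact le_trans (by gcongr) hK
  · have := (Finset.mem_Icc.mp hN).1
    gcongr

lemma polyApprox_integral_prod_smoothCutoff_convPow_of_le_integral_cosTransform_pow
    {M : ℕ} (hM : 1 ≤ M) {q : ℝ} (hq0 : 0 < q) (hq1 : q ≤ 1)
    (hMα : Real.exp (-((2 * M : ℕ) * α)) ≤ q)
    (h : ∀ i, 2 * q ≤ ∫ ξ, cosTransform (F.map (s i)) ξ ^ (2 * M) ∂gaussianReal 0 1) {r : ℕ}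
    (hr : 0 < r) (hrq : 18 * (3 / 5) ^ r < q)
    (hκ : Fintype.card ι * (r / (2 * M : ℕ)) ≤ α / 2) {n L m : ℕ} (hn : n + L ≤ 5 * (2 * M))
    (hm : m + 8 * L ≤ n) (hL : 1 ≤ L) {ν : ℝ}
    (hν : Real.exp (-(α / 2 * (n - L - m : ℕ))) ≤ ν) (d R : ℕ) :
    PolyApprox (Finset.Icc (n - L) (n + L)) (d + m)
      ((Fintype.card ι * Real.exp (5 * Real.exp 5 * (144 / q ^ 2) - R) +
        ((2 * R + 5) ^ r) ^ Fintype.card ι *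
          (bumpFourierNorm ^ Fintype.card ι * ((1 / 2) ^ d + ν))) *
            Real.exp (5 * (Fintype.card ι * r)) + Real.exp (3 * (5 * (Fintype.card ι * r)) - m))
      (fun N => ∫ x, ∏ i, smoothCutoff (s i x + b i) ∂convPow F N) := by
  have (i : ι) : IsProbabilityMeasure (F.map (s i)) :=
    Measure.isProbabilityMeasure_map (s i).measurable.aemeasurable
  have hcos (i : ι) (ξ : ℝ) : -1 + α ≤ cosTransform (F.map (s i)) ξ := by
    rw [cosTransform_map F (s i).measurable]
    exact hα (ξ • s i)
  choose k hkr u hfar using fun i =>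
    exists_measureReal_farFromLattice_le_of_le_integral_cosTransform_pow (hcos i) hMα (h i) hM hr
      hrq
  simp_rw [map_measureReal_apply (s _).measurable (measurableSet_farFromLattice _ _)] at hfar
  have hmoment (i : ι) : ∫ x, min ((s i x) ^ 2) 1 ∂F ≤ 144 / q ^ 2 / (2 * M : ℕ) := by
    rw [← integral_map (f := fun y => min (y ^ 2) 1) (s i).measurable.aemeasurable (by fun_prop)]
    exact integral_min_sq_one_le_of_le_integral_cosTransform_pow (hcos i) hMα (h i) hM hq0 hq1
  have hnM : ((n + L : ℕ) : ℝ) ≤ 5 * (2 * M : ℕ) := by exact_mod_cast hn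
  refine polyApprox_integral_prod_smoothCutoff_convPow_of_measureReal_farFromLattice_le hsym hα s b
    hkr hfar (by positivity) hκ hmoment ?_ ?_ hm hL hν d R
  · calc ((n + L : ℕ) : ℝ) * (Real.exp 5 * (144 / q ^ 2 / (2 * M : ℕ)))
        ≤ 5 * (2 * M : ℕ) * (Real.exp 5 * (144 / q ^ 2 / (2 * M : ℕ))) := by gcongr
      _ = 5 * Real.exp 5 * (144 / q ^ 2) := by field_simp
  · calc ((n + L : ℕ) : ℝ) * (Fintype.card ι * (r / (2 * M : ℕ)))
        ≤ 5 * (2 * M : ℕ) * (Fintype.card ι * (r / (2 * M : ℕ))) := by gcongr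
      _ = 5 * (Fintype.card ι * r) := by field_simp

end TwoScaleApproximation

section Concentration
open ProbabilityTheory

/-- The Gaussian average of the `2M`-th power of the cosine transform at frequency scale `τ`: it
dominates the concentration at scale `1 / τ` of all convolution powers of order at least `2M`. -/
noncomputable def cosPowerAverage (P : Measure ℝ) (M : ℕ) (τ : ℝ) : ℝ :=
  ∫ ξ, cosTransform P (τ * ξ) ^ (2 * M) ∂gaussianReal 0 1

section

variable (P : Measure ℝ) [IsProbabilityMeasure P] (M : ℕ)

lemma continuous_cosPowerAverage : Continuous (cosPowerAverage P M) := by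
  have := continuous_cosTransform P
  refine continuous_of_dominated (bound := fun _ => 1)
    (fun τ => (by fun_prop : Continuous _).aestronglyMeasurable) (fun τ => .of_forall fun ξ => ?_)
    (integrable_const 1) (.of_forall fun ξ => by fun_prop)
  rw [norm_pow]
  exact pow_le_one₀ (norm_nonneg _) (abs_cosTransform_le_one P _)

lemma cosPowerAverage_zero : cosPowerAverage P M 0 = 1 := by
  simp [cosPowerAverage, cosTransform]

end

lemma measureReal_abs_le_one_le {X : Type*} [MeasurableSpace X] (μ : Measure X)
    [IsFiniteMeasure μ] {t : X → ℝ} (ht : Measurable t) :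
    μ.real {x | |t x| ≤ 1} ≤ 2 * ∫ ξ, ∫ x, Real.cos (ξ * t x) ∂μ ∂gaussianReal 0 1 := by
  have hmeas : MeasurableSet {x | |t x| ≤ 1} := measurableSet_le (by fun_prop) measurable_const
  have hint : Integrable (fun p : X × ℝ => Real.cos (p.2 * t p.1)) (μ.prod (gaussianReal 0 1)) :=
    integrable_of_abs_le (by fun_prop) fun _ => Real.abs_cos_le_one _
  have hind (x : X) : {x | |t x| ≤ 1}.indicator 1 x ≤
      2 * ∫ ξ, Real.cos (ξ * t x) ∂gaussianReal 0 1 := by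
    rw [integral_cos_mul_gaussianReal]
    refine Set.indicator_apply_le' (fun hx => ?_) fun _ => by positivity
    have hsq : t x ^ 2 ≤ 1 := (sq_le_one_iff_abs_le_one _).mpr hx
    rw [Pi.one_apply]
    linarith [Real.one_sub_le_exp_neg (t x ^ 2 / 2)]
  rw [← integral_integral_swap hint, ← integral_const_mul, ← integral_indicator_one hmeas]
  exact integral_mono ((integrable_const 1).indicator hmeas)
    (hint.integral_prod_left.const_mul 2) hind

lemma eventually_measureReal_preimage_Ioo_le {X : Type*} [MeasurableSpace X] (μ : Measure X)
    [IsFiniteMeasure μ] {f : X → ℝ} (hf : Measurable f) (z : ℝ) {ε : ℝ} (hε : 0 < ε) :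
    ∀ᶠ k : ℕ in Filter.atTop, μ.real (f ⁻¹' Set.Ioo z (z + 1 / (k + 1))) ≤ ε := by
  have hanti : Antitone fun k : ℕ => f ⁻¹' Set.Ioo z (z + 1 / (k + 1)) := fun j k hjk =>
    Set.preimage_mono (Set.Ioo_subset_Ioo_right (by gcongr))
  have hempty : ⋂ k : ℕ, f ⁻¹' Set.Ioo z (z + 1 / (k + 1)) = ∅ := by
    refine Set.eq_empty_of_forall_notMem fun x hx => ?_
    rw [Set.mem_iInter] at hx
    obtain ⟨k, hk⟩ := exists_nat_one_div_lt (sub_pos.mpr (hx 0).1)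
    linarith [(hx k).2]
  have hlim := tendsto_measure_iInter_atTop (μ := μ)
    (fun k => (hf measurableSet_Ioo).nullMeasurableSet) hanti ⟨0, measure_ne_top _ _⟩
  rw [hempty, measure_empty] at hlim
  exact ((ENNReal.tendsto_toReal ENNReal.zero_ne_top).comp hlim).eventually_le_const hε

variable {E : Type*} [NormedAddCommGroup E] [NormedSpace ℝ E] [MeasurableSpace E] [BorelSpace E]
  [SecondCountableTopology E] {F : Measure E} [IsProbabilityMeasure F]
  (hsym : F.map (fun x => -x) = F)
include hsym

lemma integral_cos_sub_convPow (φ : E →L[ℝ] ℝ) (w : ℝ) (N : ℕ) :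
    ∫ x, Real.cos (φ x - w) ∂convPow F N = Real.cos w * (∫ x, Real.cos (φ x) ∂F) ^ N := by
  have hint : Integrable (fun x => Complex.exp (φ x * Complex.I)) (convPow F N) :=
    .of_bound (by fun_prop) 1 (.of_forall fun x => (Complex.norm_exp_ofReal_mul_I _).le)
  have hre (x : E) : Real.cos (φ x - w) =
      RCLike.re (Complex.exp (-w * Complex.I) * Complex.exp (φ x * Complex.I)) := by
    rw [← Complex.exp_add, ← add_mul, ← Complex.ofReal_neg, ← Complex.ofReal_add,
      neg_add_eq_sub]
    exact (Complex.exp_ofReal_mul_I_re _).symm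
  simp_rw [hre]
  rw [integral_re (hint.const_mul _), integral_const_mul, ← charFunDual_apply,
    charFunDual_convPow, charFunDual_eq_integral_cos hsym, ← Complex.ofReal_pow,
    ← Complex.ofReal_neg]
  exact (Complex.re_mul_ofReal _ _).trans (by rw [Complex.exp_ofReal_mul_I_re, Real.cos_neg])

lemma measureReal_convPow_abs_mul_sub_le_one_le (s : E →L[ℝ] ℝ) {M N : ℕ} (hN : 2 * M ≤ N)
    (τ z : ℝ) :
    (convPow F N).real {x | |τ * (s x - z)| ≤ 1} ≤ 2 * cosPowerAverage (F.map s) M τ := by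
  have : IsProbabilityMeasure (F.map s) :=
    Measure.isProbabilityMeasure_map s.measurable.aemeasurable
  have hinner (ξ : ℝ) : ∫ x, Real.cos (ξ * (τ * (s x - z))) ∂convPow F N =
      Real.cos (τ * ξ * z) * cosTransform (F.map s) (τ * ξ) ^ N := by
    rw [cosTransform_map F s.measurable]
    refine .trans ?_ (integral_cos_sub_convPow hsym ((τ * ξ) • s) (τ * ξ * z) N)
    simp only [smul_apply, smul_eq_mul, mul_sub, mul_left_comm ξ, mul_assoc]
  refine (measureReal_abs_le_one_le _ (by fun_prop)).trans ?_
  simp_rw [hinner]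
  have := (continuous_cosTransform (F.map s)).measurable
  gcongr 2 * ?_
  have hle (ξ : ℝ) : |Real.cos (τ * ξ * z) * cosTransform (F.map s) (τ * ξ) ^ N| ≤
      cosTransform (F.map s) (τ * ξ) ^ (2 * M) := by
    rw [abs_mul, abs_pow, ← (even_two_mul M).pow_abs]
    exact (mul_le_of_le_one_left (by positivity) (Real.abs_cos_le_one _)).trans
      (pow_le_pow_of_le_one (abs_nonneg _) (abs_cosTransform_le_one _ _) hN)
  have hpow := integrable_cosTransform_mul_pow (F.map s) τ (2 * M) (gaussianReal 0 1)
  exact integral_mono (hpow.mono' (by fun_prop) (.of_forall hle)) hpow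
    fun ξ => (le_abs_self _).trans (hle ξ)

lemma exists_le_cosPowerAverage_measureReal_preimage_Ioo_le (s : E →L[ℝ] ℝ) (z : ℝ) {M : ℕ}
    {I : Finset ℕ} (hI : ∀ N ∈ I, 2 * M ≤ N) {q : ℝ} (hq0 : 0 < q) (hq1 : q < 1) :
    ∃ τ, 0 < τ ∧ q ≤ cosPowerAverage (F.map s) M τ ∧
      ∀ N ∈ I, (convPow F N).real (s ⁻¹' Set.Ioo z (z + 1 / τ)) ≤ 2 * q := by
  have : IsProbabilityMeasure (F.map s) :=
    Measure.isProbabilityMeasure_map s.measurable.aemeasurable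
  obtain ⟨T, hT⟩ := ((Filter.eventually_all_finset I).mpr fun N _ =>
    eventually_measureReal_preimage_Ioo_le (convPow F N) s.measurable z
      (by positivity : 0 < 2 * q)).exists
  rcases le_total q (cosPowerAverage (F.map s) M (T + 1)) with hQ | hQ
  · exact ⟨T + 1, by positivity, hQ, hT⟩
  · obtain ⟨τ, hτ, hτq⟩ := intermediate_value_Icc' (by positivity : (0 : ℝ) ≤ T + 1)
      (continuous_cosPowerAverage (F.map s) M).continuousOn
      ⟨hQ, (cosPowerAverage_zero (F.map s) M).symm ▸ hq1.le⟩
    have hτ0 : 0 < τ := by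
      refine hτ.1.lt_of_ne fun h0 => hq1.ne ?_
      rw [← hτq, ← h0, cosPowerAverage_zero]
    refine ⟨τ, hτ0, hτq.ge, fun N hN => (measureReal_mono fun x hx => ?_).trans
      ((measureReal_convPow_abs_mul_sub_le_one_le hsym s (hI N hN) τ (z + 1 / τ)).trans_eq
        (by rw [hτq]))⟩
    have hlow : 0 < τ * (s x - z) := mul_pos hτ0 (sub_pos.mpr hx.1)
    have hup : τ * (s x - z) < 1 := by
      rw [← lt_div_iff₀' hτ0]
      linarith [hx.2]
    have hsplit : τ * (s x - (z + 1 / τ)) = τ * (s x - z) - 1 := by field_simp; ring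
    rw [Set.mem_ofPred_eq, hsplit, abs_le]
    constructor <;> linarith

end Concentration

section PolyhedronApproximation
open ProbabilityTheory

lemma indicator_Iic_eq_prod_smoothCutoff {ι : Type*} [Fintype ι] {z τ t : ι → ℝ}
    (hτ : ∀ i, 0 < τ i) (ht : ∀ i, t i ∉ Set.Ioo (z i) (z i + 1 / τ i)) :
    (Set.Iic z).indicator 1 t = ∏ i, smoothCutoff (τ i * t i + -(τ i * z i)) := by
  by_cases! htz : ∀ i, t i ≤ z i
  · rw [Set.indicator_of_mem (Set.mem_Iic.mpr htz), Pi.one_apply]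
    refine (Finset.prod_eq_one fun i _ => smoothCutoff_of_nonpos ?_).symm
    linarith [mul_le_mul_of_nonneg_left (htz i) (hτ i).le]
  · obtain ⟨i, hi⟩ := htz
    rw [Set.indicator_of_notMem fun hle : t ≤ z => hi.not_ge (hle i)]
    refine (Finset.prod_eq_zero (Finset.mem_univ i) (smoothCutoff_of_one_le ?_)).symm
    have hfar : z i + 1 / τ i ≤ t i := le_of_not_gt fun hlt => ht i ⟨hi, hlt⟩
    have hscaled := mul_le_mul_of_nonneg_left hfar (hτ i).le
    rw [mul_add, mul_one_div_cancel (hτ i).ne'] at hscaled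
    linarith

variable {E : Type*} [NormedAddCommGroup E] [NormedSpace ℝ E] [MeasurableSpace E] [BorelSpace E]
  {ι : Type*} [Fintype ι]

lemma abs_integral_prod_smoothCutoff_sub_measureReal_le (μ : Measure E) [IsFiniteMeasure μ]
    (s : ι → E →L[ℝ] ℝ) (z : ι → ℝ) {τ : ι → ℝ} (hτ : ∀ i, 0 < τ i) :
    |μ.real {x | ∀ i, s i x ≤ z i} - ∫ x, ∏ i, smoothCutoff ((τ i • s i) x + -(τ i * z i)) ∂μ| ≤
      ∑ i, μ.real (s i ⁻¹' Set.Ioo (z i) (z i + 1 / τ i)) := by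
  have hX : MeasurableSet {x | ∀ i, s i x ≤ z i} :=
    measurableSet_le (measurable_pi_lambda _ fun i => (s i).measurable) measurable_const
  have := continuous_smoothCutoff.measurable
  rw [← integral_indicator_one hX]
  refine (abs_integral_sub_integral_le_measureReal ((integrable_const 1).indicator hX)
    (integrable_of_abs_le (by fun_prop) fun x => abs_prod_smoothCutoff_le_one _)
    (.iUnion fun i => (s i).measurable measurableSet_Ioo) (fun x => ?_) fun x hx => ?_).trans
    (measureReal_iUnion_fintype_le _)
  · exact abs_sub_le_of_nonneg_of_le (Set.indicator_nonneg (fun _ _ => zero_le_one) x)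
      (Set.indicator_le_self' (fun _ _ => zero_le_one) x)
      (Finset.prod_nonneg fun i _ => smoothCutoff_nonneg _)
      (le_of_abs_le (abs_prod_smoothCutoff_le_one _))
  · simp only [Set.mem_iUnion, not_exists] at hx
    exact indicator_Iic_eq_prod_smoothCutoff (t := fun i => s i x) hτ hx

variable [SecondCountableTopology E]

lemma polyApprox_measureReal_convPow {F : Measure E} [IsProbabilityMeasure F]
    (hsym : F.map (fun x => -x) = F) {α : ℝ}
    (hα : ∀ φ : E →L[ℝ] ℝ, -1 + α ≤ ∫ x, Real.cos (φ x) ∂F) (s : ι → E →L[ℝ] ℝ) (z : ι → ℝ)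
    {M : ℕ} (hM : 1 ≤ M) {q : ℝ} (hq0 : 0 < q) (hq1 : 2 * q < 1)
    (hMα : Real.exp (-((2 * M : ℕ) * α)) ≤ q) {r : ℕ} (hr : 0 < r) (hrq : 18 * (3 / 5) ^ r < q)
    (hκ : Fintype.card ι * (r / (2 * M : ℕ)) ≤ α / 2) {n L m : ℕ} (hnM : 2 * M ≤ n - L)
    (hn : n + L ≤ 5 * (2 * M)) (hm : m + 8 * L ≤ n) (hL : 1 ≤ L) {ν : ℝ}
    (hν : Real.exp (-(α / 2 * (n - L - m : ℕ))) ≤ ν) (d R : ℕ) :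
    PolyApprox (Finset.Icc (n - L) (n + L)) (d + m)
      (Fintype.card ι * (4 * q) +
        ((Fintype.card ι * Real.exp (5 * Real.exp 5 * (144 / q ^ 2) - R) +
          ((2 * R + 5) ^ r) ^ Fintype.card ι *
            (bumpFourierNorm ^ Fintype.card ι * ((1 / 2) ^ d + ν))) *
              Real.exp (5 * (Fintype.card ι * r)) + Real.exp (3 * (5 * (Fintype.card ι * r)) - m)))
      (fun N => (convPow F N).real {x | ∀ i, s i x ≤ z i}) := by
  choose τ hτ hτq hstrip using fun i =>
    exists_le_cosPowerAverage_measureReal_preimage_Ioo_le hsym (s i) (z i) (M := M)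
      (I := Finset.Icc (n - L) (n + L)) (fun N hN => hnM.trans (Finset.mem_Icc.mp hN).1)
      (by positivity : 0 < 2 * q) hq1
  have hscaled (i : ι) :
      2 * q ≤ ∫ ξ, cosTransform (F.map (τ i • s i)) ξ ^ (2 * M) ∂gaussianReal 0 1 := by
    refine (hτq i).trans_eq (integral_congr_ae (.of_forall fun ξ => ?_))
    simp only [cosTransform_map F (s i).measurable, cosTransform_map F (τ i • s i).measurable,
      smul_apply, smul_eq_mul, mul_left_comm ξ, mul_assoc]
  have hsmooth := polyApprox_integral_prod_smoothCutoff_convPow_of_le_integral_cosTransform_pow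
    hsym hα (fun i => τ i • s i) (fun i => -(τ i * z i)) hM hq0 (by linarith) hMα hscaled hr hrq hκ
    hn hm hL hν d R
  refine ((PolyApprox.of_abs_le fun N hN => ?_).add hsmooth).congr fun N _ =>
    (sub_add_cancel _ _).symm
  refine (abs_integral_prod_smoothCutoff_sub_measureReal_le (convPow F N) s z hτ).trans
    ((Finset.sum_le_sum fun i _ => hstrip i N hN).trans_eq ?_)
  rw [Finset.sum_const, Finset.card_univ, nsmul_eq_mul]
  ring

end PolyhedronApproximation

section LevelParameters

lemma exp_neg_natCast_le_half_pow (l : ℕ) : Real.exp (-(l : ℝ)) ≤ (1 / 2) ^ l := by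
  have hexp : Real.exp (-1) ≤ 1 / 2 := by
    rw [Real.exp_neg, inv_eq_one_div]
    exact one_div_le_one_div_of_le two_pos (by linarith [Real.exp_one_gt_d9])
  calc Real.exp (-(l : ℝ)) = Real.exp (-1) ^ l := by rw [← Real.exp_nat_mul]; ring_nf
    _ ≤ (1 / 2) ^ l := by gcongr

lemma mul_three_fifths_pow_lt_half_pow (l : ℕ) :
    18 * (3 / 5 : ℝ) ^ (10 * (l + 1)) < (1 / 2) ^ (l + 2) := by
  rw [pow_mul, pow_succ _ l, pow_add _ l]
  calc 18 * (((3 / 5 : ℝ) ^ 10) ^ l * (3 / 5) ^ 10)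
      ≤ 18 * ((1 / 2) ^ l * (3 / 5) ^ 10) := by gcongr; norm_num
    _ = (18 * (3 / 5) ^ 10) * (1 / 2) ^ l := by ring
    _ < (1 / 2) ^ 2 * (1 / 2) ^ l := by gcongr; norm_num
    _ = (1 / 2) ^ l * (1 / 2) ^ 2 := mul_comm _ _

lemma five_mul_exp_five_mul_div_half_pow_sq_le (l : ℕ) :
    5 * Real.exp 5 * (144 / ((1 / 2) ^ (l + 2)) ^ 2) ≤ 4 ^ (l + 11) := by
  have hexp : Real.exp 5 ≤ 3 ^ 5 := by
    rw [show (5 : ℝ) = (5 : ℕ) * 1 by norm_num, Real.exp_nat_mul]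
    gcongr
    exact Real.exp_one_lt_three.le
  have hsq : 144 / ((1 / 2 : ℝ) ^ (l + 2)) ^ 2 = 144 * 4 ^ (l + 2) := by
    rw [← pow_mul, mul_comm, pow_mul, one_div_pow, one_div_pow, div_div_eq_mul_div, div_one]
    norm_num
  calc 5 * Real.exp 5 * (144 / ((1 / 2) ^ (l + 2)) ^ 2)
      ≤ 5 * 3 ^ 5 * (144 * 4 ^ (l + 2)) := by rw [hsq]; gcongr
    _ = (5 * 3 ^ 5 * 144) * 4 ^ (l + 2) := by ring
    _ ≤ 4 ^ 9 * 4 ^ (l + 2) := by gcongr; norm_num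
    _ = 4 ^ (l + 11) := by ring

/-- The bound `R` allowed for the logarithm of the lattice potential at the `l`-th level of
approximation. -/
def levelRadius (κ l : ℕ) : ℕ := 4 ^ (l + 11) + 50 * κ * (l + 1) + l

lemma two_mul_levelRadius_add_five_le (κ l : ℕ) :
    2 * levelRadius κ l + 5 ≤ (2 * 4 ^ 11 + 100 * κ + 7) ^ (l + 1) := by
  have hl : l + 1 ≤ 4 ^ l := Nat.lt_pow_self (by norm_num)
  calc 2 * levelRadius κ l + 5 ≤ 2 * 4 ^ 11 * 4 ^ l + (100 * κ + 7) * (l + 1) := by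
        unfold levelRadius; ring_nf; lia
    _ ≤ 2 * 4 ^ 11 * 4 ^ l + (100 * κ + 7) * 4 ^ l := by gcongr
    _ = 4 ^ l * (2 * 4 ^ 11 + 100 * κ + 7) := by ring
    _ ≤ (2 * 4 ^ 11 + 100 * κ + 7) ^ l * (2 * 4 ^ 11 + 100 * κ + 7) := by gcongr; lia
    _ = (2 * 4 ^ 11 + 100 * κ + 7) ^ (l + 1) := (pow_succ _ _).symm

lemma exists_levelRadius_pow_mul_le (κ : ℕ) {b : ℝ} (hb : 0 ≤ b) : ∃ a : ℕ, ∀ l : ℕ,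
    ((2 * levelRadius κ l + 5 : ℝ) ^ (10 * (l + 1))) ^ κ * b ^ κ *
      Real.exp (5 * (κ * (10 * (l + 1) : ℕ))) ≤ 2 ^ (a * (l + 1) ^ 2) := by
  set B : ℝ := 2 * 4 ^ 11 + 100 * κ + 7 with hB
  obtain ⟨a, ha⟩ := pow_unbounded_of_one_lt ((B ^ 10 * (b + 1) * Real.exp 50) ^ κ) one_lt_two
  refine ⟨a, fun l => ?_⟩
  have hR : (2 * levelRadius κ l + 5 : ℝ) ≤ B ^ (l + 1) := by
    rw [hB]
    exact_mod_cast two_mul_levelRadius_add_five_le κ l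
  have hl : l + 1 ≤ (l + 1) ^ 2 := Nat.le_self_pow two_ne_zero _
  have hexp : Real.exp (5 * (κ * (10 * (l + 1) : ℕ))) = (Real.exp 50 ^ (l + 1)) ^ κ := by
    rw [← Real.exp_nat_mul, ← Real.exp_nat_mul]
    push_cast
    ring_nf
  calc ((2 * levelRadius κ l + 5 : ℝ) ^ (10 * (l + 1))) ^ κ * b ^ κ *
        Real.exp (5 * (κ * (10 * (l + 1) : ℕ)))
      ≤ ((B ^ (l + 1)) ^ (10 * (l + 1))) ^ κ * ((b + 1) ^ (l + 1) ^ 2) ^ κ *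
          (Real.exp 50 ^ (l + 1) ^ 2) ^ κ := by
        rw [hexp]
        have : b ≤ (b + 1) ^ (l + 1) ^ 2 :=
          (le_add_of_nonneg_right zero_le_one).trans
            (le_self_pow₀ (le_add_of_nonneg_left hb) (by positivity))
        have : 1 ≤ Real.exp 50 := Real.one_le_exp (by norm_num)
        gcongr
    _ = ((B ^ 10 * (b + 1) * Real.exp 50) ^ κ) ^ (l + 1) ^ 2 := by
        have hmul : (l + 1) * (10 * (l + 1)) = 10 * (l + 1) ^ 2 := by ring
        rw [← mul_pow, ← mul_pow, ← pow_mul B, hmul, pow_mul B, ← mul_pow, ← mul_pow,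
          pow_right_comm]
    _ ≤ (2 ^ a) ^ (l + 1) ^ 2 := by gcongr
    _ = 2 ^ (a * (l + 1) ^ 2) := (pow_mul _ _ _).symm

lemma exp_sub_levelRadius_mul_exp_le (κ l : ℕ) :
    Real.exp (5 * Real.exp 5 * (144 / ((1 / 2) ^ (l + 2)) ^ 2) - levelRadius κ l) *
      Real.exp (5 * (κ * (10 * (l + 1) : ℕ))) ≤ (1 / 2) ^ l := by
  rw [← Real.exp_add]
  refine (Real.exp_le_exp.mpr ?_).trans (exp_neg_natCast_le_half_pow l)
  have := five_mul_exp_five_mul_div_half_pow_sq_le l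
  unfold levelRadius
  push_cast
  linarith

lemma two_pow_mul_half_pow_add_half_pow_le (a l : ℕ) :
    (2 : ℝ) ^ (a * (l + 1) ^ 2) * ((1 / 2) ^ ((a + 1) * (l + 1) ^ 2) +
      (1 / 2) ^ ((a + 1) * (l + 1) ^ 2)) ≤ 2 * (1 / 2) ^ l := by
  have hl : l ≤ (l + 1) ^ 2 := l.le_succ.trans (Nat.le_self_pow two_ne_zero _)
  calc (2 : ℝ) ^ (a * (l + 1) ^ 2) * ((1 / 2) ^ ((a + 1) * (l + 1) ^ 2) +
        (1 / 2) ^ ((a + 1) * (l + 1) ^ 2))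
      = 2 * (1 / 2) ^ (l + 1) ^ 2 * (2 ^ (a * (l + 1) ^ 2) * (1 / 2) ^ (a * (l + 1) ^ 2)) := by
        rw [add_mul a, one_mul, pow_add]; ring
    _ = 2 * (1 / 2) ^ (l + 1) ^ 2 := by rw [← mul_pow]; norm_num
    _ ≤ 2 * (1 / 2) ^ l :=
        mul_le_mul_of_nonneg_left (pow_le_pow_of_le_one (by norm_num) (by norm_num) hl) two_pos.le

lemma exists_levelError_le (κ : ℕ) {b : ℝ} (hb : 0 ≤ b) : ∃ a : ℕ, ∀ l : ℕ,
    κ * (4 * (1 / 2) ^ (l + 2)) +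
      ((κ * Real.exp (5 * Real.exp 5 * (144 / ((1 / 2) ^ (l + 2)) ^ 2) - levelRadius κ l) +
        ((2 * levelRadius κ l + 5 : ℝ) ^ (10 * (l + 1))) ^ κ *
          (b ^ κ * ((1 / 2) ^ ((a + 1) * (l + 1) ^ 2) + (1 / 2) ^ ((a + 1) * (l + 1) ^ 2)))) *
            Real.exp (5 * (κ * (10 * (l + 1) : ℕ))) +
        Real.exp (3 * (5 * (κ * (10 * (l + 1) : ℕ))) - (150 * κ * (l + 1) + l : ℕ))) ≤
      (2 * κ + 3) * (1 / 2) ^ l := by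
  obtain ⟨a, ha⟩ := exists_levelRadius_pow_mul_le κ hb
  refine ⟨a, fun l => ?_⟩
  have hnumber := mul_le_mul_of_nonneg_left (exp_sub_levelRadius_mul_exp_le κ l) κ.cast_nonneg
  have hmass : Real.exp (3 * (5 * (κ * (10 * (l + 1) : ℕ))) - (150 * κ * (l + 1) + l : ℕ)) ≤
      (1 / 2) ^ l := by
    refine (Real.exp_le_exp.mpr ?_).trans (exp_neg_natCast_le_half_pow l)
    push_cast
    linarith
  obtain ⟨ε, hε, hε0⟩ : ∃ ε : ℝ,
      (1 / 2) ^ ((a + 1) * (l + 1) ^ 2) + (1 / 2) ^ ((a + 1) * (l + 1) ^ 2) = ε ∧ 0 ≤ ε :=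
    ⟨_, rfl, by positivity⟩
  have hfourier := (mul_le_mul_of_nonneg_right (ha l) hε0).trans
    (hε ▸ two_pow_mul_half_pow_add_half_pow_le a l)
  rw [hε]
  have hstrip : κ * (4 * (1 / 2 : ℝ) ^ (l + 2)) = κ * (1 / 2) ^ l := by ring
  linarith

end LevelParameters

section LevelApproximation
open Filter

lemma exists_polyApprox_measureReal_convPow (ι : Type*) [Fintype ι] : ∃ A : ℕ, 0 < A ∧
    ∀ {E : Type*} [NormedAddCommGroup E] [NormedSpace ℝ E] [MeasurableSpace E] [BorelSpace E]
      [SecondCountableTopology E] {F : Measure E} [IsProbabilityMeasure F] {α : ℝ} {n l : ℕ},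
      F.map (fun x => -x) = F → (∀ φ : E →L[ℝ] ℝ, -1 + α ≤ ∫ x, Real.cos (φ x) ∂F) →
      16 * (A * (l + 1) ^ 2) ≤ n → (A * (l + 1) ^ 2 : ℕ) ≤ n * α →
      ∀ (s : ι → E →L[ℝ] ℝ) (z : ι → ℝ),
      PolyApprox (Finset.Icc (n - n / 16) (n + n / 16)) (A * (l + 1) ^ 2)
        ((2 * Fintype.card ι + 3) * (1 / 2) ^ l)
        (fun N => (convPow F N).real {x | ∀ i, s i x ≤ z i}) := by
  obtain ⟨a, ha⟩ := exists_levelError_le (Fintype.card ι) bumpFourierNorm_nonneg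
  obtain ⟨κ, hκ⟩ : ∃ κ, Fintype.card ι = κ := ⟨_, rfl⟩
  rw [hκ] at ha ⊢
  refine ⟨8 * (a + 2) + 150 * κ, by lia, ?_⟩
  intro E _ _ _ _ _ F _ α n l hsym hα hn hnα s z
  obtain ⟨A, hA⟩ : ∃ A, (8 * (a + 2) + 150 * κ) * (l + 1) ^ 2 = A := ⟨_, rfl⟩
  rw [hA] at hn hnα ⊢
  have : 8 * (a * (l + 1) ^ 2) + 16 * (l + 1) ^ 2 + 150 * (κ * (l + 1) ^ 2) = A := by
    rw [← hA]; ring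
  have hl : l + 1 ≤ (l + 1) ^ 2 := Nat.le_self_pow two_ne_zero _
  have : κ * (l + 1) ≤ κ * (l + 1) ^ 2 := Nat.mul_le_mul_left _ hl
  have hα0 : 0 ≤ α := by
    have : (0 : ℝ) < n := by exact_mod_cast (by lia : 0 < n)
    exact nonneg_of_mul_nonneg_right (hnα.trans' A.cast_nonneg) this
  have hbound {k N : ℕ} (hk : 4 * k ≤ A) (hN : n ≤ 4 * N) : (k : ℝ) ≤ N * α := by
    have : (4 * k : ℝ) ≤ A := by exact_mod_cast hk
    have : (n : ℝ) * α ≤ (4 * N) * α := by gcongr; exact_mod_cast hN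
    linarith
  have hexp {k : ℕ} {y : ℝ} (hk : (k : ℝ) ≤ y) : Real.exp (-y) ≤ (1 / 2) ^ k :=
    (Real.exp_le_exp.mpr (neg_le_neg hk)).trans (exp_neg_natCast_le_half_pow k)
  have hlevel := polyApprox_measureReal_convPow hsym hα s z (M := n / 4) (q := (1 / 2) ^ (l + 2))
    (r := 10 * (l + 1)) (n := n) (L := n / 16) (m := 150 * κ * (l + 1) + l)
    (ν := (1 / 2) ^ ((a + 1) * (l + 1) ^ 2)) (by lia) (by positivity) ?_
    (hexp (hbound (by lia) (by lia))) (by positivity)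
    (mul_three_fifths_pow_lt_half_pow l) ?_ (by lia) (by lia) (by lia) (by lia) (hexp ?_)
    ((a + 1) * (l + 1) ^ 2) (levelRadius κ l)
  · rw [hκ] at hlevel
    exact hlevel.mono (by lia) (ha l)
  · calc 2 * (1 / 2 : ℝ) ^ (l + 2) = (1 / 2) ^ (l + 1) := by ring
      _ < 1 := pow_lt_one₀ (by norm_num) (by norm_num) l.succ_ne_zero
  · rw [hκ, mul_div_assoc', div_le_iff₀ (by exact_mod_cast (by lia : 0 < 2 * (n / 4)))]
    have := hbound (k := 2 * (κ * (10 * (l + 1)))) (N := 2 * (n / 4)) (by lia) (by lia)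
    push_cast at this ⊢
    linarith
  · have := hbound (k := 2 * ((a + 1) * (l + 1) ^ 2)) (N := n - n / 16 - (150 * κ * (l + 1) + l))
      (by lia) (by lia)
    push_cast at this ⊢
    linarith

lemma exists_linear_approx_measureReal_convPow (ι : Type*) [Finite ι] : ∃ A : ℕ, ∃ C : ℝ, 0 < C ∧
    ∀ {E : Type*} [NormedAddCommGroup E] [NormedSpace ℝ E] [MeasurableSpace E] [BorelSpace E]
      [SecondCountableTopology E] {F : Measure E} [IsProbabilityMeasure F] {α : ℝ} {n : ℕ},
      F.map (fun x => -x) = F → (∀ φ : E →L[ℝ] ℝ, -1 + α ≤ ∫ x, Real.cos (φ x) ∂F) → 32 ≤ n →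
      8 * (A * (2 * Nat.log 2 n + 3) ^ 2) ^ 2 ≤ n / 16 →
      (A * (2 * Nat.log 2 n + 3) ^ 2 : ℕ) ≤ n * α → ∀ (s : ι → E →L[ℝ] ℝ) (z : ι → ℝ), ∃ a : ℝ,
      |a| ≤ C / n ∧ ∀ N : ℕ, |(convPow F N).real {x | ∀ i, s i x ≤ z i} -
        (convPow F n).real {x | ∀ i, s i x ≤ z i} - a * (N - n)| ≤
          C * ((N - n) ^ 2 + 1) / n ^ 2 := by
  cases nonempty_fintype ι
  obtain ⟨A, hA, hlevel⟩ := exists_polyApprox_measureReal_convPow ι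
  obtain ⟨C, hC, hlinear⟩ := exists_linear_approx_of_polyApprox hA
    (by positivity : (0 : ℝ) < 2 * Fintype.card ι + 3)
  refine ⟨A, C, hC, fun hsym hα hn hnA hnα s z => ?_⟩
  have hlog (n : ℕ) : n ^ 2 ≤ 2 ^ (2 * Nat.log 2 n + 2) := by
    rw [show 2 * Nat.log 2 n + 2 = (Nat.log 2 n).succ * 2 by lia, pow_mul]
    exact Nat.pow_le_pow_left (Nat.lt_pow_succ_log_self one_lt_two n).le 2
  refine hlinear _ _ _ _ (by lia) (by lia) (Nat.div_le_self _ 16) hnA (hlog _)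
    (fun N => ⟨measureReal_nonneg, measureReal_le_one⟩) fun l hl => ?_
  have hmono := Nat.mul_le_mul_left A (Nat.pow_le_pow_left (Nat.succ_le_succ hl) 2)
  refine hlevel hsym hα ?_ ((Nat.cast_le.mpr hmono).trans hnα) s z
  have := hmono.trans (Nat.le_self_pow two_ne_zero _)
  lia

lemma eventually_two_mul_log_two_add_three_le :
    ∀ᶠ n : ℕ in atTop, (2 * Nat.log 2 n + 3 : ℝ) ≤ 4 * Real.log n := by
  have hlog : Tendsto (fun n : ℕ => Real.log n) atTop atTop :=
    Real.tendsto_log_atTop.comp tendsto_natCast_atTop_atTop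
  filter_upwards [hlog.eventually_ge_atTop 6] with n hn
  have hbase : (Nat.log 2 n : ℝ) ≤ Real.log n / Real.log 2 := Real.natLog_le_logb n 2
  have hle : (Nat.log 2 n : ℝ) * 0.69 ≤ Real.log n := by
    rw [le_div_iff₀ (Real.log_pos one_lt_two)] at hbase
    refine hbase.trans' ?_
    gcongr
    linarith [Real.log_two_gt_d9]
  linarith

lemma eventually_mul_log_two_pow_four_le (A : ℕ) :
    ∀ᶠ n : ℕ in atTop, 8 * (A * (2 * Nat.log 2 n + 3) ^ 2) ^ 2 ≤ n / 16 := by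
  have hlittle : (fun n : ℕ => Real.log n ^ 4) =o[atTop] fun n : ℕ => (n : ℝ) :=
    (Real.isLittleO_pow_log_id_atTop (n := 4)).comp_tendsto tendsto_natCast_atTop_atTop
  have hpos : (0 : ℝ) < 1 / (16 * 8 * 256 * (A ^ 2 + 1)) := by positivity
  filter_upwards [eventually_two_mul_log_two_add_three_le, hlittle.bound hpos] with n hlog hn
  rw [Real.norm_of_nonneg (by positivity), Real.norm_of_nonneg n.cast_nonneg,
    div_mul_eq_mul_div, one_mul, le_div_iff₀ (by positivity)] at hn
  rw [Nat.le_div_iff_mul_le (by norm_num), ← Nat.cast_le (α := ℝ)]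
  push_cast
  calc 8 * (A * (2 * Nat.log 2 n + 3) ^ 2) ^ 2 * 16
      = 128 * (A : ℝ) ^ 2 * (2 * Nat.log 2 n + 3) ^ 4 := by ring
    _ ≤ 128 * (A ^ 2 + 1) * (4 * Real.log n) ^ 4 := by gcongr; linarith
    _ = Real.log n ^ 4 * (16 * 8 * 256 * (A ^ 2 + 1)) := by ring
    _ ≤ n := hn

end LevelApproximation

section CompoundPoisson

variable {E : Type*} [MeasurableSpace E] [AddMonoid E]

lemma measureReal_cpois {a : ℝ} (ha : 0 ≤ a) (μ : Measure E) [∀ k, IsFiniteMeasure (convPow μ k)]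
    {X : Set E} (hX : MeasurableSet X) :
    (cpois a μ).real X = ∑' k : ℕ, poissonWeight a k * (convPow μ k).real X := by
  have hterm (k : ℕ) : (ENNReal.ofReal (Real.exp (-a) * a ^ k / k.factorial) • convPow μ k) X =
      ENNReal.ofReal (poissonWeight a k * (convPow μ k).real X) := by
    rw [ENNReal.ofReal_mul (poissonWeight_nonneg ha k), ofReal_measureReal]
    rfl
  have hnonneg (k : ℕ) : 0 ≤ poissonWeight a k * (convPow μ k).real X :=
    mul_nonneg (poissonWeight_nonneg ha k) measureReal_nonneg
  rw [measureReal_def, cpois, Measure.sum_apply _ hX, tsum_congr hterm,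
    ENNReal.tsum_toReal_eq fun k => ENNReal.ofReal_ne_top]
  exact tsum_congr fun k => ENNReal.toReal_ofReal (hnonneg k)

variable [MeasurableAdd₂ E]

instance isProbabilityMeasure_cpois (n : ℕ) (μ : Measure E) [IsProbabilityMeasure μ] :
    IsProbabilityMeasure (cpois n μ) := by
  refine ⟨?_⟩
  have hmass (k : ℕ) : (ENNReal.ofReal (Real.exp (-n) * (n : ℝ) ^ k / k.factorial) •
      convPow μ k) Set.univ = ENNReal.ofReal (poissonWeight n k) := by
    rw [Measure.smul_apply, measure_univ, smul_eq_mul, mul_one, poissonWeight]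
  rw [cpois, Measure.sum_apply _ .univ, tsum_congr hmass,
    ← ENNReal.ofReal_tsum_of_nonneg (poissonWeight_nonneg n.cast_nonneg)
      (hasSum_poissonWeight n).summable, (hasSum_poissonWeight n).tsum_eq, ENNReal.ofReal_one]

end CompoundPoisson

section PoissonApproximation

lemma abs_sub_succ_le_of_abs_sub_linear_le {f : ℕ → ℝ} {n : ℕ} {a C : ℝ} (hn : 0 < n)
    (ha : |a| ≤ C / n)
    (h : ∀ N : ℕ, |f N - f n - a * (N - n)| ≤ C * ((N - n) ^ 2 + 1) / n ^ 2) :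
    |f n - f (n + 1)| ≤ 3 * C / n := by
  have hn1 : (1 : ℝ) ≤ n := by exact_mod_cast hn
  have hC : 0 ≤ C := by simpa [le_div_iff₀ (zero_lt_one.trans_le hn1)] using (abs_nonneg a).trans ha
  have hsucc : |f (n + 1) - f n - a| ≤ 2 * C / n := by
    calc |f (n + 1) - f n - a| = |f (n + 1) - f n - a * ((n + 1 : ℕ) - n)| := by
          push_cast; ring_nf
      _ ≤ C * (((n + 1 : ℕ) - n) ^ 2 + 1) / n ^ 2 := h (n + 1)
      _ = 2 * C / n ^ 2 := by push_cast; ring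
      _ ≤ 2 * C / n := by gcongr; exact le_self_pow₀ hn1 two_ne_zero
  calc |f n - f (n + 1)| = |(f (n + 1) - f n - a) + a| := by rw [sub_add_cancel, abs_sub_comm]
    _ ≤ 2 * C / n + C / n := (abs_add_le _ _).trans (add_le_add hsucc ha)
    _ = 3 * C / n := by ring

lemma exists_abs_measureReal_convPow_sub_le (ι : Type*) [Finite ι] :
    ∃ K : ℝ, ∃ n₀ : ℕ, 0 < K ∧ ∀ {E : Type*} [NormedAddCommGroup E] [NormedSpace ℝ E]
      [MeasurableSpace E] [BorelSpace E] [SecondCountableTopology E] {F : Measure E}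
      [IsProbabilityMeasure F] {α : ℝ} {n : ℕ}, F.map (fun x => -x) = F →
      (∀ φ : E →L[ℝ] ℝ, -1 + α ≤ (charFunDual F φ).re) → 0 < n → n₀ ≤ n →
      K * Real.log n ^ 2 ≤ n * α → ∀ (s : ι → E →L[ℝ] ℝ) (z : ι → ℝ),
        max |(convPow F n).real {x | ∀ i, s i x ≤ z i} - (cpois n F).real {x | ∀ i, s i x ≤ z i}|
          |(convPow F n).real {x | ∀ i, s i x ≤ z i} -
            (convPow F (n + 1)).real {x | ∀ i, s i x ≤ z i}| ≤ K / n := by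
  obtain ⟨A, C, hC, happrox⟩ := exists_linear_approx_measureReal_convPow ι
  obtain ⟨n₀, hn₀⟩ := Filter.eventually_atTop.1 <| (Filter.eventually_ge_atTop 32).and <|
    (eventually_mul_log_two_pow_four_le A).and eventually_two_mul_log_two_add_three_le
  refine ⟨16 * A + 3 * C, n₀, by positivity, ?_⟩
  intro E _ _ _ _ _ F _ α n hsym hre hnpos hn hα s z
  have hcos (φ : E →L[ℝ] ℝ) : -1 + α ≤ ∫ x, Real.cos (φ x) ∂F := by
    simpa only [charFunDual_eq_integral_cos hsym, Complex.ofReal_re] using hre φ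
  obtain ⟨hn32, hA, hlog⟩ := hn₀ n hn
  have hdegree : (A * (2 * Nat.log 2 n + 3) ^ 2 : ℕ) ≤ n * α := by
    calc ((A * (2 * Nat.log 2 n + 3) ^ 2 : ℕ) : ℝ) ≤ A * (4 * Real.log n) ^ 2 := by
          push_cast; gcongr
      _ = 16 * A * Real.log n ^ 2 := by ring
      _ ≤ (16 * A + 3 * C) * Real.log n ^ 2 := by gcongr; linarith
      _ ≤ n * α := hα
  obtain ⟨a, ha, hlinear⟩ := happrox hsym hcos hn32 hA hdegree s z
  have hX : MeasurableSet {x | ∀ i, s i x ≤ z i} :=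
    measurableSet_le (measurable_pi_lambda _ fun i => (s i).measurable) measurable_const
  have hpoisson := abs_tsum_poissonWeight_sub_le hnpos
    (fun N => ⟨measureReal_nonneg, measureReal_le_one⟩) hlinear
  have hsucc := abs_sub_succ_le_of_abs_sub_linear_le hnpos ha hlinear
  rw [← measureReal_cpois n.cast_nonneg F hX, abs_sub_comm] at hpoisson
  have : (0 : ℝ) ≤ A := A.cast_nonneg
  exact max_le (hpoisson.trans (by gcongr; linarith)) (hsucc.trans (by gcongr; linarith))

lemma abs_measureReal_sub_le_one {E : Type*} [MeasurableSpace E] {μ ν : Measure E}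
    [IsProbabilityMeasure μ] [IsProbabilityMeasure ν] (X : Set E) :
    |μ.real X - ν.real X| ≤ 1 :=
  abs_sub_le_of_nonneg_of_le measureReal_nonneg measureReal_le_one measureReal_nonneg
    measureReal_le_one

lemma one_le_mul_inv_add_exp {K M α : ℝ} {n₀ n : ℕ} (hn : 0 < n) (hM : 1 ≤ M) (hK : K ≤ M)
    (hn₀ : n₀ ≤ M) (h : n < n₀ ∨ n * α < K * Real.log n ^ 2) :
    1 ≤ M * ((n : ℝ)⁻¹ + Real.exp (-(n : ℝ) * α + M * Real.log n ^ 2)) := by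
  have hnpos : (0 : ℝ) < n := by exact_mod_cast hn
  have hexp := Real.exp_pos (-(n : ℝ) * α + M * Real.log n ^ 2)
  rcases h with hsmall | hα
  · have hnM : (n : ℝ) ≤ M := (Nat.cast_le.2 hsmall.le).trans hn₀
    calc (1 : ℝ) = n * (n : ℝ)⁻¹ := (mul_inv_cancel₀ hnpos.ne').symm
      _ ≤ M * _ := by gcongr; linarith
  · have : K * Real.log n ^ 2 ≤ M * Real.log n ^ 2 := by gcongr
    exact one_le_mul_of_one_le_of_one_le hM <|
      le_add_of_nonneg_of_le (by positivity) (Real.one_le_exp (by linarith))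

theorem stmt2_general (ι : Type*) [Finite ι] :
    ∃ K : ℝ, 0 < K ∧ ∀ {E : Type*} [NormedAddCommGroup E] [NormedSpace ℝ E] [MeasurableSpace E]
      [BorelSpace E] [SecondCountableTopology E] {F : Measure E} [IsProbabilityMeasure F]
      {α : ℝ} {n : ℕ}, F.map (fun x => -x) = F →
      (∀ φ : E →L[ℝ] ℝ, -1 + α ≤ (charFunDual F φ).re) → 0 < n →
      ∀ (s : ι → E →L[ℝ] ℝ) (z : ι → ℝ),
        max |(convPow F n).real {x | ∀ i, s i x ≤ z i} - (cpois n F).real {x | ∀ i, s i x ≤ z i}|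
          |(convPow F n).real {x | ∀ i, s i x ≤ z i} -
            (convPow F (n + 1)).real {x | ∀ i, s i x ≤ z i}| ≤
          K * ((n : ℝ)⁻¹ + Real.exp (-(n : ℝ) * α + K * Real.log n ^ 2)) := by
  obtain ⟨K, n₀, hK, happrox⟩ := exists_abs_measureReal_convPow_sub_le ι
  refine ⟨K + n₀ + 1, by positivity, ?_⟩
  intro E _ _ _ _ _ F _ α n hsym hre hn s z
  have : (0 : ℝ) ≤ n₀ := n₀.cast_nonneg
  by_cases! hregime : n < n₀ ∨ n * α < K * Real.log n ^ 2
  · exact (max_le (abs_measureReal_sub_le_one _) (abs_measureReal_sub_le_one _)).trans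
      (one_le_mul_inv_add_exp hn (by linarith) (by linarith) (by linarith) hregime)
  · refine (happrox hsym hre hn hregime.1 hregime.2 s z).trans ?_
    rw [div_eq_mul_inv]
    gcongr
    · linarith
    · exact le_add_of_nonneg_right (Real.exp_nonneg _)

end PoissonApproximation

section Polyhedra

lemma exists_inner_le_iff {d : ℕ} (t : Euc d) (b : EReal) : ∃ (s : Euc d →L[ℝ] ℝ) (z : ℝ),
    ∀ x : Euc d, ((⟪x, t⟫ : ℝ) : EReal) ≤ b ↔ s x ≤ z := by
  induction b with
  | bot => exact ⟨0, -1, fun x => by simp⟩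
  | top => exact ⟨0, 0, fun x => by simp⟩
  | coe c => exact ⟨innerSL ℝ t, c, fun x => by
      rw [innerSL_apply_apply, real_inner_comm, EReal.coe_le_coe_iff]⟩

lemma exists_le_inner_iff {d : ℕ} (t : Euc d) (a : EReal) : ∃ (s : Euc d →L[ℝ] ℝ) (z : ℝ),
    ∀ x : Euc d, a ≤ ((⟪x, t⟫ : ℝ) : EReal) ↔ s x ≤ z := by
  obtain ⟨s, z, h⟩ := exists_inner_le_iff (-t) (-a)
  refine ⟨s, z, fun x => ?_⟩
  rw [← h, inner_neg_right, EReal.coe_neg, EReal.neg_le_neg_iff]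

lemma exists_eq_halfSpaces_of_mem_polyhedra {d m : ℕ} {X : Set (Euc d)} (hX : X ∈ polyhedra d m) :
    ∃ (s : Fin m ⊕ Fin m → Euc d →L[ℝ] ℝ) (z : Fin m ⊕ Fin m → ℝ),
      X = {x | ∀ i, s i x ≤ z i} := by
  obtain ⟨t, a, b, rfl⟩ := hX
  choose s₁ z₁ h₁ using fun j => exists_le_inner_iff (t j) (a j)
  choose s₂ z₂ h₂ using fun j => exists_inner_le_iff (t j) (b j)
  refine ⟨Sum.elim s₁ s₂, Sum.elim z₁ z₂, ?_⟩
  ext x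
  simp only [Set.mem_ofPred_eq, Sum.forall, Sum.elim_inl, Sum.elim_inr, h₁, h₂, forall_and]

lemma rhoPoly_le_of_forall_halfSpaces {d m : ℕ} {G H : Measure (Euc d)} {B : ℝ}
    (h : ∀ (s : Fin m ⊕ Fin m → Euc d →L[ℝ] ℝ) (z : Fin m ⊕ Fin m → ℝ),
      |G.real {x | ∀ i, s i x ≤ z i} - H.real {x | ∀ i, s i x ≤ z i}| ≤ B) :
    rhoPoly m G H ≤ B := by
  have hB : 0 ≤ B := (abs_nonneg _).trans (h 0 0)
  refine Real.iSup_le (fun X => Real.iSup_le (fun hX => ?_) hB) hB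
  obtain ⟨s, z, rfl⟩ := exists_eq_halfSpaces_of_mem_polyhedra hX
  exact h s z

lemma charFunDual_eq_charFn {d : ℕ} (F : Measure (Euc d)) (φ : Euc d →L[ℝ] ℝ) :
    charFunDual F φ = charFn F ((InnerProductSpace.toDual ℝ (Euc d)).symm φ) := by
  simp only [charFunDual_apply, charFn, InnerProductSpace.toDual_symm_apply]

end Polyhedra

lemma mul_sq_le_cube_add_cube {x y : ℝ} (hx : 0 ≤ x) (hy : 0 ≤ y) :
    x * y ^ 2 ≤ x ^ 3 + y ^ 3 := by
  rcases le_total x y with h | h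
  · calc x * y ^ 2 ≤ y * y ^ 2 := by gcongr
      _ = y ^ 3 := (pow_succ' y 2).symm
      _ ≤ x ^ 3 + y ^ 3 := le_add_of_nonneg_left (by positivity)
  · calc x * y ^ 2 ≤ x * x ^ 2 := by gcongr
      _ = x ^ 3 := (pow_succ' x 2).symm
      _ ≤ x ^ 3 + y ^ 3 := le_add_of_nonneg_right (by positivity)

lemma mul_inv_add_exp_log_sq_le {K α b : ℝ} (hK : 0 ≤ K) (hb : 1 ≤ b) (n : ℕ) :
    K * ((n : ℝ)⁻¹ + Real.exp (-(n : ℝ) * α + K * Real.log n ^ 2)) ≤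
      K * Real.exp (K ^ 3) * ((n : ℝ)⁻¹ + Real.exp (-(n : ℝ) * α + b * Real.log n ^ 3)) := by
  have hlog : 0 ≤ Real.log n := Real.log_natCast_nonneg n
  have hexponent : -(n : ℝ) * α + K * Real.log n ^ 2 ≤
      K ^ 3 + (-(n : ℝ) * α + b * Real.log n ^ 3) := by
    have hcube := mul_sq_le_cube_add_cube hK hlog
    have : Real.log n ^ 3 ≤ b * Real.log n ^ 3 := le_mul_of_one_le_left (by positivity) hb
    linarith
  rw [mul_assoc, mul_add (Real.exp _), ← Real.exp_add]
  gcongr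
  exact le_mul_of_one_le_left (by positivity) (Real.one_le_exp (by positivity))

theorem stmt2 :
    ∃ c : ℝ, 0 < c ∧ ∃ C : ℕ → ℝ, (∀ m, 0 < C m) ∧
      ∀ (d m n : ℕ), 0 < d → 0 < m → 0 < n → ∀ α : ℝ, 0 ≤ α → α ≤ 2 →
        ∀ F : Measure (Euc d), IsProbabilityMeasure F → IsSymmMeasure F →
          (∀ t : Euc d, -1 + α ≤ (charFn F t).re) →
          max (rhoPoly m (convPow F n) (cpois n F))
              (rhoPoly m (convPow F n) (convPow F (n + 1))) ≤
            C m * ((n : ℝ)⁻¹ + Real.exp (-(n : ℝ) * α + c * m * Real.log n ^ 3)) := by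
  choose K hK happrox using fun m : ℕ => stmt2_general (Fin m ⊕ Fin m)
  refine ⟨1, one_pos, fun m => K m * Real.exp (K m ^ 3),
    fun m => mul_pos (hK m) (Real.exp_pos _), ?_⟩
  intro d m n _ hm hn α _ _ F hF hsym hre
  have hbound := happrox m hsym (fun φ => by rw [charFunDual_eq_charFn]; exact hre _) hn
  exact (max_le (rhoPoly_le_of_forall_halfSpaces fun s z => (le_max_left _ _).trans (hbound s z))
    (rhoPoly_le_of_forall_halfSpaces fun s z => (le_max_right _ _).trans (hbound s z))).trans
    (mul_inv_add_exp_log_sq_le (hK m).le (by rw [one_mul]; exact_mod_cast hm) n)
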